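/- arXiv:math/9611209 — 4 statements merged into one kernel-verified Lean document; each statement's English description precedes it below -/
import Mathlib

section
/- Let κ be an unfoldable cardinal. Then for every S ⊆ R(κ) and every ordinal α, the structure (E^wf_{(R(κ),∈,S)}, ≺_e) of well-founded end elementary extensions of (R(κ),∈,S) contains a chain of order type α. -/
open FirstOrder Cardinal

/-- The language of set theory with one binary relation symbol (membership)
and one unary predicate symbol (for a distinguished subset). -/
def LSP : FirstOrder.Language where
  Functions := fun _ => Empty
  Relations := fun n =>
    match n with
    | 1 => Unit
    | 2 => Unit
    | _ => Empty

/-- A model of the language of set theory: a carrier together with a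
membership relation and the interpretation of the distinguished predicate. -/
structure SetModel : Type 2 where
  Carrier : Type 1
  mem : Carrier → Carrier → Prop
  pred : Carrier → Prop

/-- The first-order `LSP`-structure attached to a `SetModel`. -/
def SetModel.str (M : SetModel) : LSP.Structure M.Carrier where
  funMap := fun {_} f _ => Empty.elim f
  RelMap := fun {n} =>
    match n with
    | 1 => fun _ v => M.pred (v 0)
    | 2 => fun _ v => M.mem (v 0) (v 1)
    | 0 => fun r _ => Empty.elim r
    | (_ + 3) => fun r _ => Empty.elim r

/-- Satisfaction of a first-order formula with `n` free variables in a `SetModel`. -/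
def SetModel.Realize (M : SetModel) {n : ℕ} (φ : LSP.Formula (Fin n))
    (v : Fin n → M.Carrier) : Prop :=
  letI := M.str
  φ.Realize v

/-- `f : M → N` is an elementary map. -/
def IsElem (M N : SetModel) (f : M.Carrier → N.Carrier) : Prop :=
  ∀ (n : ℕ) (φ : LSP.Formula (Fin n)) (v : Fin n → M.Carrier),
    N.Realize φ (f ∘ v) ↔ M.Realize φ v

/-- `f : M → N` realizes `N` as a (proper) end elementary extension of `M`:
it is elementary, no element of `M` gains new members in `N`, and `N` properly
extends the image of `M`. -/
structure IsEEE (M N : SetModel) (f : M.Carrier → N.Carrier) : Prop where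
  elementary : IsElem M N f
  isEnd : ∀ (a : M.Carrier) (b : N.Carrier), N.mem b (f a) → ∃ b', f b' = b
  proper : ¬ Function.Surjective f

/-- `N` is a (proper) end elementary extension of `M`. -/
def EEE (M N : SetModel) : Prop := ∃ f, IsEEE M N f

/-- Isomorphism of set models. -/
def SMIso (M N : SetModel) : Prop :=
  ∃ e : M.Carrier ≃ N.Carrier,
    (∀ x y, M.mem x y ↔ N.mem (e x) (e y)) ∧ ∀ x, M.pred x ↔ N.pred (e x)

/-- The model `(A, ∈, S)` where `A, S` are collections of ZFC sets and `∈` is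
genuine membership. -/
def ZModel (A S : Set ZFSet) : SetModel :=
  ⟨A, fun x y => (x : ZFSet) ∈ (y : ZFSet), fun x => (x : ZFSet) ∈ S⟩

/-- `(A,∈,SA) ≺ₑ (B,∈,SB)`: the inclusion map is a proper end elementary
extension of concrete (well-founded) models. -/
def ZEEE (A SA B SB : Set ZFSet) : Prop :=
  ∃ h : A ⊆ B, IsEEE (ZModel A SA) (ZModel B SB) (Set.inclusion h)

/-- `R(o) = V_o`: the collection of ZFC sets of rank `< o`. -/
def Vrank (o : Ordinal.{0}) : Set ZFSet := {x | x.rank < o}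

/-- `κ` is unfoldable: `κ` is inaccessible and for every `S ⊆ R(κ)` and every
ordinal `α`, `(R(κ),∈,S)` has a well-founded (transitive) proper end elementary
extension of ordinal height at least `α`. -/
def IsUnfoldable (κ : Cardinal.{0}) : Prop :=
  κ.IsInaccessible ∧
    ∀ S : Set ZFSet, S ⊆ Vrank κ.ord → ∀ α : Ordinal.{0},
      ∃ (N : ZFSet) (T : Set ZFSet),
        N.IsTransitive ∧ ZEEE (Vrank κ.ord) S N.toSet T ∧ α ≤ N.rank


/-! ### Uniformly definable relations -/

/-- Satisfaction for bounded formulas. -/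
def BReal (M : SetModel) {α : Type} {n : ℕ} (φ : LSP.BoundedFormula α n)
    (v : α → M.Carrier) (w : Fin n → M.Carrier) : Prop :=
  letI := M.str
  φ.Realize v w

/-- Satisfaction for formulas with arbitrary variable type. -/
def FReal (M : SetModel) {ι : Type} (φ : LSP.Formula ι) (v : ι → M.Carrier) : Prop :=
  letI := M.str
  φ.Realize v

/-- A relation is uniformly definable if one formula defines it in all models. -/
def UD (ι : Type) (R : ∀ M : SetModel, (ι → M.Carrier) → Prop) : Prop :=
  ∃ φ : LSP.Formula ι, ∀ M v, FReal M φ v ↔ R M v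

theorem UD.congr {ι : Type} {R R' : ∀ M : SetModel, (ι → M.Carrier) → Prop}
    (h : UD ι R) (hh : ∀ M v, R M v ↔ R' M v) : UD ι R' := by
  obtain ⟨φ, hφ⟩ := h
  exact ⟨φ, fun M v => (hφ M v).trans (hh M v)⟩

theorem UD.fls {ι : Type} : UD ι (fun _ _ => False) :=
  ⟨⊥, fun _ _ => Iff.rfl⟩

theorem UD.imp {ι : Type} {R R' : ∀ M : SetModel, (ι → M.Carrier) → Prop}
    (h : UD ι R) (h' : UD ι R') : UD ι (fun M v => R M v → R' M v) := by
  obtain ⟨φ, hφ⟩ := h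
  obtain ⟨ψ, hψ⟩ := h'
  refine ⟨φ.imp ψ, fun M v => ?_⟩
  exact imp_congr (hφ M v) (hψ M v)

theorem UD.not {ι : Type} {R : ∀ M : SetModel, (ι → M.Carrier) → Prop}
    (h : UD ι R) : UD ι (fun M v => ¬ R M v) := h.imp UD.fls

theorem UD.or {ι : Type} {R R' : ∀ M : SetModel, (ι → M.Carrier) → Prop}
    (h : UD ι R) (h' : UD ι R') : UD ι (fun M v => R M v ∨ R' M v) :=
  (h.not.imp h').congr fun _ _ => by tauto

theorem UD.and {ι : Type} {R R' : ∀ M : SetModel, (ι → M.Carrier) → Prop}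
    (h : UD ι R) (h' : UD ι R') : UD ι (fun M v => R M v ∧ R' M v) :=
  (h.imp h'.not).not.congr fun _ _ => by tauto

theorem UD.iff {ι : Type} {R R' : ∀ M : SetModel, (ι → M.Carrier) → Prop}
    (h : UD ι R) (h' : UD ι R') : UD ι (fun M v => R M v ↔ R' M v) :=
  ((h.imp h').and (h'.imp h)).congr fun _ _ => by tauto

theorem UD.allFin {ι β : Type} [Finite β]
    {R : ∀ M : SetModel, (ι → M.Carrier) → (β → M.Carrier) → Prop}
    (h : UD (ι ⊕ β) (fun M v => R M (fun i => v (Sum.inl i)) (fun i => v (Sum.inr i)))) :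
    UD ι (fun M v => ∀ b, R M v b) := by
  obtain ⟨φ, hφ⟩ := h
  refine ⟨φ.iAlls β, fun M v => ?_⟩
  let _ := M.str
  refine FirstOrder.Language.Formula.realize_iAlls.trans ?_
  refine forall_congr' fun b => ?_
  exact hφ M (Sum.elim v b)

theorem UD.all {ι : Type} {R : ∀ M : SetModel, (ι → M.Carrier) → M.Carrier → Prop}
    (h : UD (Option ι) (fun M v => R M (fun i => v (some i)) (v none))) :
    UD ι (fun M v => ∀ a, R M v a) := by
  obtain ⟨φ, hφ⟩ := h
  have : UD ι (fun M v => ∀ b : Unit → M.Carrier, R M v (b ())) := by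
    apply UD.allFin (R := fun M v b => R M v (b ()))
    refine ⟨φ.relabel (fun o => o.elim (Sum.inr ()) Sum.inl), fun M v => ?_⟩
    let _ := M.str
    refine FirstOrder.Language.Formula.realize_relabel.trans ?_
    exact hφ M _
  refine this.congr fun M v => ⟨fun h a => h (fun _ => a), fun h b => h _⟩

theorem UD.ex {ι : Type} {R : ∀ M : SetModel, (ι → M.Carrier) → M.Carrier → Prop}
    (h : UD (Option ι) (fun M v => R M (fun i => v (some i)) (v none))) :
    UD ι (fun M v => ∃ a, R M v a) := by
  have := (UD.all (R := fun M v a => ¬ R M v a) h.not).not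
  exact this.congr fun M v => by simp

theorem UD.conj {ι β : Type} [Finite β] {R : β → ∀ M : SetModel, (ι → M.Carrier) → Prop}
    (h : ∀ b, UD ι (R b)) : UD ι (fun M v => ∀ b, R b M v) := by
  choose φ hφ using h
  refine ⟨FirstOrder.Language.Formula.iInf φ, fun M v => ?_⟩
  let _ := M.str
  refine FirstOrder.Language.Formula.realize_iInf.trans ?_
  exact forall_congr' fun b => hφ b M v

theorem UD.mem {ι : Type} (i j : ι) : UD ι (fun M v => M.mem (v i) (v j)) :=
  ⟨FirstOrder.Language.Relations.formula₂ (L := LSP) (show LSP.Relations 2 from ())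
    (.var i) (.var j), fun M v => by
      let _ := M.str
      refine FirstOrder.Language.Formula.realize_rel₂.trans ?_
      exact Iff.rfl⟩

theorem UD.pred {ι : Type} (i : ι) : UD ι (fun M v => M.pred (v i)) :=
  ⟨FirstOrder.Language.Relations.formula₁ (L := LSP) (show LSP.Relations 1 from ())
    (.var i), fun M v => by
      let _ := M.str
      refine FirstOrder.Language.Formula.realize_rel₁.trans ?_
      exact Iff.rfl⟩

theorem UD.eq {ι : Type} (i j : ι) : UD ι (fun M v => v i = v j) :=
  ⟨FirstOrder.Language.Term.equal (L := LSP) (.var i) (.var j), fun M _ => by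
      let _ := M.str
      refine FirstOrder.Language.Formula.realize_equal.trans ?_
      exact Iff.rfl⟩

/-- The unordered pair `{x,u}` exists and satisfies the predicate. -/
def QQ (M : SetModel) (x u : M.Carrier) : Prop :=
  ∃ p, M.pred p ∧ ∀ z, M.mem z p ↔ (z = x ∨ z = u)

/-- The coded relation. -/
def GG (M : SetModel) (x u : M.Carrier) : Prop := M.mem x u ∧ QQ M x u

/-- The decoded model. -/
def DM (M : SetModel) : SetModel := ⟨M.Carrier, M.mem, fun x => QQ M x x⟩

theorem UD.qq {ι : Type} (i j : ι) : UD ι (fun M v => QQ M (v i) (v j)) :=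
  .ex (.and (.pred _) (.all (.iff (.mem _ _) (.or (.eq _ _) (.eq _ _)))))

theorem UD.gg {ι : Type} (i j : ι) : UD ι (fun M v => GG M (v i) (v j)) :=
  .and (.mem _ _) (.qq _ _)

theorem LSP_term {α : Type} (t : LSP.Term α) : ∃ k, t = .var k := by
  cases t with
  | var k => exact ⟨k, rfl⟩
  | func f _ => exact Empty.elim f

/-- Satisfaction in the decoded model is uniformly definable. -/
theorem UD.form {α : Type} {n : ℕ} (φ : LSP.BoundedFormula α n) :
    ∀ {ι : Type} (f : α → ι) (g : Fin n → ι),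
      UD ι (fun M v => BReal (DM M) φ (fun i => v (f i)) (fun i => v (g i))) := by
  induction φ with
  | falsum => intro ι f g; exact UD.fls
  | equal t₁ t₂ =>
    intro ι f g
    obtain ⟨k, rfl⟩ := LSP_term t₁
    obtain ⟨l, rfl⟩ := LSP_term t₂
    refine (UD.eq (Sum.elim f g k) (Sum.elim f g l)).congr fun M v => ?_
    rcases k with k | k <;> rcases l with l | l <;> exact Iff.rfl
  | @rel n l R ts =>
    intro ι f g
    match l, R with
    | 1, R =>
      obtain ⟨k, hk⟩ := LSP_term (ts 0)
      refine (UD.qq (Sum.elim f g k) (Sum.elim f g k)).congr fun M v => ?_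
      change _ ↔ (DM M).pred _
      dsimp only
      rw [hk]
      rcases k with k | k <;> exact Iff.rfl
    | 2, R =>
      obtain ⟨k, hk⟩ := LSP_term (ts 0)
      obtain ⟨l, hl⟩ := LSP_term (ts 1)
      refine (UD.mem (Sum.elim f g k) (Sum.elim f g l)).congr fun M v => ?_
      change _ ↔ (DM M).mem _ _
      dsimp only
      rw [hk, hl]
      rcases k with k | k <;> rcases l with l | l <;> exact Iff.rfl
    | 0, R => exact Empty.elim R
    | (_ + 3), R => exact Empty.elim R
  | imp φ ψ ih1 ih2 =>
    intro ι f g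
    exact (ih1 f g).imp (ih2 f g)
  | @all n φ ih =>
    intro ι f g
    have := ih (fun a => some (f a)) (Fin.snoc (α := fun _ => Option ι) (fun i => some (g i)) none)
    have h2 : UD ι (fun M v => ∀ a : M.Carrier, BReal (DM M) φ (fun i => v (f i))
        (Fin.snoc (α := fun _ => M.Carrier) (fun i => v (g i)) a)) := by
      apply UD.all
      refine this.congr fun M v => ?_
      apply iff_of_eq
      congr 1
      funext i
      refine Fin.lastCases ?_ (fun j => ?_) i <;> simp
    exact h2.congr fun M v => Iff.rfl

/-- Transfer of uniformly definable relations along an elementary map. -/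
theorem UD.transfer {M N : SetModel} {f : M.Carrier → N.Carrier} (hf : IsElem M N f) {n : ℕ}
    {R : ∀ M : SetModel, (Fin n → M.Carrier) → Prop} (h : UD (Fin n) R) (v : Fin n → M.Carrier) :
    R N (f ∘ v) ↔ R M v := by
  obtain ⟨φ, hφ⟩ := h
  rw [← hφ, ← hφ]
  exact hf n φ v

theorem GG_transfer {M N : SetModel} {f : M.Carrier → N.Carrier} (hf : IsElem M N f)
    (x u : M.Carrier) : GG N (f x) (f u) ↔ GG M x u :=
  UD.transfer hf (UD.gg (0 : Fin 2) 1) ![x, u]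

theorem IsElem.DM {M N : SetModel} {f : M.Carrier → N.Carrier} (hf : IsElem M N f) :
    IsElem (DM M) (DM N) f := by
  intro n φ v
  have := UD.transfer hf (UD.form φ (id : Fin n → Fin n) (fun i => Fin.elim0 i)) v
  have e : ∀ (M : SetModel) (w : Fin n → M.Carrier), (_root_.DM M).Realize φ w ↔
      BReal (_root_.DM M) φ (fun i => w (id i)) (fun i => w (Fin.elim0 i)) := by
    intro M w
    let _ := (_root_.DM M).str
    apply iff_of_eq
    unfold SetModel.Realize BReal FirstOrder.Language.Formula.Realize
    congr 1
    exact Subsingleton.elim _ _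
  exact (e N _).trans (this.trans (e M _).symm)

/-- The Tarski-Vaught condition for the decoded model on members of `u`. -/
def TV (M : SetModel) (u : M.Carrier) {n : ℕ} (φ : LSP.BoundedFormula Empty (n + 1)) : Prop :=
  ∀ b : Fin n → M.Carrier, (∀ i, M.mem (b i) u) →
    (∃ a, BReal (DM M) φ Empty.elim (Fin.snoc (α := fun _ => M.Carrier) b a)) →
    ∃ a, M.mem a u ∧ BReal (DM M) φ Empty.elim (Fin.snoc (α := fun _ => M.Carrier) b a)

theorem UD.snoc {ι : Type} {n : ℕ} (φ : LSP.BoundedFormula Empty (n + 1)) (b : Fin n → ι) (a : ι) :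
    UD ι (fun M v => BReal (_root_.DM M) φ Empty.elim
      (Fin.snoc (α := fun _ => M.Carrier) (fun i => v (b i)) (v a))) := by
  refine (UD.form φ (Empty.elim : Empty → ι) (Fin.snoc (α := fun _ => ι) b a)).congr fun M v => ?_
  apply iff_of_eq
  congr 1
  · exact Subsingleton.elim _ _
  · funext i
    refine Fin.lastCases ?_ (fun j => ?_) i <;> simp

theorem UD.tv {ι : Type} {n : ℕ} (φ : LSP.BoundedFormula Empty (n + 1)) (u : ι) :
    UD ι (fun M v => TV M (v u) φ) := by
  unfold TV
  apply UD.allFin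
  refine .imp (.conj fun i => .mem _ _) (.imp (.ex (.snoc φ _ _)) (.ex (.and (.mem _ _) (.snoc φ _ _))))

/-- The axioms on the coded relation. -/
structure Good (M : SetModel) : Prop where
  tot : ∀ x, ∃ u, GG M x u
  trans : ∀ x u, GG M x u → ∀ z, M.mem z u → ∀ w, M.mem w z → M.mem w u
  tri : ∀ x u, GG M x u → ∀ y w, GG M y w → (M.mem u w ∨ u = w ∨ M.mem w u)
  mono : ∀ x u, GG M x u → ∀ y w, GG M y w → M.mem x y → M.mem u w
  tv : ∀ (n : ℕ) (φ : LSP.BoundedFormula Empty (n + 1)), ∀ x u, GG M x u → TV M u φ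

theorem sent {M N : SetModel} {f : M.Carrier → N.Carrier} (hf : IsElem M N f)
    {R : SetModel → Prop} (h : UD (Fin 0) (fun M _ => R M)) (hM : R M) : R N :=
  (UD.transfer hf h finZeroElim).2 hM

theorem Good.transfer {M N : SetModel} {f : M.Carrier → N.Carrier} (hf : IsElem M N f)
    (h : Good M) : Good N where
  tot := sent hf (R := fun M => ∀ x, ∃ u, GG M x u) (.all (.ex (.gg _ _))) h.tot
  trans := sent hf (R := fun M => ∀ x u, GG M x u → ∀ z, M.mem z u → ∀ w, M.mem w z → M.mem w u)
    (.all (.all (.imp (.gg _ _) (.all (.imp (.mem _ _) (.all (.imp (.mem _ _) (.mem _ _)))))))) h.trans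
  tri := sent hf
    (R := fun M => ∀ x u, GG M x u → ∀ y w, GG M y w → (M.mem u w ∨ u = w ∨ M.mem w u))
    (.all (.all (.imp (.gg _ _) (.all (.all (.imp (.gg _ _)
      (.or (.mem _ _) (.or (.eq _ _) (.mem _ _))))))))) h.tri
  mono := sent hf
    (R := fun M => ∀ x u, GG M x u → ∀ y w, GG M y w → M.mem x y → M.mem u w)
    (.all (.all (.imp (.gg _ _) (.all (.all (.imp (.gg _ _)
      (.imp (.mem _ _) (.mem _ _)))))))) h.mono
  tv := fun n φ => sent hf (R := fun M => ∀ x u, GG M x u → TV M u φ)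
    (.all (.all (.imp (.gg _ _) (.tv φ _)))) (h.tv n φ)

/-- Tarski-Vaught for concrete models. -/
theorem zelem {A B T : Set ZFSet} (h : A ⊆ B)
    (htv : ∀ (n : ℕ) (φ : LSP.BoundedFormula Empty (n + 1)) (b : Fin n → (ZModel B T).Carrier),
      (∀ i, (b i).1 ∈ A) →
      (∃ a, BReal (ZModel B T) φ Empty.elim (Fin.snoc (α := fun _ => (ZModel B T).Carrier) b a)) →
      ∃ a, a.1 ∈ A ∧
        BReal (ZModel B T) φ Empty.elim (Fin.snoc (α := fun _ => (ZModel B T).Carrier) b a)) :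
    IsElem (ZModel A T) (ZModel B T) (Set.inclusion h) := by
  intro n φ v
  let _ := (ZModel A T).str
  let _ := (ZModel B T).str
  let e : (ZModel A T).Carrier ↪[LSP] (ZModel B T).Carrier :=
    { toFun := Set.inclusion h
      inj' := Set.inclusion_injective h
      map_fun' := fun {n} f _ => Empty.elim f
      map_rel' := fun {n} r x => by
        match n, r with
        | 1, r => exact Iff.rfl
        | 2, r => exact Iff.rfl
        | 0, r => exact Empty.elim r
        | (_ + 3), r => exact Empty.elim r }
  refine e.isElementary_of_exists ?_ φ v
  intro n φ x a ha
  have hd : (default : Empty → (ZModel B T).Carrier) = Empty.elim := Subsingleton.elim _ _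
  rw [hd] at ha ⊢
  obtain ⟨b, hb, hb'⟩ := htv n φ (e ∘ x) (fun i => (x i).2) ⟨a, ha⟩
  exact ⟨⟨b.1, hb⟩, hb'⟩

theorem IsElem.factor {L M N : SetModel} {f : L.Carrier → M.Carrier} {g : M.Carrier → N.Carrier}
    (hg : IsElem M N g) (hgf : IsElem L N (g ∘ f)) : IsElem L M f := by
  intro n φ v
  exact (hg n φ (f ∘ v)).symm.trans (hgf n φ v)

theorem breal_congr {A : Type 1} {m : A → A → Prop} {P P' : A → Prop} (h : ∀ x, P x ↔ P' x)
    {α : Type} {n : ℕ} (φ : LSP.BoundedFormula α n) (v : α → A) (w : Fin n → A) :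
    BReal ⟨A, m, P⟩ φ v w ↔ BReal ⟨A, m, P'⟩ φ v w := by
  obtain rfl : P = P' := funext fun x => propext (h x)
  exact Iff.rfl

theorem isElem_congr {A B : Type 1} {m : A → A → Prop} {P P' : A → Prop} (h : ∀ x, P x ↔ P' x)
    {m' : B → B → Prop} {Q Q' : B → Prop} (h' : ∀ x, Q x ↔ Q' x) {f : A → B}
    (he : IsElem ⟨A, m, P⟩ ⟨B, m', Q⟩ f) : IsElem ⟨A, m, P'⟩ ⟨B, m', Q'⟩ f := by
  obtain rfl : P = P' := funext fun x => propext (h x)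
  obtain rfl : Q = Q' := funext fun x => propext (h' x)
  exact he

theorem chain_of_good (κ : Cardinal.{0}) (S S' : Set ZFSet)
    (hD : ∀ x : Vrank κ.ord, QQ (ZModel (Vrank κ.ord) S') x x ↔ x.1 ∈ S)
    (hG : Good (ZModel (Vrank κ.ord) S')) (α : Ordinal.{0}) (N : ZFSet) (T' : Set ZFSet)
    (hN : N.IsTransitive) (hE : ZEEE (Vrank κ.ord) S' N.toSet T') (hr : κ.ord + α ≤ N.rank) :
    ∃ (N : ↥(Set.Iio α) → ZFSet) (T : ↥(Set.Iio α) → Set ZFSet),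
      (∀ β, (N β).IsTransitive) ∧
      (∀ β, ZEEE (Vrank κ.ord) S (N β).toSet (T β)) ∧
      (∀ β γ, β < γ → ZEEE (N β).toSet (T β) (N γ).toSet (T γ)) := by
  obtain ⟨hsub, hE⟩ := hE
  have hG' : Good (ZModel N.toSet T') := hG.transfer hE.elementary
  let T : Set ZFSet := {x | ∃ h : x ∈ N.toSet, QQ (ZModel N.toSet T') ⟨x, h⟩ ⟨x, h⟩}
  have hDN : ∀ x : N.toSet, QQ (ZModel N.toSet T') x x ↔ x.1 ∈ T :=
    fun x => ⟨fun h => ⟨x.2, h⟩, fun ⟨_, h⟩ => h⟩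
  have hVN : IsElem (ZModel (Vrank κ.ord) S) (ZModel N.toSet T) (Set.inclusion hsub) :=
    isElem_congr hD hDN hE.elementary.DM
  -- the relation on sets
  let G : ZFSet → ZFSet → Prop := fun x u =>
    ∃ (hx : x ∈ N.toSet) (hu : u ∈ N.toSet), GG (ZModel N.toSet T') ⟨x, hx⟩ ⟨u, hu⟩
  have Gtot : ∀ x ∈ N, ∃ u, G x u := by
    intro x hx
    obtain ⟨u, hu⟩ := hG'.tot ⟨x, hx⟩
    exact ⟨u.1, hx, u.2, hu⟩
  have Gmem : ∀ x u, G x u → x ∈ u := fun x u ⟨_, _, h⟩ => h.1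
  have Gtrans : ∀ x u, G x u → u.IsTransitive := by
    rintro x u ⟨hx, hu, h⟩ z hz w hw
    have hzN : z ∈ N := hN.mem_trans hz hu
    have hwN : w ∈ N := hN.mem_trans hw hzN
    exact hG'.trans _ _ h ⟨z, hzN⟩ hz ⟨w, hwN⟩ hw
  have Gsub : ∀ x u, G x u → u.toSet ⊆ N.toSet := by
    rintro x u ⟨hx, hu, h⟩ z hz
    exact hN.mem_trans hz hu
  have Gtri : ∀ x u y w, G x u → G y w → u.rank < w.rank → u ∈ w := by
    rintro x u y w ⟨hx, hu, h⟩ ⟨hy, hw, h'⟩ hlt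
    rcases hG'.tri _ _ h _ _ h' with h1 | h1 | h1
    · exact h1
    · have : u = w := congrArg Subtype.val h1
      subst this
      exact absurd hlt (lt_irrefl _)
    · exact absurd hlt (ZFSet.rank_lt_of_mem (show w ∈ u from h1)).not_gt
  have Gmono : ∀ x u y w, G x u → G y w → x ∈ y → u ∈ w := by
    rintro x u y w ⟨hx, hu, h⟩ ⟨hy, hw, h'⟩ hxy
    exact hG'.mono _ _ h _ _ h' hxy
  have Gelem : ∀ x u (h : G x u),
      IsElem (ZModel u.toSet T) (ZModel N.toSet T) (Set.inclusion (Gsub x u h)) := by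
    intro x u h
    apply zelem
    obtain ⟨hx, hu, h'⟩ := h
    intro n φ b hb ⟨a, ha⟩
    obtain ⟨c, hc, hc'⟩ := hG'.tv n φ _ _ h' b hb ⟨a, (breal_congr hDN φ _ _).2 ha⟩
    exact ⟨c, hc, (breal_congr hDN φ _ _).1 hc'⟩
  have GV : ∀ x u, G x u → κ.ord ≤ x.rank → Vrank κ.ord ⊆ u.toSet := by
    intro x u h hx a ha
    obtain ⟨w, hw⟩ := hG.tot ⟨a, ha⟩
    have h1 : G a w.1 := ⟨hsub ha, hsub w.2, (GG_transfer hE.elementary _ _).2 hw⟩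
    have h2 : w.1 ∈ u := by
      refine Gtri _ _ _ _ h1 h ?_
      exact lt_trans (lt_of_lt_of_le w.2 hx) (ZFSet.rank_lt_of_mem (Gmem _ _ h))
    exact (Gtrans _ _ h).mem_trans (Gmem _ _ h1) h2
  -- choose minimal elements
  have key : ∀ β : Set.Iio α, ∃ x u, G x u ∧ κ.ord + β.1 ≤ x.rank ∧
      ∀ y w, G y w → κ.ord + β.1 ≤ y.rank → u.rank ≤ w.rank := by
    intro β
    have hne : {o : Ordinal.{0} | ∃ x u, G x u ∧ κ.ord + β.1 ≤ x.rank ∧ u.rank = o}.Nonempty := by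
      have : κ.ord + β.1 < N.rank := lt_of_lt_of_le (add_lt_add_right (show β.1 < α from β.2) κ.ord) hr
      obtain ⟨x, hx, hx'⟩ := ZFSet.lt_rank_iff.1 this
      obtain ⟨u, hu⟩ := Gtot x hx
      exact ⟨_, x, u, hu, hx', rfl⟩
    obtain ⟨x, u, h1, h2, h3⟩ := csInf_mem hne
    refine ⟨x, u, h1, h2, fun y w hy hy' => ?_⟩
    rw [h3]
    exact csInf_le' ⟨y, w, hy, hy', rfl⟩
  choose X U hGXU hX hmin using key
  refine ⟨U, fun _ => T, fun β => Gtrans _ _ (hGXU β), fun β => ?_, fun β γ hβγ => ?_⟩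
  · have hX' : κ.ord ≤ (X β).rank := le_trans le_self_add (hX β)
    refine ⟨GV _ _ (hGXU β) hX', ?_, ?_, ?_⟩
    · exact (Gelem _ _ (hGXU β)).factor hVN
    · intro a b hb
      exact ⟨⟨b.1, (ZFSet.rank_lt_of_mem (show b.1 ∈ a.1 from hb)).trans a.2⟩, rfl⟩
    · intro hs
      obtain ⟨a, ha⟩ := hs ⟨X β, Gmem _ _ (hGXU β)⟩
      have : a.1 = X β := congrArg Subtype.val ha
      have h2 : a.1.rank < κ.ord := a.2
      rw [this] at h2
      exact absurd h2 hX'.not_gt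
  · have hmem : U β ∈ U γ := by
      have h1 : κ.ord + β.1 < (X γ).rank :=
        lt_of_lt_of_le (by simpa using hβγ) (hX γ)
      obtain ⟨z, hz, hz'⟩ := ZFSet.lt_rank_iff.1 h1
      have hzN : z ∈ N := hN.mem_trans hz (hGXU γ).1
      obtain ⟨w, hw⟩ := Gtot z hzN
      have h2 := Gmono _ _ _ _ hw (hGXU γ) hz
      exact Gtri _ _ _ _ (hGXU β) (hGXU γ)
        ((hmin β _ _ hw hz').trans_lt (ZFSet.rank_lt_of_mem h2))
    have ht := Gtrans _ _ (hGXU γ)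
    have ht' := Gtrans _ _ (hGXU β)
    refine ⟨fun z hz => ht.mem_trans hz hmem, ?_, ?_, ?_⟩
    · exact (Gelem _ _ (hGXU γ)).factor (Gelem _ _ (hGXU β))
    · intro a b hb
      exact ⟨⟨b.1, ht'.mem_trans hb a.2⟩, rfl⟩
    · intro hs
      obtain ⟨a, ha⟩ := hs ⟨U β, hmem⟩
      have : a.1 = U β := congrArg Subtype.val ha
      have h2 : a.1 ∈ U β := a.2
      rw [this] at h2
      exact ZFSet.mem_irrefl _ h2

universe v in
theorem ord_bound {κ : Cardinal.{0}} (hκ : κ.IsInaccessible) {β : Type v}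
    (hβ : #β < Cardinal.lift.{v} κ) (f : β → Ordinal.{0}) (hf : ∀ i, f i < κ.ord) :
    ∃ b < κ.ord, ∀ i, f i ≤ b := by
  refine ⟨⨆ i, f i, ?_, fun i => ?_⟩
  · apply Ordinal.lift_iSup_lt_of_lt_cof _ hf
    rw [← Ordinal.lift_cof, hκ.isRegular.cof_ord]
    simpa using hβ
  · exact le_ciSup ⟨κ.ord, by rintro _ ⟨i, rfl⟩; exact (hf i).le⟩ i

theorem vbound {κ : Cardinal.{0}} (hκ : κ.IsInaccessible) {l : Ordinal.{0}} (hl : l < κ.ord) (n : ℕ) :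
    #(Fin n → ZFSet.vonNeumann l) < Cardinal.lift.{1} κ := by
  have h1 : #(ZFSet.vonNeumann l) < Cardinal.lift.{1} κ := by
    rw [ZFSet.cardinalMk_coe_sort, Cardinal.lift_lt, ZFSet.card_vonNeumann]
    calc preBeth l < preBeth κ.ord := preBeth_strictMono hl
      _ = κ := hκ.preBeth_ord
  have : #(Fin n → ZFSet.vonNeumann l) = #(ZFSet.vonNeumann l) ^ n := by
    simp
  rw [this]
  refine lt_of_le_of_lt (by exact_mod_cast Cardinal.power_nat_le_max) (max_lt h1 ?_)
  simpa using hκ.aleph0_lt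

instance LSP_countable : Countable (Σ n, LSP.BoundedFormula Empty n) := by
  have h1 : Countable (Σ l, LSP.Functions l) := by
    have : IsEmpty (Σ l, LSP.Functions l) := ⟨fun x => Empty.elim x.2⟩
    infer_instance
  have h2 : Countable (Σ l, LSP.Relations l) := by
    have : ∀ l, Countable (LSP.Relations l) := by
      intro l
      match l with
      | 0 => exact (inferInstance : Countable Empty)
      | 1 => exact (inferInstance : Countable Unit)
      | 2 => exact (inferInstance : Countable Unit)
      | (_ + 3) => exact (inferInstance : Countable Empty)
    infer_instance
  infer_instance

/-- `V_l` is closed under witnesses of rank below `l'`. -/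
def Wit (κ : Cardinal.{0}) (S : Set ZFSet) (l l' : Ordinal.{0}) : Prop :=
  ∀ (n : ℕ) (φ : LSP.BoundedFormula Empty (n + 1))
    (b : Fin n → (ZModel (Vrank κ.ord) S).Carrier), (∀ i, (b i).1.rank < l) →
    (∃ a, BReal (ZModel (Vrank κ.ord) S) φ Empty.elim
      (Fin.snoc (α := fun _ => (ZModel (Vrank κ.ord) S).Carrier) b a)) →
    ∃ a, a.1.rank < l' ∧ BReal (ZModel (Vrank κ.ord) S) φ Empty.elim
      (Fin.snoc (α := fun _ => (ZModel (Vrank κ.ord) S).Carrier) b a)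

theorem isSuccLimit_ord {κ : Cardinal.{0}} (hκ : κ.IsInaccessible) {a : Ordinal.{0}}
    (h : a < κ.ord) : a + 1 < κ.ord :=
  (Cardinal.isSuccLimit_ord hκ.aleph0_lt.le).add_one_lt h

theorem wit_step {κ : Cardinal.{0}} (hκ : κ.IsInaccessible) (S : Set ZFSet) (l : Ordinal.{0})
    (hl : l < κ.ord) : ∃ l' < κ.ord, l ≤ l' ∧ Wit κ S l l' := by
  have h1 : ∀ p : (Σ n, LSP.BoundedFormula Empty (n + 1)), ∃ c < κ.ord,
      ∀ (b : Fin p.1 → (ZModel (Vrank κ.ord) S).Carrier), (∀ i, (b i).1.rank < l) →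
    (∃ a, BReal (ZModel (Vrank κ.ord) S) p.2 Empty.elim
      (Fin.snoc (α := fun _ => (ZModel (Vrank κ.ord) S).Carrier) b a)) →
    ∃ a, a.1.rank ≤ c ∧ BReal (ZModel (Vrank κ.ord) S) p.2 Empty.elim
      (Fin.snoc (α := fun _ => (ZModel (Vrank κ.ord) S).Carrier) b a) := by
    rintro ⟨n, φ⟩
    have hw : ∀ b : Fin n → ZFSet.vonNeumann l, ∃ c < κ.ord,
      ∀ (b' : Fin n → (ZModel (Vrank κ.ord) S).Carrier), (∀ i, (b i).1 = (b' i).1) →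
      (∃ a, BReal (ZModel (Vrank κ.ord) S) φ Empty.elim
        (Fin.snoc (α := fun _ => (ZModel (Vrank κ.ord) S).Carrier) b' a)) →
      ∃ a, a.1.rank ≤ c ∧ BReal (ZModel (Vrank κ.ord) S) φ Empty.elim
        (Fin.snoc (α := fun _ => (ZModel (Vrank κ.ord) S).Carrier) b' a) := by
      intro b
      let b₀ : Fin n → (ZModel (Vrank κ.ord) S).Carrier :=
        fun i => ⟨(b i).1, (ZFSet.mem_vonNeumann.1 (b i).2).trans hl⟩
      have hb : ∀ b' : Fin n → (ZModel (Vrank κ.ord) S).Carrier,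
          (∀ i, (b i).1 = (b' i).1) → b' = b₀ := by
        intro b' h
        funext i
        exact Subtype.ext (h i).symm
      by_cases hex : ∃ a, BReal (ZModel (Vrank κ.ord) S) φ Empty.elim
        (Fin.snoc (α := fun _ => (ZModel (Vrank κ.ord) S).Carrier) b₀ a)
      · obtain ⟨a, ha⟩ := hex
        refine ⟨a.1.rank, a.2, fun b' h _ => ?_⟩
        rw [hb b' h]
        exact ⟨a, le_rfl, ha⟩
      · refine ⟨l, hl, fun b' h h' => ?_⟩
        rw [hb b' h] at h'
        exact absurd h' hex
    choose c hc hc' using hw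
    obtain ⟨d, hd, hd'⟩ := ord_bound hκ (vbound hκ hl n) c hc
    refine ⟨d, hd, fun b hb hex => ?_⟩
    obtain ⟨a, ha, ha'⟩ := hc' (fun i => ⟨(b i).1, ZFSet.mem_vonNeumann.2 (hb i)⟩) b
      (fun _ => rfl) hex
    exact ⟨a, ha.trans (hd' _), ha'⟩
  choose c hc hc' using h1
  have hcount : Countable (Σ n, LSP.BoundedFormula Empty (n + 1)) := by
    refine Function.Injective.countable
      (f := fun p => (⟨p.1 + 1, p.2⟩ : Σ n, LSP.BoundedFormula Empty n)) ?_
    rintro ⟨n, φ⟩ ⟨m, ψ⟩ h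
    simp only [Sigma.mk.injEq, Nat.add_right_cancel_iff] at h
    obtain ⟨rfl, h⟩ := h
    rw [eq_of_heq h]
  obtain ⟨d, hd, hd'⟩ := ord_bound hκ (lt_of_le_of_lt (Cardinal.mk_le_aleph0_iff.2 hcount)
    (by simpa using hκ.aleph0_lt)) c hc
  refine ⟨max l (d + 1), max_lt hl (isSuccLimit_ord hκ hd), le_max_left _ _, ?_⟩
  intro n φ b hb hex
  obtain ⟨a, ha, ha'⟩ := hc' ⟨n, φ⟩ b hb hex
  refine ⟨a, lt_of_lt_of_le (lt_of_le_of_lt (ha.trans (hd' ⟨n, φ⟩)) ?_) (le_max_right _ _), ha'⟩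
  exact lt_add_one d

theorem wit_closed {κ : Cardinal.{0}} (hκ : κ.IsInaccessible) (S : Set ZFSet) (l : Ordinal.{0})
    (hl : l < κ.ord) : ∃ l' < κ.ord, l ≤ l' ∧ Wit κ S l' l' := by
  choose! h h1 h2 h3 using wit_step hκ S
  have hit : ∀ k, h^[k] l < κ.ord := by
    intro k
    induction k with
    | zero => exact hl
    | succ k ih => rw [Function.iterate_succ_apply']; exact h1 _ ih
  have hmono : Monotone fun k => h^[k] l := by
    apply monotone_nat_of_le_succ
    intro k
    rw [Function.iterate_succ_apply']
    exact h2 _ (hit k)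
  refine ⟨Ordinal.nfp h l, Cardinal.nfp_lt_ord_of_isRegular hκ.isRegular hκ.aleph0_lt.ne' h1 hl,
    Ordinal.le_nfp _ _, ?_⟩
  intro n φ b hb hex
  have : ∀ i, ∃ k, (b i).1.rank < h^[k] l := fun i => Ordinal.lt_nfp_iff.1 (hb i)
  choose k hk using this
  obtain ⟨a, ha, ha'⟩ := h3 _ (hit (Finset.univ.sup k)) n φ b
    (fun i => (hk i).trans_le (hmono (Finset.le_sup (Finset.mem_univ i)))) hex
  refine ⟨a, ha.trans_le ?_, ha'⟩
  rw [← Function.iterate_succ_apply' h]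
  exact Ordinal.iterate_le_nfp _ _ _

/-- A strictly increasing enumeration of closure points. -/
theorem exists_enum {κ : Cardinal.{0}} (hκ : κ.IsInaccessible) (S : Set ZFSet) :
    ∃ e : Ordinal.{0} → Ordinal.{0}, StrictMono e ∧ (∀ o, o ≤ e o) ∧
      ∀ o < κ.ord, e o < κ.ord ∧ Wit κ S (e o) (e o) := by
  let C : Set Ordinal.{0} := {l | l < κ.ord → Wit κ S l l}
  have hC : ¬ BddAbove C := by
    rintro ⟨b, hb⟩
    have : max κ.ord (b + 1) ∈ C := fun h => absurd h (le_max_left _ _).not_gt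
    exact absurd (hb this) (lt_of_lt_of_le (lt_add_one b) (le_max_right _ _)).not_ge
  have hlt : ∀ o < κ.ord, Ordinal.enumOrd C o < κ.ord := by
    intro o
    induction o using WellFoundedLT.induction with
    | ind o ih =>
      intro ho
      obtain ⟨b, hb, hb'⟩ := ord_bound hκ (β := Set.Iio o) (by
          rw [Cardinal.mk_Iio_ordinal, Cardinal.lift_lt]
          exact Cardinal.lt_ord.1 ho) (fun i => Ordinal.enumOrd C i.1)
          (fun i => ih i.1 i.2 (lt_trans i.2 ho))
      obtain ⟨c, hc, hc1, hc2⟩ := wit_closed hκ S _ (isSuccLimit_ord hκ hb)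
      refine lt_of_le_of_lt (Ordinal.enumOrd_le_of_forall_lt (a := c) (fun _ => hc2) ?_) hc
      intro i hi
      exact lt_of_le_of_lt (hb' ⟨i, hi⟩) (lt_of_lt_of_le (lt_add_one b) hc1)
  exact ⟨_, Ordinal.enumOrd_strictMono hC, fun o => Ordinal.le_enumOrd_self hC,
    fun o ho => ⟨hlt o ho, Ordinal.enumOrd_mem hC o (hlt o ho)⟩⟩

theorem coding {κ : Cardinal.{0}} (hκ : κ.IsInaccessible) (S : Set ZFSet)
    (hS : S ⊆ Vrank κ.ord) : ∃ S' : Set ZFSet, S' ⊆ Vrank κ.ord ∧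
      (∀ x : Vrank κ.ord, QQ (ZModel (Vrank κ.ord) S') x x ↔ x.1 ∈ S) ∧
      Good (ZModel (Vrank κ.ord) S') := by
  obtain ⟨e, hmono, hle, he⟩ := exists_enum hκ S
  let F : ZFSet → ZFSet := fun x => ZFSet.vonNeumann (e (x.rank + 1))
  have hFmem : ∀ x, x ∈ F x := fun x =>
    ZFSet.mem_vonNeumann.2 (lt_of_lt_of_le (lt_add_one _) (hle _))
  have hFκ : ∀ x ∈ Vrank κ.ord, F x ∈ Vrank κ.ord := by
    intro x hx
    change (F x).rank < κ.ord
    rw [ZFSet.rank_vonNeumann]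
    exact (he _ (isSuccLimit_ord hκ hx)).1
  let S' : Set ZFSet := {p | (∃ x ∈ S, p = {x, x}) ∨ ∃ x ∈ Vrank κ.ord, p = {x, F x}}
  have hpair : ∀ x ∈ Vrank κ.ord, ∀ y ∈ Vrank κ.ord, ({x, y} : ZFSet) ∈ Vrank κ.ord := by
    intro x hx y hy
    change ZFSet.rank _ < κ.ord
    rw [ZFSet.rank_pair]
    exact max_lt (isSuccLimit_ord hκ hx) (isSuccLimit_ord hκ hy)
  have hS' : S' ⊆ Vrank κ.ord := by
    rintro p (⟨x, hx, rfl⟩ | ⟨x, hx, rfl⟩)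
    · exact hpair _ (hS hx) _ (hS hx)
    · exact hpair _ hx _ (hFκ x hx)
  have hQQ : ∀ x u : Vrank κ.ord, QQ (ZModel (Vrank κ.ord) S') x u ↔ ({x.1, u.1} : ZFSet) ∈ S' := by
    intro x u
    constructor
    · rintro ⟨p, hp, hz⟩
      have : p.1 = {x.1, u.1} := by
        ext z
        rw [ZFSet.mem_pair]
        constructor
        · intro hzp
          have hzV : z ∈ Vrank κ.ord := lt_trans (ZFSet.rank_lt_of_mem hzp) p.2
          rcases (hz ⟨z, hzV⟩).1 hzp with h | h
          · exact Or.inl (congrArg Subtype.val h)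
          · exact Or.inr (congrArg Subtype.val h)
        · rintro (rfl | rfl)
          · exact (hz x).2 (Or.inl rfl)
          · exact (hz u).2 (Or.inr rfl)
      rw [← this]
      exact hp
    · intro h
      refine ⟨⟨_, hS' h⟩, h, fun z => ?_⟩
      change z.1 ∈ ({x.1, u.1} : ZFSet) ↔ _
      rw [ZFSet.mem_pair]
      exact or_congr Subtype.ext_iff.symm Subtype.ext_iff.symm
  have hD : ∀ x : Vrank κ.ord, QQ (ZModel (Vrank κ.ord) S') x x ↔ x.1 ∈ S := by
    intro x
    rw [hQQ]
    constructor
    · rintro (⟨y, hy, h⟩ | ⟨y, hy, h⟩)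
      · have : y ∈ ({x.1, x.1} : ZFSet) := by rw [h]; simp
        have : y = x.1 := by simpa using this
        rwa [← this]
      · have h1 : y ∈ ({x.1, x.1} : ZFSet) := by rw [h]; simp
        have h2 : F y ∈ ({x.1, x.1} : ZFSet) := by rw [h]; simp
        have h1 : y = x.1 := by simpa using h1
        have h2 : F y = x.1 := by simpa using h2
        have h3 := hFmem y
        rw [h2, h1] at h3
        exact absurd h3 (ZFSet.mem_irrefl _)
    · intro h
      exact Or.inl ⟨x.1, h, rfl⟩
  have hGG : ∀ x u : Vrank κ.ord, GG (ZModel (Vrank κ.ord) S') x u ↔ u.1 = F x.1 := by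
    intro x u
    constructor
    · rintro ⟨hxu, hq⟩
      have hxu : x.1 ∈ u.1 := hxu
      rw [hQQ] at hq
      rcases hq with ⟨y, hy, h⟩ | ⟨y, hy, h⟩
      · have h1 : x.1 ∈ ({y, y} : ZFSet) := by rw [← h]; simp
        have h2 : u.1 ∈ ({y, y} : ZFSet) := by rw [← h]; simp
        have h1 : x.1 = y := by simpa using h1
        have h2 : u.1 = y := by simpa using h2
        rw [h1, h2] at hxu
        exact absurd hxu (ZFSet.mem_irrefl _)
      · have h1 : x.1 ∈ ({y, F y} : ZFSet) := by rw [← h]; simp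
        have h2 : u.1 ∈ ({y, F y} : ZFSet) := by rw [← h]; simp
        rw [ZFSet.mem_pair] at h1 h2
        rcases h1 with h1 | h1 <;> rcases h2 with h2 | h2
        · rw [h1, h2] at hxu
          exact absurd hxu (ZFSet.mem_irrefl _)
        · rw [h1, h2]
        · rw [h1, h2] at hxu
          exact absurd hxu (ZFSet.mem_asymm (hFmem y))
        · rw [h1, h2] at hxu
          exact absurd hxu (ZFSet.mem_irrefl _)
    · intro h
      refine ⟨?_, (hQQ x u).2 (Or.inr ⟨x.1, x.2, by rw [h]⟩)⟩
      change x.1 ∈ u.1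
      rw [h]
      exact hFmem _
  refine ⟨S', hS', hD, ?_, ?_, ?_, ?_, ?_⟩
  · intro x
    exact ⟨⟨F x.1, hFκ _ x.2⟩, (hGG _ _).2 rfl⟩
  · intro x u h z hz w hw
    have h := (hGG _ _).1 h
    have hz : z.1 ∈ u.1 := hz
    change w.1 ∈ u.1
    rw [h] at hz ⊢
    exact (ZFSet.isTransitive_vonNeumann _).mem_trans hw hz
  · intro x u h y w h'
    have h := (hGG _ _).1 h
    have h' := (hGG _ _).1 h'
    have key : u.1 ∈ w.1 ∨ u.1 = w.1 ∨ w.1 ∈ u.1 := by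
      rw [h, h']
      simp only [F, ZFSet.vonNeumann_mem_vonNeumann_iff, ZFSet.vonNeumann_inj]
      exact lt_trichotomy _ _
    exact key.imp id (Or.imp Subtype.ext id)
  · intro x u h y w h' hxy
    have h := (hGG _ _).1 h
    have h' := (hGG _ _).1 h'
    change u.1 ∈ w.1
    rw [h, h']
    simp only [F, ZFSet.vonNeumann_mem_vonNeumann_iff]
    apply hmono
    have : x.1.rank < y.1.rank := ZFSet.rank_lt_of_mem hxy
    simpa using this
  · intro n φ x u h b hb ⟨a, ha⟩
    have h := (hGG _ _).1 h
    have hw := (he _ (isSuccLimit_ord hκ x.2)).2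
    have hmemu : ∀ z : Vrank κ.ord, z.1 ∈ u.1 ↔ z.1.rank < e (x.1.rank + 1) := by
      intro z
      rw [h]
      exact ZFSet.mem_vonNeumann
    obtain ⟨c, hc, hreal⟩ := hw n φ b (fun i => (hmemu _).1 (hb i)) ⟨a, (breal_congr hD φ _ _).1 ha⟩
    exact ⟨c, (hmemu _).2 hc, (breal_congr hD φ _ _).2 hreal⟩

/-- If `κ` is unfoldable then, for every `S ⊆ R(κ)` and every
ordinal `α`, the ordering of well-founded end elementary extensions of
`(R(κ),∈,S)` contains a chain of order type `α`. -/
theorem unfoldable_has_chains_of_every_order_type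
    (κ : Cardinal.{0}) (hκ : IsUnfoldable κ)
    (S : Set ZFSet) (hS : S ⊆ Vrank κ.ord) (α : Ordinal.{0}) :
    ∃ (N : ↥(Set.Iio α) → ZFSet) (T : ↥(Set.Iio α) → Set ZFSet),
      (∀ β, (N β).IsTransitive) ∧
      (∀ β, ZEEE (Vrank κ.ord) S (N β).toSet (T β)) ∧
      (∀ β γ, β < γ → ZEEE (N β).toSet (T β) (N γ).toSet (T γ)) := by
  obtain ⟨S', hS', hD, hG⟩ := coding hκ.1 S hS
  obtain ⟨N, T', hN, hE, hr⟩ := hκ.2 S' hS' (κ.ord + α)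
  exact chain_of_good κ S S' hD hG α N T' hN hE hr
end

section
/- Every countable model M of ZF has 2^{ℵ₀} pairwise non-isomorphic end elementary extensions. -/
open FirstOrder Cardinal

/-- Semantic satisfaction of the axioms of ZF⁻ (ZF without power set), with the
separation and replacement schemas ranging over all first-order formulas of the
language. -/
structure SatZFminus (M : SetModel) : Prop where
  ext : ∀ x y, (∀ z, M.mem z x ↔ M.mem z y) → x = y
  found : ∀ x, (∃ y, M.mem y x) → ∃ y, M.mem y x ∧ ∀ z, M.mem z x → ¬M.mem z y
  pair : ∀ x y, ∃ p, ∀ z, M.mem z p ↔ z = x ∨ z = y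
  unionAx : ∀ x, ∃ u, ∀ z, M.mem z u ↔ ∃ y, M.mem y x ∧ M.mem z y
  infinity : ∃ i, (∃ e, M.mem e i ∧ ∀ z, ¬M.mem z e) ∧
    ∀ x, M.mem x i → ∃ s, M.mem s i ∧ ∀ z, M.mem z s ↔ M.mem z x ∨ z = x
  sep : ∀ (n : ℕ) (φ : LSP.Formula (Fin (n + 1))) (p : Fin n → M.Carrier) (a : M.Carrier),
    ∃ b, ∀ z, M.mem z b ↔ M.mem z a ∧ M.Realize φ (Fin.cons z p)
  repl : ∀ (n : ℕ) (φ : LSP.Formula (Fin (n + 2))) (p : Fin n → M.Carrier) (a : M.Carrier),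
    (∀ x, M.mem x a → ∃! y, M.Realize φ (Fin.cons x (Fin.cons y p))) →
    ∃ b, ∀ y, M.mem y b ↔ ∃ x, M.mem x a ∧ M.Realize φ (Fin.cons x (Fin.cons y p))

/-- Semantic satisfaction of the ZF axioms. -/
structure SatZF (M : SetModel) extends SatZFminus M : Prop where
  power : ∀ x, ∃ p, ∀ z, M.mem z p ↔ ∀ w, M.mem w z → M.mem w x

/-- Semantic satisfaction of the ZFC axioms. -/
structure SatZFC (M : SetModel) extends SatZF M : Prop where
  choice : ∀ x, (∀ y, M.mem y x → ∃ z, M.mem z y) →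
    (∀ y y', M.mem y x → M.mem y' x → y ≠ y' → ¬∃ z, M.mem z y ∧ M.mem z y') →
    ∃ c, ∀ y, M.mem y x → ∃! z, M.mem z y ∧ M.mem z c

namespace KM

open FirstOrder FirstOrder.Language

/-- The `LSP`-structure of a relation with empty predicate. -/
def St {X : Type 1} (E : X → X → Prop) : LSP.Structure X := SetModel.str ⟨X, E, fun _ => False⟩

/-- Satisfaction with arbitrary index type of variables. -/
def Rz {X : Type 1} (E : X → X → Prop) {ι : Type*} (φ : LSP.Formula ι) (v : ι → X) : Prop :=
  @Formula.Realize LSP X (St E) ι φ v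

/-- Definability of a predicate on assignments, with parameters `c`. -/
def Df {X : Type 1} (E : X → X → Prop) {ι κ : Type*} (c : κ → X) (P : (ι → X) → Prop) : Prop :=
  ∃ φ : LSP.Formula (ι ⊕ κ), ∀ v, Rz E φ (Sum.elim v c) ↔ P v

/-- Terms: a variable or a parameter. -/
def Tm {X : Type 1} {ι κ : Type*} (c : κ → X) (t : (ι → X) → X) : Prop :=
  ∃ i : ι ⊕ κ, ∀ v, Sum.elim v c i = t v

section Dfn

variable {X : Type 1} {E : X → X → Prop} {ι κ : Type*} {c : κ → X}

theorem tmv (i : ι) : Tm c (fun v : ι → X => v i) := ⟨.inl i, fun _ => rfl⟩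

theorem tmc (k : κ) : Tm c (fun _ : ι → X => c k) := ⟨.inr k, fun _ => rfl⟩

theorem tmid (x : X) : Tm id (fun _ : ι → X => x) := ⟨.inr x, fun _ => rfl⟩

theorem Df.congr {P Q : (ι → X) → Prop} (h : Df E c P) (hPQ : ∀ v, P v ↔ Q v) : Df E c Q := by
  obtain ⟨φ, hφ⟩ := h
  exact ⟨φ, fun v => (hφ v).trans (hPQ v)⟩

theorem Df.fls : Df E c (fun _ : ι → X => False) :=
  ⟨BoundedFormula.falsum, fun _ => Iff.rfl⟩

theorem Df.imp {P Q : (ι → X) → Prop} (hP : Df E c P) (hQ : Df E c Q) :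
    Df E c (fun v => P v → Q v) := by
  obtain ⟨φ, hφ⟩ := hP
  obtain ⟨ψ, hψ⟩ := hQ
  refine ⟨BoundedFormula.imp φ ψ, fun v => ?_⟩
  beta_reduce
  rw [← hφ v, ← hψ v]
  exact Iff.rfl

theorem Df.eq {s t : (ι → X) → X} (hs : Tm c s) (ht : Tm c t) :
    Df E c (fun v => s v = t v) := by
  obtain ⟨i, hi⟩ := hs
  obtain ⟨j, hj⟩ := ht
  refine ⟨Term.equal (Term.var i) (Term.var j), fun v => ?_⟩
  beta_reduce
  rw [← hi v, ← hj v]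
  let := St E
  exact Formula.realize_equal

theorem Df.mem {s t : (ι → X) → X} (hs : Tm c s) (ht : Tm c t) :
    Df E c (fun v => E (s v) (t v)) := by
  obtain ⟨i, hi⟩ := hs
  obtain ⟨j, hj⟩ := ht
  refine ⟨Relations.formula₂ (L := LSP) (() : Unit) (Term.var i) (Term.var j), fun v => ?_⟩
  beta_reduce
  rw [← hi v, ← hj v]
  let := St E
  exact Formula.realize_rel₂

theorem Rz_relabel {ι' : Type*} (φ : LSP.Formula ι) (g : ι → ι') (v : ι' → X) :
    Rz E (φ.relabel g) v ↔ Rz E φ (v ∘ g) := by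
  let := St E
  exact Formula.realize_relabel

theorem Df.all {Q : (ι → X) → X → Prop}
    (h : Df E c (fun w : Option ι → X => Q (fun i => w (some i)) (w none))) :
    Df E c (fun v => ∀ x, Q v x) := by
  obtain ⟨φ, hφ⟩ := h
  let g : Option ι ⊕ κ → (ι ⊕ κ) ⊕ Unit := fun z => match z with
    | .inl none => .inr ()
    | .inl (some i) => .inl (.inl i)
    | .inr k => .inl (.inr k)
  refine ⟨Formula.iAlls Unit (φ.relabel g), fun v => ?_⟩
  let := St E
  refine Formula.realize_iAlls.trans ?_
  have key : ∀ i : Unit → X, (φ.relabel g).Realize (fun a => Sum.elim (Sum.elim v c) i a)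
      ↔ Q v (i ()) := by
    intro i
    refine (Rz_relabel (E := E) φ g _).trans ?_
    refine Iff.trans ?_ (hφ (fun o => Option.elim o (i ()) v))
    apply iff_of_eq
    congr 1
    funext z
    rcases z with (_ | z) | z <;> rfl
  constructor
  · intro h x
    exact (key (fun _ => x)).1 (h _)
  · intro h i
    exact (key i).2 (h _)

theorem Df.not {P : (ι → X) → Prop} (hP : Df E c P) : Df E c (fun v => ¬ P v) :=
  hP.imp Df.fls

theorem Df.and {P Q : (ι → X) → Prop} (hP : Df E c P) (hQ : Df E c Q) :
    Df E c (fun v => P v ∧ Q v) :=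
  (hP.imp hQ.not).not.congr fun v => by tauto

theorem Df.or {P Q : (ι → X) → Prop} (hP : Df E c P) (hQ : Df E c Q) :
    Df E c (fun v => P v ∨ Q v) :=
  (hP.not.imp hQ).congr fun v => by tauto

theorem Df.iff {P Q : (ι → X) → Prop} (hP : Df E c P) (hQ : Df E c Q) :
    Df E c (fun v => P v ↔ Q v) :=
  ((hP.imp hQ).and (hQ.imp hP)).congr fun v => by tauto

theorem Df.ex {Q : (ι → X) → X → Prop}
    (h : Df E c (fun w : Option ι → X => Q (fun i => w (some i)) (w none))) :
    Df E c (fun v => ∃ x, Q v x) :=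
  (Df.all (Q := fun v x => ¬ Q v x) h.not).not.congr fun v => by simp

theorem Df.exu {Q : (ι → X) → X → Prop}
    (h : Df E c (fun w : Option ι → X => Q (fun i => w (some i)) (w none)))
    (h2 : Df E c (fun w : Option (Option ι) → X => Q (fun i => w (some (some i))) (w none))) :
    Df E c (fun v => ∃! x, Q v x) := by
  unfold ExistsUnique
  exact Df.ex (h.and (Df.all (h2.imp (Df.eq (tmv _) (tmv _)))))

/-- Substitution of terms for variables, from parameter-free to any parameters. -/
theorem Df.sub {ι' κ' : Type*} {P : (ι' → X) → Prop} {c' : κ' → X} (h : Df E c' P)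
    (hc : ∀ k, Tm c (fun _ : ι → X => c' k))
    (t : ι' → (ι → X) → X) (ht : ∀ i, Tm c (t i)) : Df E c (fun v => P (fun i => t i v)) := by
  obtain ⟨φ, hφ⟩ := h
  choose s hs using ht
  choose r hr using hc
  refine ⟨φ.relabel (Sum.elim s r), fun v => ?_⟩
  beta_reduce
  rw [Rz_relabel, ← hφ]
  apply iff_of_eq
  congr 1
  funext z
  rcases z with z | z
  · exact hs z v
  · exact hr z v

theorem Df.sub0 {ι' : Type*} {P : (ι' → X) → Prop} (h : Df E Empty.elim P)
    (t : ι' → (ι → X) → X) (ht : ∀ i, Tm c (t i)) : Df E c (fun v => P (fun i => t i v)) :=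
  h.sub (fun k => k.elim) t ht

/-- Binary parameter-free relation. -/
def Rel2 (E : X → X → Prop) (R : X → X → Prop) : Prop :=
  Df E (Empty.elim) (fun v : Bool → X => R (v true) (v false))

theorem Rel2.df {R : X → X → Prop} (h : Rel2 E R) {s t : (ι → X) → X} (hs : Tm c s) (ht : Tm c t) :
    Df E c (fun v => R (s v) (t v)) :=
  Df.sub0 h (fun b => if b then s else t) (by intro b; cases b <;> simpa)

/-- Every formula has finitely many free variables. -/
theorem fin_support {A : Type*} (φ : LSP.Formula A) :
    ∃ (n : ℕ) (e : Fin n → A) (ψ : LSP.Formula (Fin n)), Function.Injective e ∧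
      ∀ v : A → X, Rz E φ v ↔ Rz E ψ (v ∘ e) := by
  classical
  let s := BoundedFormula.freeVarFinset φ
  let e := s.equivFin
  refine ⟨s.card, fun i => (e.symm i).1, BoundedFormula.restrictFreeVar φ e, ?_, fun v => ?_⟩
  · exact Subtype.val_injective.comp e.symm.injective
  · let := St E
    symm
    apply BoundedFormula.realize_restrictFreeVar
    intro a
    simp

theorem Df.fin {A : Type*} {P : (A → X) → Prop} (h : Df E (Empty.elim) P) :
    ∃ (n : ℕ) (e : Fin n → A) (Q : (Fin n → X) → Prop), Df E Empty.elim Q ∧ Function.Injective e ∧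
      ∀ v : A → X, P v ↔ Q (v ∘ e) := by
  obtain ⟨φ, hφ⟩ := h
  obtain ⟨n, e, ψ, he, hψ⟩ := fin_support (E := E) (φ.relabel (Sum.elim id Empty.elim))
  refine ⟨n, e, fun w => Rz E ψ w, ⟨ψ.relabel Sum.inl, fun v => ?_⟩, he, fun v => ?_⟩
  · rw [Rz_relabel]; rfl
  · beta_reduce
    rw [← hψ, Rz_relabel, ← hφ]
    apply iff_of_eq
    congr 1
    funext z
    rcases z with z | z
    · rfl
    · exact z.elim

/-- Parameters as variables. -/
theorem Df.unparam {P : (ι → X) → Prop} (h : Df E c P) :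
    ∃ Q : (ι ⊕ κ → X) → Prop, Df E Empty.elim Q ∧ ∀ v, P v ↔ Q (Sum.elim v c) := by
  obtain ⟨φ, hφ⟩ := h
  refine ⟨fun w => Rz E φ w, ⟨φ.relabel Sum.inl, fun v => ?_⟩, fun v => (hφ v).symm⟩
  rw [Rz_relabel]; rfl

theorem Df.exFin {n : ℕ} {Q : (ι → X) → (Fin n → X) → Prop}
    (h : Df E c (fun w : ι ⊕ Fin n → X => Q (fun i => w (.inl i)) (fun i => w (.inr i)))) :
    Df E c (fun v => ∃ x, Q v x) := by
  induction n generalizing ι with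
  | zero =>
    refine (h.sub tmc (Sum.elim (fun i v => v i) Fin.elim0) ?_).congr fun v => ?_
    · rintro (i | i)
      · exact tmv i
      · exact i.elim0
    · constructor
      · intro h; exact ⟨_, h⟩
      · rintro ⟨x, h⟩
        rw [show x = fun i => (Fin.elim0 i : (ι → X) → X) v from funext fun i => i.elim0] at h
        exact h
  | succ n ih =>
    have h' : Df E c (fun v => ∃ x, ∃ y : Fin n → X, Q v (Fin.cons x y)) := by
      apply Df.ex
      apply ih
      refine (h.sub tmc (Sum.elim (fun i v => v (.inl (some i)))
        (Fin.cons (fun v => v (.inl none)) fun i v => v (.inr i))) ?_).congr fun v => ?_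
      · rintro (i | i)
        · exact tmv _
        · refine Fin.cases ?_ (fun i => ?_) i
          · exact tmv _
          · exact tmv _
      · apply iff_of_eq
        congr 1
        funext i
        refine Fin.cases ?_ (fun i => ?_) i <;> simp
    refine h'.congr fun v => ?_
    constructor
    · rintro ⟨x, y, h⟩; exact ⟨_, h⟩
    · rintro ⟨x, h⟩; exact ⟨x 0, Fin.tail x, by simpa using h⟩

/-- Existential quantification over infinitely many variables. -/
theorem Df.exInf [Nonempty X] {β : Type*} {P : (ι ⊕ β → X) → Prop} (h : Df E c P) :
    Df E c (fun v => ∃ b : β → X, P (Sum.elim v b)) := by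
  classical
  obtain ⟨Q, hQ, hPQ⟩ := h.unparam
  obtain ⟨n, e, R, hR, he, hQR⟩ := hQ.fin
  have : Df E c (fun v => ∃ x : Fin n → X, (fun v x =>
    R (fun i => match e i with
      | .inl (.inl j) => v j
      | .inl (.inr _) => x i
      | .inr k => c k)) v x) := by
    apply Df.exFin
    refine hR.sub0 _ (fun i => ?_)
    rcases e i with (j | j) | k
    · exact tmv _
    · exact tmv _
    · exact tmc _
  refine this.congr fun v => ?_
  constructor
  · rintro ⟨x, hx⟩
    let x0 : X := Classical.arbitrary X
    refine ⟨fun b => if hb : ∃ i, e i = .inl (.inr b) then x hb.choose else x0, ?_⟩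
    rw [hPQ, hQR]
    convert hx using 1
    funext i
    simp only [Function.comp]
    rcases hi : e i with (j | j) | k
    · rfl
    · have hb : ∃ i, e i = .inl (.inr j) := ⟨i, hi⟩
      have : hb.choose = i := he (hb.choose_spec.trans hi.symm)
      simp only [Sum.elim_inl, Sum.elim_inr, dif_pos hb, this]
    · rfl
  · rintro ⟨b, hb⟩
    rw [hPQ, hQR] at hb
    refine ⟨fun i => match e i with
      | .inl (.inr j) => b j
      | _ => Classical.arbitrary X, ?_⟩
    convert hb using 1
    funext i
    simp only [Function.comp]
    rcases hi : e i with (j | j) | k <;> rfl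

end Dfn

section ZFBasics

variable {X : Type 1} {E : X → X → Prop}

/-- Definable (with parameters) class. -/
def DP1 (E : X → X → Prop) (P : X → Prop) : Prop :=
  Df E (id : X → X) (fun v : Unit → X => P (v ()))

/-- Definable (with parameters) binary relation. -/
def DP2 (E : X → X → Prop) (R : X → X → Prop) : Prop :=
  Df E (id : X → X) (fun v : Bool → X => R (v true) (v false))

theorem DP1.df {ι : Type*} {P : X → Prop} (h : DP1 E P) {t : (ι → X) → X}
    (ht : Tm (id : X → X) t) : Df E (id : X → X) (fun v => P (t v)) :=
  Df.sub h tmid (fun _ => t) (fun _ => ht)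

theorem DP2.df {ι : Type*} {R : X → X → Prop} (h : DP2 E R) {s t : (ι → X) → X}
    (hs : Tm (id : X → X) s) (ht : Tm (id : X → X) t) :
    Df E (id : X → X) (fun v => R (s v) (t v)) :=
  Df.sub h tmid (fun b => if b then s else t) (by intro b; cases b <;> simpa)

/-- A class contained in a set. -/
def Sm (E : X → X → Prop) (P : X → Prop) : Prop := ∃ b, ∀ x, P x → E x b

/-- Kuratowski pair. -/
def IsPr (E : X → X → Prop) (p a b : X) : Prop :=
  ∀ z, E z p ↔ (∀ w, E w z ↔ w = a) ∨ (∀ w, E w z ↔ w = a ∨ w = b)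

theorem IsPr.df {ι κ : Type*} {c : κ → X} {r s t : (ι → X) → X} (hr : Tm c r) (hs : Tm c s)
    (ht : Tm c t) : Df E c (fun v => IsPr E (r v) (s v) (t v)) := by
  obtain ⟨i, hi⟩ := hr
  obtain ⟨j, hj⟩ := hs
  obtain ⟨k, hk⟩ := ht
  have h0 : Df E (Empty.elim) (fun v : Fin 3 → X => IsPr E (v 0) (v 1) (v 2)) := by
    unfold IsPr
    apply_rules [Df.and, Df.or, Df.imp, Df.iff, Df.not, Df.all, Df.ex, Df.mem, Df.eq, tmv]
  exact h0.sub0 ![r, s, t] (by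
    intro i'
    fin_cases i'
    · exact ⟨i, hi⟩
    · exact ⟨j, hj⟩
    · exact ⟨k, hk⟩)

/-- The `n`-th iterate of `G` on `x₀` is `y`. -/
def Rn (E G : X → X → Prop) (x₀ n y : X) : Prop :=
  ∃ f, (∃ p, IsPr E p n y ∧ E p f) ∧ ∀ p, E p f → ∃ k z, IsPr E p k z ∧
    (((∀ u, ¬ E u k) ∧ z = x₀) ∨
      ∃ j w q, (∀ u, E u k ↔ E u j ∨ u = j) ∧ G w z ∧ IsPr E q j w ∧ E q f)

theorem Rn.df {G : X → X → Prop} (hG : DP2 E G) (x₀ : X) : DP2 E (Rn E G x₀) := by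
  unfold DP2 Rn
  repeat' first
    | exact tmv _ | exact tmid _ | apply IsPr.df | apply Df.mem | apply hG.df | apply Df.eq
    | apply Df.ex | apply Df.and | apply Df.or | apply Df.iff | apply Df.not | apply Df.all
    | apply Df.imp


theorem ext (H : SatZF ⟨X, E, fun _ => False⟩) {x y : X} (h : ∀ z, E z x ↔ E z y) : x = y := H.ext x y h

theorem sepD (H : SatZF ⟨X, E, fun _ => False⟩) {P : X → Prop} (hP : DP1 E P) (a : X) : ∃ b, ∀ z, E z b ↔ E z a ∧ P z := by
  obtain ⟨φ, hφ⟩ := hP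
  obtain ⟨n, e, ψ, -, hψ⟩ := fin_support (E := E) φ
  obtain ⟨b, hb⟩ := H.sep n (ψ.relabel fun i => match e i with
    | .inl _ => 0
    | .inr _ => i.succ) (fun i => match e i with
    | .inl _ => a
    | .inr x => x) a
  refine ⟨b, fun z => (hb z).trans (and_congr Iff.rfl ?_)⟩
  refine Iff.trans ?_ (hφ (fun _ => z))
  rw [hψ]
  refine (Rz_relabel (E := E) ψ _ _).trans ?_
  apply iff_of_eq
  congr 1
  funext i
  simp only [Function.comp]
  rcases h : e i with j | x
  · rfl
  · simp [h]

theorem replD (H : SatZF ⟨X, E, fun _ => False⟩) {R : X → X → Prop} (hR : DP2 E R) (a : X) (ha : ∀ x, E x a → ∃! y, R x y) :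
    ∃ b, ∀ y, E y b ↔ ∃ x, E x a ∧ R x y := by
  obtain ⟨φ, hφ⟩ := hR
  obtain ⟨n, e, ψ, -, hψ⟩ := fin_support (E := E) φ
  have key := H.repl n (ψ.relabel fun i => match e i with
    | .inl true => 0
    | .inl false => 1
    | .inr _ => i.succ.succ) (fun i => match e i with
    | .inl _ => a
    | .inr x => x) a
  have k2 : ∀ x y, SetModel.Realize ⟨X, E, fun _ => False⟩ (ψ.relabel fun i => match e i with
    | .inl true => 0
    | .inl false => 1
    | .inr _ => i.succ.succ) (Fin.cons x (Fin.cons y (fun i => match e i with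
    | .inl _ => a
    | .inr x => x))) ↔ R x y := by
    intro x y
    have := hφ (fun b => if b then x else y)
    simp only [if_true, Bool.false_eq_true, if_false] at this
    rw [← this, hψ]
    refine (Rz_relabel (E := E) ψ _ _).trans ?_
    apply iff_of_eq
    congr 1
    funext i
    simp only [Function.comp]
    rcases h : e i with (_ | _) | z
    · rfl
    · rfl
    · simp [h]
  simp only [k2] at key
  exact key ha

theorem pairE (H : SatZF ⟨X, E, fun _ => False⟩) (x y : X) : ∃ p, ∀ z, E z p ↔ z = x ∨ z = y := H.pair x y

theorem unionE (H : SatZF ⟨X, E, fun _ => False⟩) (x : X) : ∃ u, ∀ z, E z u ↔ ∃ y, E y x ∧ E z y := H.unionAx x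

theorem powE (H : SatZF ⟨X, E, fun _ => False⟩) (x : X) : ∃ p, ∀ z, E z p ↔ ∀ w, E w z → E w x := H.power x

theorem foundE (H : SatZF ⟨X, E, fun _ => False⟩) {x : X} (h : ∃ y, E y x) : ∃ y, E y x ∧ ∀ z, E z x → ¬ E z y := H.found x h

theorem foundD (H : SatZF ⟨X, E, fun _ => False⟩) {P : X → Prop} (hP : DP1 E P) (a : X) (h : ∃ y, E y a ∧ P y) :
    ∃ y, E y a ∧ P y ∧ ∀ z, E z a → P z → ¬ E z y := by
  obtain ⟨b, hb⟩ := sepD H hP a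
  obtain ⟨y, hy, hy'⟩ := foundE H (x := b) (by obtain ⟨y, hy⟩ := h; exact ⟨y, (hb y).2 hy⟩)
  exact ⟨y, ((hb y).1 hy).1, ((hb y).1 hy).2, fun z hz hP => hy' z ((hb z).2 ⟨hz, hP⟩)⟩

theorem irr (H : SatZF ⟨X, E, fun _ => False⟩) (x : X) : ¬ E x x := by
  obtain ⟨p, hp⟩ := pairE H x x
  obtain ⟨y, hy, hy'⟩ := foundE H ⟨x, (hp x).2 (.inl rfl)⟩
  have : y = x := by have := (hp y).1 hy; tauto
  subst this
  exact hy' y hy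

theorem asymm (H : SatZF ⟨X, E, fun _ => False⟩) {x y : X} (h1 : E x y) (h2 : E y x) : False := by
  obtain ⟨p, hp⟩ := pairE H x y
  obtain ⟨z, hz, hz'⟩ := foundE H ⟨x, (hp x).2 (.inl rfl)⟩
  rcases (hp z).1 hz with rfl | rfl
  · exact hz' y ((hp y).2 (.inr rfl)) h2
  · exact hz' x ((hp x).2 (.inl rfl)) h1

theorem union2 (H : SatZF ⟨X, E, fun _ => False⟩) (x y : X) : ∃ u, ∀ z, E z u ↔ E z x ∨ E z y := by
  obtain ⟨p, hp⟩ := pairE H x y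
  obtain ⟨u, hu⟩ := unionE H p
  refine ⟨u, fun z => (hu z).trans ?_⟩
  simp only [hp]
  constructor
  · rintro ⟨_, rfl | rfl, h⟩ <;> tauto
  · rintro (h | h)
    · exact ⟨x, .inl rfl, h⟩
    · exact ⟨y, .inr rfl, h⟩

theorem insertE (H : SatZF ⟨X, E, fun _ => False⟩) (x y : X) : ∃ u, ∀ z, E z u ↔ E z x ∨ z = y := by
  obtain ⟨p, hp⟩ := pairE H y y
  obtain ⟨u, hu⟩ := union2 H x p
  exact ⟨u, fun z => (hu z).trans (by rw [hp]; tauto)⟩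

theorem exset (H : SatZF ⟨X, E, fun _ => False⟩) {P : X → Prop} (hP : DP1 E P) (h : Sm E P) : ∃ b, ∀ x, E x b ↔ P x := by
  obtain ⟨a, ha⟩ := h
  obtain ⟨b, hb⟩ := sepD H hP a
  exact ⟨b, fun x => (hb x).trans ⟨fun h => h.2, fun h => ⟨ha x h, h⟩⟩⟩

theorem union_small (H : SatZF ⟨X, E, fun _ => False⟩) {R : X → X → Prop} (hR : DP2 E R) (a : X) (h : ∀ b, E b a → Sm E (R b)) :
    Sm E (fun x => ∃ b, E b a ∧ R b x) := by
  have hD : DP2 E (fun b y => ∀ x, E x y ↔ R b x) :=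
    Df.all ((Df.mem (tmv _) (tmv _)).iff (hR.df (tmv _) (tmv _)))
  obtain ⟨c, hc⟩ := replD H hD a (fun b hb => by
    have hb' : DP1 E (R b) := hR.df (tmid _) (tmv _)
    obtain ⟨s, hs⟩ := exset H hb' (h b hb)
    exact ⟨s, hs, fun y hy => ext H fun z => (hy z).trans (hs z).symm⟩)
  obtain ⟨u, hu⟩ := unionE H c
  refine ⟨u, fun x => ?_⟩
  rintro ⟨b, hb, hx⟩
  have hb' : DP1 E (R b) := hR.df (tmid _) (tmv _)
  obtain ⟨s, hs⟩ := exset H hb' (h b hb)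
  exact (hu x).2 ⟨s, (hc s).2 ⟨b, hb, hs⟩, (hs x).2 hx⟩

theorem Sm.or (H : SatZF ⟨X, E, fun _ => False⟩) {P Q : X → Prop} (hP : Sm E P) (hQ : Sm E Q) : Sm E (fun x => P x ∨ Q x) := by
  obtain ⟨a, ha⟩ := hP
  obtain ⟨b, hb⟩ := hQ
  obtain ⟨u, hu⟩ := union2 H a b
  refine ⟨u, fun x => ?_⟩
  rw [hu]
  rintro (h | h)
  · exact .inl (ha x h)
  · exact .inr (hb x h)

theorem pr_ex (H : SatZF ⟨X, E, fun _ => False⟩) (a b : X) : ∃ p, IsPr E p a b := by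
  obtain ⟨s, hs⟩ := pairE H a a
  obtain ⟨t, ht⟩ := pairE H a b
  obtain ⟨p, hp⟩ := pairE H s t
  refine ⟨p, fun z => (hp z).trans ?_⟩
  constructor
  · rintro (rfl | rfl)
    · left; intro w; rw [hs]; tauto
    · right; exact ht
  · rintro (h | h)
    · left; exact ext H fun w => by rw [h, hs]; tauto
    · right; exact ext H fun w => by rw [h, ht]

theorem pr_uniq (H : SatZF ⟨X, E, fun _ => False⟩) {p q a b : X} (hp : IsPr E p a b) (hq : IsPr E q a b) : p = q :=
  ext H fun z => (hp z).trans (hq z).symm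

theorem pr_inj (H : SatZF ⟨X, E, fun _ => False⟩) {p a b a' b' : X} (h : IsPr E p a b) (h' : IsPr E p a' b') : a = a' ∧ b = b' := by
  obtain ⟨s, hs⟩ := pairE H a a
  obtain ⟨t, ht⟩ := pairE H a b
  obtain ⟨s', hs'⟩ := pairE H a' a'
  obtain ⟨t', ht'⟩ := pairE H a' b'
  have hsp := (h s).2 (.inl fun w => by rw [hs]; tauto)
  have htp := (h t).2 (.inr ht)
  have htp' := (h' t').2 (.inr ht')
  have haa : a = a' := by
    rcases (h' s).1 hsp with k | k
    · exact ((k a).1 ((hs a).2 (.inl rfl)))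
    · have := (hs a').1 ((k a').2 (.inl rfl))
      tauto
  subst haa
  refine ⟨rfl, ?_⟩
  have h1 : b = a ∨ b = b' := by
    rcases (h' t).1 htp with k | k
    · exact .inl ((k b).1 ((ht b).2 (.inr rfl)))
    · exact (k b).1 ((ht b).2 (.inr rfl))
  have h2 : b' = a ∨ b' = b := by
    rcases (h t').1 htp' with k | k
    · exact .inl ((k b').1 ((ht' b').2 (.inr rfl)))
    · exact (k b').1 ((ht' b').2 (.inr rfl))
  rcases h1 with h1 | h1
  · rcases h2 with h2 | h2
    · rw [h1, h2]
    · exact h2.symm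
  · exact h1

theorem succ_inj (H : SatZF ⟨X, E, fun _ => False⟩) {k j j' : X} (h : ∀ u, E u k ↔ E u j ∨ u = j) (h' : ∀ u, E u k ↔ E u j' ∨ u = j') :
    j = j' := by
  have h1 := (h' j).1 ((h j).2 (.inr rfl))
  have h2 := (h j').1 ((h' j').2 (.inr rfl))
  rcases h1 with h1 | h1
  · rcases h2 with h2 | h2
    · exact (asymm H h1 h2).elim
    · exact h2.symm
  · exact h1

theorem Rn_inv (H : SatZF ⟨X, E, fun _ => False⟩) {G : X → X → Prop} {x₀ n y : X} (h : Rn E G x₀ n y) :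
    ((∀ u, ¬ E u n) ∧ y = x₀) ∨
      ∃ j w, (∀ u, E u n ↔ E u j ∨ u = j) ∧ G w y ∧ Rn E G x₀ j w := by
  obtain ⟨f, ⟨p, hp, hpf⟩, hf⟩ := h
  obtain ⟨k, z, hpk, hh⟩ := hf p hpf
  obtain ⟨rfl, rfl⟩ := pr_inj H hp hpk
  rcases hh with hh | ⟨j, w, q, h1, h2, h3, h4⟩
  · exact .inl hh
  · exact .inr ⟨j, w, h1, h2, f, ⟨q, h3, h4⟩, hf⟩

theorem Rn_zero (H : SatZF ⟨X, E, fun _ => False⟩) {G : X → X → Prop} {x₀ n : X} (h : ∀ u, ¬ E u n) : Rn E G x₀ n x₀ := by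
  obtain ⟨p, hp⟩ := pr_ex H n x₀
  obtain ⟨f, hf⟩ := pairE H p p
  refine ⟨f, ⟨p, hp, (hf p).2 (.inl rfl)⟩, fun q hq => ?_⟩
  have : q = p := by have := (hf q).1 hq; tauto
  subst this
  exact ⟨n, x₀, hp, .inl ⟨h, rfl⟩⟩

theorem Rn_succ (H : SatZF ⟨X, E, fun _ => False⟩) {G : X → X → Prop} {x₀ k j w z : X} (h : ∀ u, E u k ↔ E u j ∨ u = j)
    (hG : G w z) (hR : Rn E G x₀ j w) : Rn E G x₀ k z := by
  obtain ⟨f, ⟨q, hq, hqf⟩, hf⟩ := hR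
  obtain ⟨p, hp⟩ := pr_ex H k z
  obtain ⟨f', hf'⟩ := insertE H f p
  refine ⟨f', ⟨p, hp, (hf' p).2 (.inr rfl)⟩, fun r hr => ?_⟩
  rcases (hf' r).1 hr with hr | rfl
  · obtain ⟨k', z', h1, h2⟩ := hf r hr
    refine ⟨k', z', h1, h2.imp id ?_⟩
    rintro ⟨j', w', q', h3, h4, h5, h6⟩
    exact ⟨j', w', q', h3, h4, h5, (hf' q').2 (.inl h6)⟩
  · exact ⟨k, z, hp, .inr ⟨j, w, q, h, hG, hq, (hf' q).2 (.inl hqf)⟩⟩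

/-- Closure of a set under a definable function. -/
theorem iter (H : SatZF ⟨X, E, fun _ => False⟩) {G : X → X → Prop} (hG : DP2 E G) (hGf : ∀ x, ∃! y, G x y) (x₀ : X) :
    ∃ C, E x₀ C ∧ ∀ w z, E w C → G w z → E z C := by
  obtain ⟨i, ⟨e, hei, he⟩, hi⟩ := H.infinity
  change E e i at hei
  change ∀ z, ¬ E z e at he
  change ∀ x, E x i → ∃ s, E s i ∧ ∀ z, E z s ↔ E z x ∨ z = x at hi
  have hRn := Rn.df hG x₀
  have hD : DP1 E (fun n => ∃! y, Rn E G x₀ n y) :=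
    Df.exu (hRn.df (tmv _) (tmv _)) (hRn.df (tmv _) (tmv _))
  obtain ⟨I, hI⟩ := sepD H hD i
  have h0 : E e I := by
    refine (hI e).2 ⟨hei, x₀, Rn_zero H he, fun y hy => ?_⟩
    rcases Rn_inv H hy with h | ⟨j, w, h1, _⟩
    · exact h.2
    · exact (he j ((h1 j).2 (.inr rfl))).elim
  have hs : ∀ j, E j I → ∃ k, E k I ∧ ∀ u, E u k ↔ E u j ∨ u = j := by
    intro j hj
    obtain ⟨hj1, w, hw, hwu⟩ := (hI j).1 hj
    obtain ⟨k, hk, hk'⟩ := hi j hj1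
    obtain ⟨z, hz, hzu⟩ := hGf w
    refine ⟨k, (hI k).2 ⟨hk, z, Rn_succ H hk' hz hw, fun z' hz' => ?_⟩, hk'⟩
    rcases Rn_inv H hz' with h | ⟨j', w', h1, h2, h3⟩
    · exact (h.1 j ((hk' j).2 (.inr rfl))).elim
    · have := succ_inj H hk' h1
      subst this
      rw [hwu w' h3] at h2
      exact hzu z' h2
  obtain ⟨C, hC⟩ := replD H hRn I (fun n hn => ((hI n).1 hn).2)
  refine ⟨C, (hC _).2 ⟨e, h0, Rn_zero H he⟩, fun w z hw hz => ?_⟩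
  obtain ⟨j, hj, hjw⟩ := (hC w).1 hw
  obtain ⟨k, hk, hk'⟩ := hs j hj
  exact (hC z).2 ⟨k, hk, Rn_succ H hk' hz hjw⟩

/-- Every set is included in a transitive set. -/
theorem trans_cl (H : SatZF ⟨X, E, fun _ => False⟩) (x : X) : ∃ T, (∀ z, E z x → E z T) ∧ ∀ y z, E z y → E y T → E z T := by
  have hG : DP2 E (fun x u => ∀ z, E z u ↔ ∃ y, E y x ∧ E z y) := by
    unfold DP2
    apply_rules [Df.and, Df.or, Df.imp, Df.iff, Df.not, Df.all, Df.ex, Df.mem, Df.eq, tmv, tmid]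
  obtain ⟨C, hC, hC'⟩ := iter H hG (fun x => by
    obtain ⟨u, hu⟩ := unionE H x
    exact ⟨u, hu, fun v hv => ext H fun z => (hv z).trans (hu z).symm⟩) x
  obtain ⟨T, hT⟩ := unionE H C
  refine ⟨T, fun z hz => (hT z).2 ⟨x, hC, hz⟩, fun y z hzy hy => ?_⟩
  obtain ⟨w, hw, hyw⟩ := (hT y).1 hy
  obtain ⟨u, hu⟩ := unionE H w
  exact (hT z).2 ⟨u, hC' w u hw hu, (hu z).2 ⟨y, hyw, hzy⟩⟩

end ZFBasics

section Levels

variable {X : Type 1} {E : X → X → Prop}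

/-- Histories, in the sense of level theory. -/
def Hist (E : X → X → Prop) (h : X) : Prop :=
  ∀ x, E x h → ∀ z, E z x ↔ ∃ c, (E c x ∧ E c h) ∧ ∀ u, E u z → E u c

/-- Levels of the cumulative hierarchy. -/
def Lev (E : X → X → Prop) (s : X) : Prop :=
  ∃ h, Hist E h ∧ ∀ z, E z s ↔ ∃ c, E c h ∧ ∀ u, E u z → E u c

theorem Lev.df {ι κ : Type*} {c : κ → X} {t : (ι → X) → X} (ht : Tm c t) :
    Df E c (fun v => Lev E (t v)) := by
  have h0 : Df E (Empty.elim) (fun v : Unit → X => Lev E (v ())) := by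
    unfold Lev Hist
    repeat' first
    | exact tmv _ | exact tmid _ | apply Df.mem | apply Df.eq
    | apply Df.ex | apply Df.and | apply Df.or | apply Df.iff | apply Df.not | apply Df.all
    | apply Df.imp
  exact h0.sub0 (fun _ => t) (fun _ => ht)


theorem potE (H : SatZF ⟨X, E, fun _ => False⟩) (a : X) : ∃ p, ∀ x, E x p ↔ ∃ c, E c a ∧ ∀ u, E u x → E u c := by
  obtain ⟨u, hu⟩ := unionE H a
  obtain ⟨q, hq⟩ := powE H u
  have hD : DP1 E (fun x => ∃ c, E c a ∧ ∀ u, E u x → E u c) := by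
    unfold DP1
    repeat' first
    | exact tmv _ | exact tmid _ | apply Lev.df | apply Df.mem | apply Df.eq
    | apply Df.ex | apply Df.and | apply Df.or | apply Df.iff | apply Df.not | apply Df.all
    | apply Df.imp
  obtain ⟨p, hp⟩ := sepD H hD q
  refine ⟨p, fun x => (hp x).trans ⟨fun h => h.2, fun h => ⟨?_, h⟩⟩⟩
  obtain ⟨c, hc, hxc⟩ := h
  exact (hq x).2 fun w hw => (hu w).2 ⟨c, hc, hxc w hw⟩

theorem hist_trans (H : SatZF ⟨X, E, fun _ => False⟩) {h x y z : X} (hh : Hist E h) (hx : E x h) (hy : E y x) (hz : E z y) :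
    E z x := by
  by_contra hc
  have hD : DP1 E (fun x => ∃ y z, E y x ∧ E z y ∧ ¬ E z x) := by
    unfold DP1
    repeat' first
    | exact tmv _ | exact tmid _ | apply Lev.df | apply Df.mem | apply Df.eq
    | apply Df.ex | apply Df.and | apply Df.or | apply Df.iff | apply Df.not | apply Df.all
    | apply Df.imp
  obtain ⟨x, hx, ⟨y, z, hy, hz, hzx⟩, hmin⟩ := foundD H hD h ⟨x, hx, y, z, hy, hz, hc⟩
  obtain ⟨d, ⟨hdx, hdh⟩, hyd⟩ := (hh x hx y).1 hy
  apply hzx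
  refine (hh x hx z).2 ⟨d, ⟨hdx, hdh⟩, fun u hu => ?_⟩
  by_contra hc
  exact hmin d hdh ⟨z, u, hyd z hz, hu, hc⟩ hdx

theorem lev_sup (H : SatZF ⟨X, E, fun _ => False⟩) {s x y : X} (hs : Lev E s) (hy : E y s) (hx : ∀ u, E u x → E u y) : E x s := by
  obtain ⟨h, hh, hs⟩ := hs
  obtain ⟨c, hc, hyc⟩ := (hs y).1 hy
  exact (hs x).2 ⟨c, hc, fun u hu => hyc u (hx u hu)⟩

theorem lev_tr (H : SatZF ⟨X, E, fun _ => False⟩) {s x y : X} (hs : Lev E s) (hy : E y s) (hx : E x y) : E x s := by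
  obtain ⟨h, hh, hs⟩ := hs
  obtain ⟨c, hc, hyc⟩ := (hs y).1 hy
  obtain ⟨d, hd, hxd⟩ := (hh c hc x).1 (hyc x hx)
  exact (hs x).2 ⟨d, hd.2, hxd⟩

theorem hist_lev (H : SatZF ⟨X, E, fun _ => False⟩) {h x : X} (hh : Hist E h) (hx : E x h) : Lev E x := by
  have hD : DP1 E (fun y => E y h) := Df.mem (tmv _) (tmid _)
  obtain ⟨k, hk⟩ := sepD H hD x
  refine ⟨k, fun y hy z => ?_, fun z => ?_⟩
  · have hy' := (hk y).1 hy
    rw [hh y hy'.2 z]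
    refine exists_congr fun c => and_congr_left fun _ => ?_
    rw [hk]
    constructor
    · rintro ⟨h1, h2⟩; exact ⟨h1, hist_trans H hh hx hy'.1 h1, h2⟩
    · rintro ⟨h1, h2⟩; exact ⟨h1, h2.2⟩
  · rw [hh x hx z]
    exact exists_congr fun c => and_congr_left fun _ => (hk c).symm

theorem lev_eq (H : SatZF ⟨X, E, fun _ => False⟩) {s : X} (hs : Lev E s) (z : X) :
    E z s ↔ ∃ r, (Lev E r ∧ E r s) ∧ ∀ u, E u z → E u r := by
  constructor
  · intro hz
    obtain ⟨h, hh, hs⟩ := hs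
    obtain ⟨c, hc, hzc⟩ := (hs z).1 hz
    exact ⟨c, ⟨hist_lev H hh hc, (hs c).2 ⟨c, hc, fun _ h => h⟩⟩, hzc⟩
  · rintro ⟨r, ⟨_, hr⟩, hz⟩
    exact lev_sup H hs hr hz

theorem lev_min (H : SatZF ⟨X, E, fun _ => False⟩) {P : X → Prop} (hP : DP1 E P) (h : ∃ s, Lev E s ∧ P s) :
    ∃ s, Lev E s ∧ P s ∧ ∀ r, Lev E r → P r → ¬ E r s := by
  obtain ⟨s, hs, hPs⟩ := h
  obtain ⟨a, ha⟩ := insertE H s s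
  have hD : DP1 E (fun s => Lev E s ∧ P s) := (Lev.df (tmv _)).and hP
  obtain ⟨y, hy, hPy, hmin⟩ := foundD H hD a ⟨s, (ha s).2 (.inr rfl), hs, hPs⟩
  refine ⟨y, hPy.1, hPy.2, fun r hr hPr hry => hmin r ((ha r).2 (.inl ?_)) ⟨hr, hPr⟩ hry⟩
  rcases (ha y).1 hy with h | rfl
  · exact lev_tr H hs h hry
  · exact hry

theorem lev_cmp (H : SatZF ⟨X, E, fun _ => False⟩) {s t : X} (hs : Lev E s) (ht : Lev E t) : E s t ∨ s = t ∨ E t s := by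
  by_contra hc
  have hD : DP1 E (fun s => ∃ t, Lev E t ∧ ¬ (E s t ∨ s = t ∨ E t s)) := by
    unfold DP1
    repeat' first
    | exact tmv _ | exact tmid _ | apply Lev.df | apply Df.mem | apply Df.eq
    | apply Df.ex | apply Df.and | apply Df.or | apply Df.iff | apply Df.not | apply Df.all
    | apply Df.imp
  obtain ⟨s, hs, ⟨t, ht, hc⟩, hmin⟩ := lev_min H hD ⟨s, hs, t, ht, hc⟩
  have hD' : DP1 E (fun t => ¬ (E s t ∨ s = t ∨ E t s)) := by
    unfold DP1
    repeat' first
    | exact tmv _ | exact tmid _ | apply Lev.df | apply Df.mem | apply Df.eq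
    | apply Df.ex | apply Df.and | apply Df.or | apply Df.iff | apply Df.not | apply Df.all
    | apply Df.imp
  obtain ⟨t, ht, hc, hmin'⟩ := lev_min H hD' ⟨t, ht, hc⟩
  apply hc
  right; left
  apply ext H
  intro z
  rw [lev_eq H hs, lev_eq H ht]
  refine exists_congr fun r => and_congr_left fun _ => and_congr_right fun hr => ?_
  constructor
  · intro hrs
    have : E r t ∨ r = t ∨ E t r := by
      by_contra hc'
      exact hmin r hr ⟨t, ht, hc'⟩ hrs
    rcases this with h | rfl | h
    · exact h
    · exact (hc (.inr (.inr hrs))).elim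
    · exact (hc (.inr (.inr (lev_tr H hs hrs h)))).elim
  · intro hrt
    have : E s r ∨ s = r ∨ E r s := by
      by_contra hc'
      exact hmin' r hr hc' hrt
    rcases this with h | rfl | h
    · exact (hc (.inl (lev_tr H ht hrt h))).elim
    · exact (hc (.inl hrt)).elim
    · exact h

/-- A small initial class of levels generates a level. -/
theorem lev_gen (H : SatZF ⟨X, E, fun _ => False⟩) {P : X → Prop} (hP : DP1 E P) (hS : Sm E P) (hL : ∀ s, P s → Lev E s)
    (hd : ∀ r s, Lev E r → P s → E r s → P r) :
    ∃ d, Lev E d ∧ ∀ z, E z d ↔ ∃ c, P c ∧ ∀ u, E u z → E u c := by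
  obtain ⟨h, hh⟩ := exset H hP hS
  obtain ⟨d, hd'⟩ := potE H h
  refine ⟨d, ⟨h, fun x hx z => ?_, hd'⟩, fun z => ?_⟩
  · have hx' := (hh x).1 hx
    rw [lev_eq H (hL x hx')]
    refine exists_congr fun c => and_congr_left fun _ => ?_
    rw [hh]
    constructor
    · rintro ⟨h1, h2⟩; exact ⟨h2, hd c x h1 hx' h2⟩
    · rintro ⟨h1, h2⟩; exact ⟨hL c h2, h1⟩
  · rw [hd']
    exact exists_congr fun c => and_congr_left fun _ => hh c

theorem lev_above (H : SatZF ⟨X, E, fun _ => False⟩) (B : X) : ∃ u, Lev E u ∧ ∀ b, E b B → Lev E b → E b u := by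
  have hD : DP1 E (fun r => Lev E r ∧ ∃ b, E b B ∧ Lev E b ∧ (E r b ∨ r = b)) := by
    unfold DP1
    repeat' first
    | exact tmv _ | exact tmid _ | apply Lev.df | apply Df.mem | apply Df.eq
    | apply Df.ex | apply Df.and | apply Df.or | apply Df.iff | apply Df.not | apply Df.all
    | apply Df.imp
  obtain ⟨U, hU⟩ := unionE H B
  obtain ⟨W, hW⟩ := union2 H U B
  obtain ⟨d, hd, hd'⟩ := lev_gen H hD ⟨W, by
      rintro x ⟨_, b, hb, _, h | rfl⟩
      · exact (hW x).2 (.inl ((hU x).2 ⟨b, hb, h⟩))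
      · exact (hW x).2 (.inr hb)⟩ (fun s h => h.1) (by
      rintro r s hr ⟨hs, b, hb, hbL, h⟩ hrs
      refine ⟨hr, b, hb, hbL, .inl ?_⟩
      rcases h with h | rfl
      · exact lev_tr H hbL h hrs
      · exact hrs)
  exact ⟨d, hd, fun b hb hbL => (hd' b).2 ⟨b, ⟨hbL, b, hb, hbL, .inr rfl⟩, fun _ h => h⟩⟩

theorem lev_union (H : SatZF ⟨X, E, fun _ => False⟩) (C : X) : ∃ d, Lev E d ∧ ∀ x, E x d ↔ ∃ s, E s C ∧ Lev E s ∧ E x s := by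
  have hD : DP1 E (fun r => Lev E r ∧ ∃ b, E b C ∧ Lev E b ∧ E r b) := by
    unfold DP1
    repeat' first
    | exact tmv _ | exact tmid _ | apply Lev.df | apply Df.mem | apply Df.eq
    | apply Df.ex | apply Df.and | apply Df.or | apply Df.iff | apply Df.not | apply Df.all
    | apply Df.imp
  obtain ⟨U, hU⟩ := unionE H C
  obtain ⟨d, hd, hd'⟩ := lev_gen H hD ⟨U, by
      rintro x ⟨_, b, hb, _, h⟩
      exact (hU x).2 ⟨b, hb, h⟩⟩ (fun s h => h.1) (by
      rintro r s hr ⟨hs, b, hb, hbL, h⟩ hrs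
      exact ⟨hr, b, hb, hbL, lev_tr H hbL h hrs⟩)
  refine ⟨d, hd, fun x => (hd' x).trans ?_⟩
  constructor
  · rintro ⟨c, ⟨hc, b, hb, hbL, hcb⟩, hx⟩
    exact ⟨b, hb, hbL, lev_sup H hbL hcb hx⟩
  · rintro ⟨s, hs, hsL, hxs⟩
    obtain ⟨r, ⟨hr, hrs⟩, hxr⟩ := (lev_eq H hsL x).1 hxs
    exact ⟨r, ⟨hr, s, hs, hsL, hrs⟩, hxr⟩

theorem lev_coll (H : SatZF ⟨X, E, fun _ => False⟩) {R : X → X → Prop} (hR : DP2 E R) (a : X)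
    (h : ∀ x, E x a → ∃ s, Lev E s ∧ R x s) :
    ∃ u, Lev E u ∧ ∀ x, E x a → ∃ s, E s u ∧ Lev E s ∧ R x s := by
  have hD : DP2 E (fun x s => (Lev E s ∧ R x s) ∧ ∀ r, Lev E r → R x r → ¬ E r s) := by
    unfold DP2
    repeat' first
    | exact tmv _ | exact tmid _ | apply Lev.df | apply Df.mem | apply Df.eq | apply hR.df
    | apply Df.ex | apply Df.and | apply Df.or | apply Df.iff | apply Df.not | apply Df.all
    | apply Df.imp
  have hmin : ∀ x, E x a → ∃ s, (Lev E s ∧ R x s) ∧ ∀ r, Lev E r → R x r → ¬ E r s := by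
    intro x hx
    have hP : DP1 E (R x) := hR.df (tmid _) (tmv _)
    obtain ⟨s, h1, h2, h3⟩ := lev_min H hP (h x hx)
    exact ⟨s, ⟨h1, h2⟩, h3⟩
  obtain ⟨B, hB⟩ := replD H hD a (fun x hx => by
    obtain ⟨s, hs, hs'⟩ := hmin x hx
    refine ⟨s, ⟨hs, hs'⟩, fun t ht => ?_⟩
    rcases lev_cmp H hs.1 ht.1.1 with h | h | h
    · exact (ht.2 s hs.1 hs.2 h).elim
    · exact h.symm
    · exact (hs' t ht.1.1 ht.1.2 h).elim)
  obtain ⟨u, hu, hBu⟩ := lev_above H B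
  refine ⟨u, hu, fun x hx => ?_⟩
  obtain ⟨s, hs⟩ := hmin x hx
  exact ⟨s, hBu s ((hB s).2 ⟨x, hx, hs⟩) hs.1.1, hs.1.1, hs.1.2⟩

theorem cover (H : SatZF ⟨X, E, fun _ => False⟩) (x : X) : ∃ s, Lev E s ∧ E x s := by
  by_contra hc
  obtain ⟨T, hT, hT'⟩ := trans_cl H x
  obtain ⟨a, ha⟩ := insertE H T x
  have hD : DP1 E (fun x => ¬ ∃ s, Lev E s ∧ E x s) := by
    unfold DP1
    repeat' first
    | exact tmv _ | exact tmid _ | apply Lev.df | apply Df.mem | apply Df.eq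
    | apply Df.ex | apply Df.and | apply Df.or | apply Df.iff | apply Df.not | apply Df.all
    | apply Df.imp
  obtain ⟨y, hy, hyc, hmin⟩ := foundD H hD a ⟨x, (ha x).2 (.inr rfl), hc⟩
  have hR : DP2 E E := Df.mem (tmv _) (tmv _)
  obtain ⟨u, hu, hyu⟩ := lev_coll H hR y (fun z hz => by
    by_contra hc
    refine hmin z ((ha z).2 (.inl ?_)) hc hz
    rcases (ha y).1 hy with h | rfl
    · exact hT' y z hz h
    · exact hT z hz)
  obtain ⟨B, hB⟩ := pairE H u u
  obtain ⟨u', hu', hBu⟩ := lev_above H B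
  refine hyc ⟨u', hu', lev_sup H hu' (hBu u ((hB u).2 (.inl rfl)) hu) fun z hz => ?_⟩
  obtain ⟨s, hs, _, hzs⟩ := hyu z hz
  exact lev_tr H hu hs hzs

theorem lev_big (H : SatZF ⟨X, E, fun _ => False⟩) : ¬ Sm E (Lev E) := by
  rintro ⟨B, hB⟩
  obtain ⟨u, hu, hBu⟩ := lev_above H B
  exact irr H u (hBu u (hB u hu) hu)

end Levels

section Split

variable {X : Type 1} {E : X → X → Prop} {Q : X → X → Prop}

/-- Levels whose `Q`-trace on `r` is `S`. -/
def Kc (E Q : X → X → Prop) (r S y : X) : Prop := Lev E y ∧ ∀ m, E m r → (Q y m ↔ E m S)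

/-- The class `Kc r S` is unbounded. -/
def BigK (E Q : X → X → Prop) (r S : X) : Prop := ∀ b, ∃ y, Kc E Q r S y ∧ ¬ E y b

/-- `d` reflects the large traces on `w`. -/
def Phi (E Q : X → X → Prop) (w d : X) : Prop :=
  Lev E w → (E w d ∧ ∀ S, (∀ u, E u S → E u w) → BigK E Q w S →
    ∃ z, E z d ∧ E w z ∧ Kc E Q w S z)

/-- Reflecting levels. -/
def Good (E Q : X → X → Prop) (c : X) : Prop :=
  Lev E c ∧ ∀ r, E r c → Lev E r → ∀ S, (∀ u, E u S → E u r) → BigK E Q r S →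
    ∃ z, E z c ∧ E r z ∧ Kc E Q r S z

/-- The splitting class. -/
def As (E Q : X → X → Prop) (x : X) : Prop :=
  Lev E x ∧ ∃ c, (Good E Q c ∧ E c x ∧ ∀ d, Good E Q d → E d x → E d c ∨ d = c) ∧
    ∃ S, Kc E Q c S x ∧ ∀ y, Kc E Q c S y → E c y → ¬ E y x

theorem Kc.df (hQ : Rel2 E Q) {ι κ : Type*} {c : κ → X} {r s t : (ι → X) → X} (hr : Tm c r)
    (hs : Tm c s) (ht : Tm c t) : Df E c (fun v => Kc E Q (r v) (s v) (t v)) := by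
  have h0 : Df E (Empty.elim) (fun v : Fin 3 → X => Kc E Q (v 0) (v 1) (v 2)) := by
    unfold Kc
    repeat' first
    | exact tmv _ | exact tmid _ | apply Lev.df | apply hQ.df | apply Df.mem | apply Df.eq
    | apply Df.ex | apply Df.and | apply Df.or | apply Df.iff | apply Df.not | apply Df.all
    | apply Df.imp
  refine h0.sub0 (fun i => ![r, s, t] i) (fun i => ?_)
  fin_cases i <;> assumption

theorem BigK.df (hQ : Rel2 E Q) {ι κ : Type*} {c : κ → X} {r s : (ι → X) → X} (hr : Tm c r)
    (hs : Tm c s) : Df E c (fun v => BigK E Q (r v) (s v)) := by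
  have h0 : Df E (Empty.elim) (fun v : Fin 2 → X => BigK E Q (v 0) (v 1)) := by
    unfold BigK
    repeat' first
    | exact tmv _ | exact tmid _ | apply Kc.df hQ | apply Df.mem | apply Df.eq
    | apply Df.ex | apply Df.and | apply Df.or | apply Df.iff | apply Df.not | apply Df.all
    | apply Df.imp
  refine h0.sub0 (fun i => ![r, s] i) (fun i => ?_)
  fin_cases i <;> assumption

theorem Phi.df (hQ : Rel2 E Q) {ι κ : Type*} {c : κ → X} {r s : (ι → X) → X} (hr : Tm c r)
    (hs : Tm c s) : Df E c (fun v => Phi E Q (r v) (s v)) := by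
  have h0 : Df E (Empty.elim) (fun v : Fin 2 → X => Phi E Q (v 0) (v 1)) := by
    unfold Phi
    repeat' first
    | exact tmv _ | exact tmid _ | apply Lev.df | apply BigK.df hQ | apply Kc.df hQ
    | apply Df.mem | apply Df.eq
    | apply Df.ex | apply Df.and | apply Df.or | apply Df.iff | apply Df.not | apply Df.all
    | apply Df.imp
  refine h0.sub0 (fun i => ![r, s] i) (fun i => ?_)
  fin_cases i <;> assumption

theorem Good.df (hQ : Rel2 E Q) {ι κ : Type*} {c : κ → X} {r : (ι → X) → X} (hr : Tm c r) :
    Df E c (fun v => Good E Q (r v)) := by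
  have h0 : Df E (Empty.elim) (fun v : Unit → X => Good E Q (v ())) := by
    unfold Good
    repeat' first
    | exact tmv _ | exact tmid _ | apply Lev.df | apply BigK.df hQ | apply Kc.df hQ
    | apply Df.mem | apply Df.eq
    | apply Df.ex | apply Df.and | apply Df.or | apply Df.iff | apply Df.not | apply Df.all
    | apply Df.imp
  exact h0.sub0 (fun _ => r) (fun i => hr)

theorem As.df (hQ : Rel2 E Q) {ι κ : Type*} {c : κ → X} {r : (ι → X) → X} (hr : Tm c r) :
    Df E c (fun v => As E Q (r v)) := by
  have h0 : Df E (Empty.elim) (fun v : Unit → X => As E Q (v ())) := by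
    unfold As
    repeat' first
    | exact tmv _ | exact tmid _ | apply Good.df hQ | apply Lev.df | apply BigK.df hQ
    | apply Kc.df hQ | apply Df.mem | apply Df.eq
    | apply Df.ex | apply Df.and | apply Df.or | apply Df.iff | apply Df.not | apply Df.all
    | apply Df.imp
  exact h0.sub0 (fun _ => r) (fun i => hr)


theorem refineK (H : SatZF ⟨X, E, fun _ => False⟩) (hQ : Rel2 E Q) {P : X → Prop} (hP : DP1 E P)
    (hbig : ¬ Sm E (fun x => Lev E x ∧ P x)) (s : X)
    (hinv : ∀ y z, Lev E y → Lev E z → P y → (∀ m, E m s → (Q y m ↔ Q z m)) → P z) :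
    ∃ S, (∀ u, E u S → E u s) ∧ BigK E Q s S ∧ ∀ z, Kc E Q s S z → P z := by
  by_contra hc
  obtain ⟨p, hp⟩ := powE H s
  have hR : DP2 E (fun S x => Kc E Q s S x ∧ P x) := by
    unfold DP2
    repeat' first
    | exact tmv _ | exact tmid _ | apply hP.df | apply Kc.df hQ | apply Df.and
  obtain ⟨B, hB⟩ := union_small H hR p (fun S hS => by
    rw [hp] at hS
    by_contra hns
    apply hc
    refine ⟨S, hS, fun b => ?_, fun z hz => ?_⟩
    · by_contra hcb
      push Not at hcb
      exact hns ⟨b, fun x hx => hcb x hx.1⟩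
    · have : ∃ y, Kc E Q s S y ∧ P y := by
        by_contra hcy
        push Not at hcy
        exact hns ⟨s, fun x hx => (hcy x hx.1 hx.2).elim⟩
      obtain ⟨y, hy, hPy⟩ := this
      exact hinv y z hy.1 hz.1 hPy fun m hm => (hy.2 m hm).trans (hz.2 m hm).symm)
  apply hbig
  refine ⟨B, fun x hx => hB x ?_⟩
  have hS : DP1 E (fun m => Q x m) := hQ.df (tmid _) (tmv _)
  obtain ⟨S, hS⟩ := sepD H hS s
  exact ⟨S, (hp S).2 fun w hw => ((hS w).1 hw).1,
    ⟨hx.1, fun m hm => ⟨fun h => (hS m).2 ⟨hm, h⟩, fun h => ((hS m).1 h).2⟩⟩, hx.2⟩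

theorem refineKK (H : SatZF ⟨X, E, fun _ => False⟩) (hQ : Rel2 E Q) {r S s : X} (hB : BigK E Q r S) (hs : Lev E s)
    (hrs : E r s) :
    ∃ S', (∀ u, E u S' → E u s) ∧ BigK E Q s S' ∧ ∀ z, Kc E Q s S' z → Kc E Q r S z := by
  refine refineK H hQ (P := fun z => Kc E Q r S z) (Kc.df hQ (tmid _) (tmid _) (tmv _)) ?_ s ?_
  · rintro ⟨b, hb⟩
    obtain ⟨y, hy, hyb⟩ := hB b
    exact hyb (hb y ⟨hy.1, hy⟩)
  · intro y z hy hz hK hag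
    exact ⟨hz, fun m hm => (hag m (lev_tr H hs hrs hm)).symm.trans (hK.2 m hm)⟩

theorem bigK_above (H : SatZF ⟨X, E, fun _ => False⟩) {r S : X} (hB : BigK E Q r S) (hr : Lev E r) :
    ∃ z, E r z ∧ Kc E Q r S z := by
  obtain ⟨a, ha⟩ := insertE H r r
  obtain ⟨y, hy, hya⟩ := hB a
  refine ⟨y, ?_, hy⟩
  rcases lev_cmp H hr hy.1 with h | h | h
  · exact h
  · exact (hya ((ha y).2 (.inr h.symm))).elim
  · exact (hya ((ha y).2 (.inl h))).elim

theorem phi_ex (H : SatZF ⟨X, E, fun _ => False⟩) (hQ : Rel2 E Q) (w : X) : ∃ d, Lev E d ∧ Phi E Q w d := by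
  by_cases hw : Lev E w
  · obtain ⟨p, hp⟩ := powE H w
    have hR : DP2 E (fun S z => BigK E Q w S → (E w z ∧ Kc E Q w S z)) := by
      unfold DP2
      repeat' first
      | exact tmv _ | exact tmid _ | apply BigK.df hQ | apply Kc.df hQ | apply Df.mem
      | apply Df.and | apply Df.imp
    obtain ⟨u, hu, hu'⟩ := lev_coll H hR p (fun S _ => by
      by_cases hB : BigK E Q w S
      · obtain ⟨z, hz⟩ := bigK_above H hB hw
        exact ⟨z, hz.2.1, fun _ => hz⟩
      · exact ⟨w, hw, fun h => (hB h).elim⟩)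
    obtain ⟨q, hq⟩ := pairE H u w
    obtain ⟨d, hd, hd'⟩ := lev_above H q
    refine ⟨d, hd, fun _ => ⟨hd' w ((hq w).2 (.inr rfl)) hw, fun S hS hB => ?_⟩⟩
    obtain ⟨z, hzu, _, hz⟩ := hu' S ((hp S).2 hS)
    exact ⟨z, lev_tr H hd (hd' u ((hq u).2 (.inl rfl)) hu) hzu, hz hB⟩
  · obtain ⟨d, hd, _⟩ := cover H w
    exact ⟨d, hd, fun h => (hw h).elim⟩

theorem good_above (H : SatZF ⟨X, E, fun _ => False⟩) (hQ : Rel2 E Q) (x : X) : ∃ c, Good E Q c ∧ E x c := by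
  have hG : DP2 E (fun w d => (Lev E d ∧ Phi E Q w d) ∧ ∀ e, Lev E e → Phi E Q w e → ¬ E e d) := by
    unfold DP2
    repeat' first
    | exact tmv _ | exact tmid _ | apply Lev.df | apply Phi.df hQ | apply Df.mem
    | apply Df.and | apply Df.not | apply Df.all | apply Df.imp
  have hGf : ∀ w, ∃! d, (Lev E d ∧ Phi E Q w d) ∧ ∀ e, Lev E e → Phi E Q w e → ¬ E e d := by
    intro w
    obtain ⟨d, h1, h2, h3⟩ := lev_min H (P := fun d => Phi E Q w d)
      (Phi.df hQ (tmid _) (tmv _)) (phi_ex H hQ w)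
    refine ⟨d, ⟨⟨h1, h2⟩, h3⟩, fun t ht => ?_⟩
    rcases lev_cmp H h1 ht.1.1 with h | h | h
    · exact (ht.2 d h1 h2 h).elim
    · exact h.symm
    · exact (h3 t ht.1.1 ht.1.2 h).elim
  obtain ⟨x₀, hx₀, hxx₀⟩ := cover H x
  obtain ⟨C, hC, hC'⟩ := iter H hG hGf x₀
  obtain ⟨d, hd, hd'⟩ := lev_union H C
  refine ⟨d, ⟨hd, fun r hr hrL S hS hB => ?_⟩, (hd' x).2 ⟨x₀, hC, hx₀, hxx₀⟩⟩
  obtain ⟨s, hsC, hsL, hrs⟩ := (hd' r).1 hr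
  obtain ⟨S', hS', hB', hK⟩ := refineKK H hQ hB hsL hrs
  obtain ⟨δ, hδ, _⟩ := hGf s
  have hδC := hC' s δ hsC hδ
  obtain ⟨z, hzδ, hsz, hz⟩ := (hδ.1.2 hsL).2 S' hS' hB'
  exact ⟨z, (hd' z).2 ⟨δ, hδC, hδ.1.1, hzδ⟩, lev_tr H hz.1 hsz hrs, hK z hz⟩

theorem split (H : SatZF ⟨X, E, fun _ => False⟩) (hQ : Rel2 E Q) (m : X) (hbig : ¬ Sm E (fun x => Lev E x ∧ Q x m)) :
    (¬ Sm E (fun x => Lev E x ∧ Q x m ∧ As E Q x)) ∧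
    (¬ Sm E (fun x => Lev E x ∧ Q x m ∧ ¬ As E Q x)) := by
  have key : ∀ b, ∃ x z, (Lev E x ∧ Q x m ∧ As E Q x ∧ ¬ E x b) ∧
      (Lev E z ∧ Q z m ∧ ¬ As E Q z ∧ ¬ E z b) := by
    intro b
    obtain ⟨q, hq⟩ := pairE H m b
    obtain ⟨c, hc, hqc⟩ := good_above H hQ q
    have hmc : E m c := lev_tr H hc.1 hqc ((hq m).2 (.inl rfl))
    have hbc : E b c := lev_tr H hc.1 hqc ((hq b).2 (.inr rfl))
    have hG : DP1 E (fun d => Good E Q d ∧ E c d) :=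
      (Good.df hQ (tmv _)).and (Df.mem (tmid _) (tmv _))
    obtain ⟨c', hc'L, ⟨hc', hcc'⟩, hmin⟩ := lev_min H hG (by
      obtain ⟨d, hd⟩ := good_above H hQ c
      exact ⟨d, hd.1.1, hd⟩)
    have hlast : ∀ d, Good E Q d → E d c' → E d c ∨ d = c := by
      intro d hd hdc
      rcases lev_cmp H hd.1 hc.1 with h | h | h
      · exact .inl h
      · exact .inr h
      · exact (hmin d hd.1 ⟨hd, h⟩ hdc).elim
    obtain ⟨S, hS, hB, hK⟩ := refineK H hQ (P := fun z => Q z m) (hQ.df (tmv _) (tmid _)) hbig c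
      (fun y z _ _ hy hag => (hag m hmc).1 hy)
    obtain ⟨z₀, hz₀, hcz₀, hz₀K⟩ := hc'.2 c hcc' hc.1 S hS hB
    have hKD : DP1 E (fun x => Kc E Q c S x ∧ E c x) :=
      (Kc.df hQ (tmid _) (tmid _) (tmv _)).and (Df.mem (tmid _) (tmv _))
    obtain ⟨x, hx, ⟨hxK, hcx⟩, hxmin⟩ := lev_min H hKD ⟨z₀, hz₀K.1, hz₀K, hcz₀⟩
    have hxc' : E x c' := by
      rcases lev_cmp H hx hz₀K.1 with h | h | h
      · exact lev_tr H hc'L hz₀ h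
      · exact h ▸ hz₀
      · exact (hxmin z₀ hz₀K.1 ⟨hz₀K, hcz₀⟩ h).elim
    have hout : ∀ y, E c y → ¬ E y b := fun y h1 h2 => asymm H h1 (lev_tr H hc.1 hbc h2)
    obtain ⟨S', hS', hB', hK'⟩ := refineKK H hQ hB hx hcx
    obtain ⟨z, hzc', hxz, hz⟩ := hc'.2 x hxc' hx S' hS' hB'
    have hzK := hK' z hz
    have hcz : E c z := lev_tr H hz.1 hxz hcx
    refine ⟨x, z, ⟨hx, hK x hxK, ⟨hx, c, ⟨hc, hcx, fun d hd hdx => hlast d hd (lev_tr H hc'L hxc' hdx)⟩,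
      S, hxK, fun y hy hcy => hxmin y hy.1 ⟨hy, hcy⟩⟩, hout x hcx⟩, ⟨hz.1, hK z hzK, ?_, hout z hcz⟩⟩
    rintro ⟨_, d, ⟨hd, hdz, hdl⟩, T, hT, hTm⟩
    have hdc : d = c := by
      rcases hlast d hd (lev_tr H hc'L hzc' hdz) with h | h
      · rcases hdl c hc hcz with h' | h'
        · exact (asymm H h h').elim
        · exact h'.symm
      · exact h
    subst hdc
    exact hTm x ⟨hx, fun u hu => (hxK.2 u hu).trans ((hzK.2 u hu).symm.trans (hT.2 u hu))⟩ hcx hxz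
  constructor
  · rintro ⟨b, hb⟩
    obtain ⟨x, z, hx, hz⟩ := key b
    exact hx.2.2.2 (hb x ⟨hx.1, hx.2.1, hx.2.2.1⟩)
  · rintro ⟨b, hb⟩
    obtain ⟨x, z, hx, hz⟩ := key b
    exact hz.2.2.2 (hb z ⟨hz.1, hz.2.1, hz.2.2.1⟩)

end Split

section Forcing

variable {X : Type 1} {E : X → X → Prop}

theorem Df.supp {ι κ : Type*} {c : κ → X} {P : (ι → X) → Prop} (h : Df E c P) :
    ∃ s : Finset ι, ∀ v w : ι → X, (∀ i ∈ s, v i = w i) → (P v → P w) := by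
  classical
  obtain ⟨Q, hQ, hPQ⟩ := h.unparam
  obtain ⟨n, e, R, hR, he, hQR⟩ := hQ.fin
  refine ⟨Finset.univ.biUnion fun i => (e i).elim (fun j => {j}) (fun _ => ∅), fun v w hvw hP => ?_⟩
  rw [hPQ, hQR] at hP ⊢
  convert hP using 1
  funext i
  simp only [Function.comp]
  rcases hi : e i with j | k
  · refine (hvw j ?_).symm
    rw [Finset.mem_biUnion]
    exact ⟨i, Finset.mem_univ _, by simp [hi]⟩
  · rfl

/-- Large conditions. -/
def Big (E : X → X → Prop) (D : (ℕ → X) → Prop) : Prop :=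
  ¬ Sm E (fun x => Lev E x ∧ ∃ v, v 0 = x ∧ D v)

/-- Evaluation of a name. -/
def Tv (t : ℕ ⊕ X) (v : ℕ → X) : X := Sum.elim v id t

theorem tmTv (t : ℕ ⊕ X) : Tm id (fun v => Tv t v) := ⟨t, fun _ => rfl⟩

theorem tmTv' (t : ℕ ⊕ X) {β : Type*} (g : ℕ → β) :
    Tm id (fun v : β → X => Tv t (fun i => v (g i))) := by
  rcases t with i | x
  · exact tmv (g i)
  · exact tmid x

theorem proj_df [Nonempty X] {β : Type*} {D : (β → X) → (ℕ → X) → Prop}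
    (hD : Df E id (fun w : β ⊕ ℕ → X => D (fun i => w (.inl i)) (fun i => w (.inr i)))) (j : β) :
    Df E id (fun u : β → X => Lev E (u j) ∧ ∃ v, v 0 = u j ∧ D u v) := by
  refine (Lev.df (tmv _)).and ?_
  have := Df.exInf (ι := β) (β := ℕ) (P := fun w => w (.inr 0) = w (.inl j) ∧
    D (fun i => w (.inl i)) (fun i => w (.inr i))) ((Df.eq (tmv _) (tmv _)).and hD)
  exact this

theorem proj_df1 [Nonempty X] {D : (ℕ → X) → Prop} (hD : Df E id D) :
    DP1 E (fun x => Lev E x ∧ ∃ v, v 0 = x ∧ D v) :=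
  proj_df (β := Unit) (D := fun _ v => D v) (hD.sub tmid (fun i v => v (Sum.inr i)) fun _ => tmv _) ()


theorem big_or (H : SatZF ⟨X, E, fun _ => False⟩) {D P : (ℕ → X) → Prop} (hD : Big E D) :
    Big E (fun v => D v ∧ P v) ∨ Big E (fun v => D v ∧ ¬ P v) := by
  by_contra hc
  unfold Big at hc hD
  push Not at hc
  obtain ⟨b, hb⟩ := Sm.or H hc.1 hc.2
  refine hD ⟨b, fun x hx => hb x ?_⟩
  obtain ⟨hx, v, hv, hDv⟩ := hx
  by_cases hP : P v
  · exact .inl ⟨hx, v, hv, hDv, hP⟩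
  · exact .inr ⟨hx, v, hv, hDv, hP⟩

theorem step_henkin (H : SatZF ⟨X, E, fun _ => False⟩) {D : (ℕ → X) → Prop} (hD : Df E id D) (hB : Big E D)
    {Q : (ℕ → X) → X → Prop}
    (hQ : Df E id (fun w : Option ℕ → X => Q (fun i => w (some i)) (w none))) :
    ∃ D' : (ℕ → X) → Prop, Df E id D' ∧ Big E D' ∧ (∀ v, D' v → D v) ∧
      ((∀ v, D' v → ¬ ∃ x, Q v x) ∨ ∃ k, ∀ v, D' v → Q v (v k)) := by
  classical
  have hex : Df E id (fun v => ∃ x, Q v x) := Df.ex hQ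
  rcases big_or H (P := fun v => ∃ x, Q v x) hB with h | h
  · obtain ⟨s, hs⟩ := hD.supp
    obtain ⟨s', hs'⟩ := hQ.supp
    obtain ⟨k, hk⟩ := Infinite.exists_notMem_finset
      (insert 0 (s ∪ s'.biUnion fun o => o.elim ∅ fun j => {j}))
    simp only [Finset.mem_insert, Finset.mem_union, not_or] at hk
    obtain ⟨hk0, hks, hks'⟩ := hk
    refine ⟨fun v => D v ∧ Q v (v k), hD.and ?_, ?_, fun v h => h.1, .inr ⟨k, fun v h => h.2⟩⟩
    · exact hQ.sub tmid (fun o v => o.elim (v k) v) (by rintro (_ | i) <;> exact tmv _)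
    · rintro ⟨b, hb⟩
      refine h ⟨b, fun x hx => hb x ?_⟩
      obtain ⟨hx, v, hv, hDv, y, hy⟩ := hx
      refine ⟨hx, Function.update v k y, ?_, ?_, ?_⟩
      · rw [Function.update_of_ne (Ne.symm hk0)]; exact hv
      · refine hs _ _ (fun i hi => ?_) hDv
        rw [Function.update_of_ne]
        rintro rfl; exact hks hi
      · rw [Function.update_self]
        refine hs' (fun o => o.elim y v) (fun o => o.elim y (Function.update v k y)) ?_ hy
        rintro (_ | i) hi
        · rfl
        · simp only [Option.elim]
          rw [Function.update_of_ne]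
          rintro rfl
          apply hks'
          rw [Finset.mem_biUnion]
          exact ⟨some i, hi, by simp⟩
  · exact ⟨_, hD.and hex.not, h, fun v h => h.1, .inl fun v h => h.2⟩

theorem step_bdd (H : SatZF ⟨X, E, fun _ => False⟩) [Nonempty X] {D : (ℕ → X) → Prop} (hD : Df E id D) (hB : Big E D)
    (t : ℕ ⊕ X) (a : X) :
    ∃ D' : (ℕ → X) → Prop, Df E id D' ∧ Big E D' ∧ (∀ v, D' v → D v) ∧
      ((∀ v, D' v → ¬ E (Tv t v) a) ∨ ∃ b, E b a ∧ ∀ v, D' v → Tv t v = b) := by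
  have hm : Df E id (fun v => E (Tv t v) a) := Df.mem (tmTv t) (tmid a)
  rcases big_or H (P := fun v => E (Tv t v) a) hB with h | h
  · have : ∃ b, E b a ∧ Big E (fun v => D v ∧ Tv t v = b) := by
      by_contra hc
      push Not at hc
      have hR : DP2 E (fun b x => Lev E x ∧ ∃ v, v 0 = x ∧ (D v ∧ Tv t v = b)) := by
        refine proj_df (β := Bool) (D := fun u v => D v ∧ Tv t v = u true) ?_ false
        refine Df.and (hD.sub tmid (fun i v => v (Sum.inr i)) fun _ => tmv _) (Df.eq ?_ (tmv _))
        exact tmTv' t _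
      obtain ⟨B, hB'⟩ := union_small H hR a (fun b hb => not_not.1 (hc b hb))
      refine h ⟨B, fun x hx => hB' x ?_⟩
      obtain ⟨hx, v, hv, hDv, hva⟩ := hx
      exact ⟨_, hva, hx, v, hv, hDv, rfl⟩
    obtain ⟨b, hb, hbig⟩ := this
    exact ⟨_, hD.and (Df.eq (tmTv t) (tmid b)), hbig, fun v h => h.1, .inr ⟨b, hb, fun v h => h.2⟩⟩
  · exact ⟨_, hD.and hm.not, h, fun v h => h.1, .inl fun v h => h.2⟩

theorem coding (H : SatZF ⟨X, E, fun _ => False⟩) {n : ℕ} (P : X → X → (Fin n → X) → Prop)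
    (hP : Df E Empty.elim (fun v : Option (Option (Fin n)) → X =>
      P (v none) (v (some none)) (fun i => v (some (some i))))) (p : X) (a : Fin n → X) :
    ∃ (Q : X → X → Prop) (q : X), Rel2 E Q ∧ ∀ x, P x p a ↔ Q x q := by
  induction n generalizing p with
  | zero =>
    refine ⟨fun x y => P x y Fin.elim0, p, ?_, fun x => by rw [Subsingleton.elim a Fin.elim0]⟩
    refine (hP.sub0 (fun o v => match o with
      | none => v true
      | some none => v false
      | some (some i) => i.elim0) ?_).congr fun v => ?_
    · rintro (_ | _ | i)
      · exact tmv _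
      · exact tmv _
      · exact i.elim0
    · apply iff_of_eq
      congr 1
  | succ n ih =>
    obtain ⟨q, hq⟩ := pr_ex H p (a 0)
    obtain ⟨Q, q', hQ, hQ'⟩ := ih (fun x q a' => ∃ p b, IsPr E q p b ∧ P x p (Fin.cons b a')) (by
      apply Df.ex
      apply Df.ex
      refine (IsPr.df (tmv _) (tmv _) (tmv _)).and ?_
      refine (hP.sub0 (ι := Option (Option (Option (Option (Fin n))))) (fun o v => match o with
        | none => v (some (some none))
        | some none => v (some none)
        | some (some i) => Fin.cases (motive := fun _ => X) (v none)
            (fun j => v (some (some (some (some j))))) i) ?_).congr fun v => ?_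
      · rintro (_ | _ | i)
        · exact tmv _
        · exact tmv _
        · refine Fin.cases ?_ (fun j => ?_) i
          · exact tmv _
          · exact tmv _
      · apply iff_of_eq
        rfl) q (Fin.tail a)
    refine ⟨Q, q', hQ, fun x => ?_⟩
    rw [← hQ']
    constructor
    · intro h
      exact ⟨p, a 0, hq, by rwa [Fin.cons_self_tail]⟩
    · rintro ⟨p', b, hp', h⟩
      obtain ⟨rfl, rfl⟩ := pr_inj H hq hp'
      rwa [Fin.cons_self_tail] at h

theorem coding1 (H : SatZF ⟨X, E, fun _ => False⟩) [Nonempty X] {D : X → Prop} (hD : DP1 E D) :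
    ∃ (Q : X → X → Prop) (q : X), Rel2 E Q ∧ ∀ x, D x ↔ Q x q := by
  obtain ⟨Q, hQ, hPQ⟩ := hD.unparam
  obtain ⟨n, e, R, hR, he, hQR⟩ := hQ.fin
  let x0 : X := Classical.arbitrary X
  obtain ⟨Q', q, h1, h2⟩ := coding H (fun x _ a => R (fun i => (e i).elim (fun _ => x) fun _ => a i))
    (hR.sub0 (fun i v => (e i).elim (fun _ => v none) fun _ => v (some (some i))) (by
      intro i
      rcases e i with j | j <;> exact tmv _)) x0 (fun i => (e i).elim (fun _ => x0) id)
  refine ⟨Q', q, h1, fun x => ?_⟩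
  rw [← h2]
  refine (hPQ (fun _ => x)).trans ?_
  rw [hQR]
  apply iff_of_eq
  congr 1
  funext i
  simp only [Function.comp]
  rcases e i with j | j <;> rfl

theorem step_split (H : SatZF ⟨X, E, fun _ => False⟩) [Nonempty X] {D : (ℕ → X) → Prop} (hD : Df E id D) (hB : Big E D) :
    ∃ A : X → Prop, Df E Empty.elim (fun v : Unit → X => A (v ())) ∧
      ∀ b : Bool, Big E (fun v => D v ∧ (A (v 0) ↔ b = true)) := by
  obtain ⟨Q, q, hQ, hQ'⟩ := coding1 H (proj_df1 hD)
  obtain ⟨h1, h2⟩ := split H hQ q (by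
    rintro ⟨b, hb⟩
    exact hB ⟨b, fun x hx => hb x ⟨hx.1, (hQ' x).1 hx⟩⟩)
  refine ⟨As E Q, As.df hQ (tmv _), fun b => ?_⟩
  cases b
  · rintro ⟨b, hb⟩
    refine h2 ⟨b, fun x hx => hb x ?_⟩
    obtain ⟨_, v, hv, hDv⟩ := (hQ' x).2 hx.2.1
    exact ⟨hx.1, v, hv, hDv, by simpa [hv] using hx.2.2⟩
  · rintro ⟨b, hb⟩
    refine h1 ⟨b, fun x hx => hb x ?_⟩
    obtain ⟨_, v, hv, hDv⟩ := (hQ' x).2 hx.2.1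
    exact ⟨hx.1, v, hv, hDv, by simpa [hv] using hx.2.2⟩

end Forcing

open FirstOrder FirstOrder.Language

section Generic

variable {X : Type 1} {E : X → X → Prop}

/-- Properties of the generic filter. -/
structure Gen (E : X → X → Prop) (F : ((ℕ → X) → Prop) → Prop) : Prop where
  mono : ∀ {P Q : (ℕ → X) → Prop}, F P → (∀ v, P v → Q v) → F Q
  and : ∀ {P Q : (ℕ → X) → Prop}, F P → F Q → F (fun v => P v ∧ Q v)
  nofalse : ∀ {P : (ℕ → X) → Prop}, F P → ∃ v, P v
  henkin : ∀ (Q : (ℕ → X) → X → Prop),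
    Df E id (fun w : Option ℕ → X => Q (fun i => w (some i)) (w none)) →
    F (fun v => ¬ ∃ x, Q v x) ∨ ∃ k, F (fun v => Q v (v k))
  bdd : ∀ (t : ℕ ⊕ X) (a : X), F (fun v => ¬ E (Tv t v) a) ∨ ∃ b, E b a ∧ F (fun v => Tv t v = b)
  large : ∀ a, ¬ F (fun v => v 0 = a)

variable {F : ((ℕ → X) → Prop) → Prop} (G : Gen E F)

theorem Gen.dec [Nonempty X] (G : Gen E F) {P : (ℕ → X) → Prop} (hP : Df E id P) :
    F P ∨ F (fun v => ¬ P v) := by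
  rcases G.henkin (fun v _ => P v) (hP.sub tmid (fun i v => v (some i)) fun _ => tmv _) with h | ⟨k, h⟩
  · exact .inr (G.mono h fun v hv hP => hv ⟨Classical.arbitrary X, hP⟩)
  · exact .inl h

theorem Gen.true (G : Gen E F) : F (fun _ => True) := by
  rcases G.henkin (fun _ _ => False) Df.fls with h | ⟨_, h⟩ <;> exact G.mono h fun _ _ => trivial

/-- Setoid of names. -/
def gset (G : Gen E F) : Setoid (ℕ ⊕ X) where
  r s t := F (fun v => Tv s v = Tv t v)
  iseqv := ⟨fun _ => G.mono G.true fun _ _ => rfl, fun h => G.mono h fun _ h => h.symm,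
    fun h h' => G.mono (G.and h h') fun _ h => h.1.trans h.2⟩

/-- The carrier of the extension. -/
def GQ (G : Gen E F) : Type 1 := Quotient (gset G)

/-- Class of a name. -/
def gmk (G : Gen E F) (t : ℕ ⊕ X) : GQ G := Quotient.mk (gset G) t

theorem gmk_eq (G : Gen E F) {s t : ℕ ⊕ X} : gmk G s = gmk G t ↔ F (fun v => Tv s v = Tv t v) :=
  Quotient.eq (r := gset G)

theorem gmk_surj (G : Gen E F) (q : GQ G) : ∃ t, gmk G t = q := Quotient.exists_rep q

/-- Membership of the extension. -/
def gmem (G : Gen E F) (p q : GQ G) : Prop :=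
  ∃ s t, gmk G s = p ∧ gmk G t = q ∧ F (fun v => E (Tv s v) (Tv t v))

theorem gmem_iff (G : Gen E F) {s t : ℕ ⊕ X} :
    gmem G (gmk G s) (gmk G t) ↔ F (fun v => E (Tv s v) (Tv t v)) := by
  constructor
  · rintro ⟨s', t', hs, ht, h⟩
    rw [gmk_eq] at hs ht
    refine G.mono (G.and (G.and hs ht) h) ?_
    rintro v ⟨⟨h1, h2⟩, h3⟩
    rwa [h1, h2] at h3
  · intro h
    exact ⟨s, t, rfl, rfl, h⟩

theorem term_var {α : Type*} (t : LSP.Term α) : ∃ a, t = Term.var a := by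
  cases t with
  | var a => exact ⟨a, rfl⟩
  | func f _ => exact Empty.elim f

theorem los_df {α : Type*} {n : ℕ} (φ : LSP.BoundedFormula α n) (s : α → ℕ ⊕ X)
    (xs : Fin n → ℕ ⊕ X) :
    Df E id (fun v => @BoundedFormula.Realize LSP X (St E) α n φ
      (fun a => Tv (s a) v) (fun i => Tv (xs i) v)) := by
  refine ⟨φ.toFormula.relabel (Sum.elim s xs), fun v => ?_⟩
  rw [Rz_relabel]
  let := St E
  refine (BoundedFormula.realize_toFormula φ _).trans ?_
  exact Iff.rfl

theorem los [Nonempty X] (G : Gen E F) {α : Type*} {n : ℕ} (φ : LSP.BoundedFormula α n)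
    (s : α → ℕ ⊕ X) (xs : Fin n → ℕ ⊕ X) :
    @BoundedFormula.Realize LSP (GQ G) (St (gmem G)) α n φ
      (fun a => gmk G (s a)) (fun i => gmk G (xs i)) ↔
    F (fun v => @BoundedFormula.Realize LSP X (St E) α n φ
      (fun a => Tv (s a) v) (fun i => Tv (xs i) v)) := by
  have hsum : ∀ {n : ℕ} (xs : Fin n → ℕ ⊕ X) (a : α ⊕ Fin n),
      (Sum.elim (fun a => gmk G (s a)) (fun i => gmk G (xs i)) a) = gmk G (Sum.elim s xs a) := by
    rintro n xs (a | a) <;> rfl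
  have hsum' : ∀ {n : ℕ} (xs : Fin n → ℕ ⊕ X) (v : ℕ → X) (a : α ⊕ Fin n),
      (Sum.elim (fun a => Tv (s a) v) (fun i => Tv (xs i) v) a) = Tv (Sum.elim s xs a) v := by
    rintro n xs v (a | a) <;> rfl
  induction φ with
  | falsum =>
    constructor
    · intro h; exact h.elim
    · intro h; exact (G.nofalse h).choose_spec.elim
  | equal t₁ t₂ =>
    obtain ⟨a, rfl⟩ := term_var t₁
    obtain ⟨b, rfl⟩ := term_var t₂
    simp only [BoundedFormula.Realize, Term.realize_var, hsum, hsum']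
    exact gmk_eq G
  | @rel n l R ts =>
    choose a ha using fun i => term_var (ts i)
    obtain rfl : ts = fun i => Term.var (a i) := funext ha
    match l, R with
    | 0, R => exact R.elim
    | 1, R =>
      constructor
      · intro h; exact False.elim h
      · intro h; exact (G.nofalse h).choose_spec
    | 2, R =>
      simp only [BoundedFormula.Realize, Term.realize_var, hsum, hsum']
      exact gmem_iff G
    | (k + 3), R => exact R.elim
  | imp f₁ f₂ ih₁ ih₂ =>
    have e1 := ih₁ xs
    have e2 := ih₂ xs
    have hd := G.dec (los_df (E := E) f₁ s xs)
    simp only [BoundedFormula.Realize]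
    refine (imp_congr e1 e2).trans ?_
    constructor
    · intro h
      rcases hd with h1 | h1
      · exact G.mono (h h1) fun v hv _ => hv
      · exact G.mono h1 fun v hv hv' => (hv hv').elim
    · intro h h1
      exact G.mono (G.and h h1) fun v hv => hv.1 hv.2
  | @all n f ih =>
    have hs1 : ∀ t, (Fin.snoc (fun i => gmk G (xs i)) (gmk G t) : Fin (n + 1) → GQ G) =
        fun i => gmk G ((Fin.snoc xs t : Fin (n + 1) → ℕ ⊕ X) i) := by
      intro t
      funext i
      refine Fin.lastCases ?_ (fun i => ?_) i <;> simp
    have hs2 : ∀ t v, (Fin.snoc (fun i => Tv (xs i) v) (Tv t v) : Fin (n + 1) → X) =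
        fun i => Tv ((Fin.snoc xs t : Fin (n + 1) → ℕ ⊕ X) i) v := by
      intro t v
      funext i
      refine Fin.lastCases ?_ (fun i => ?_) i <;> simp
    simp only [BoundedFormula.Realize]
    constructor
    · intro h
      have hD : Df E id (fun w : Option ℕ → X => ¬ @BoundedFormula.Realize LSP X (St E) α (n + 1) f
          (fun a => Tv (s a) (fun i => w (some i)))
          (Fin.snoc (fun i => Tv (xs i) (fun i => w (some i))) (w none))) := by
        have h0 := (los_df (E := E) f (fun a => (s a).map Nat.succ id)
          (Fin.snoc (fun i => (xs i).map Nat.succ id) (.inl 0))).not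
        refine (h0.sub tmid (ι := Option ℕ) (fun j w => match j with
          | 0 => w none
          | j + 1 => w (some j)) ?_).congr fun w => ?_
        · rintro (_ | i) <;> exact tmv _
        · apply not_congr
          apply iff_of_eq
          congr 1
          · funext a
            rcases s a with i | i <;> rfl
          · funext i
            refine Fin.lastCases ?_ (fun i => ?_) i
            · simp only [Fin.snoc_last]; rfl
            · simp only [Fin.snoc_castSucc]
              rcases xs i with i | i <;> rfl
      rcases G.henkin (fun v x => ¬ @BoundedFormula.Realize LSP X (St E) α (n + 1) f
          (fun a => Tv (s a) v) (Fin.snoc (fun i => Tv (xs i) v) x)) hD with h1 | ⟨k, h1⟩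
      · refine G.mono h1 fun v hv x => ?_
        by_contra hc
        exact hv ⟨x, hc⟩
      · exfalso
        have h2 := h (gmk G (.inl k))
        rw [hs1] at h2
        replace h2 := (ih _).1 h2
        obtain ⟨v, hv, hv'⟩ := G.nofalse (G.and h1 h2)
        apply hv
        have := hs2 (.inl k) v
        rw [← this] at hv'
        exact hv'
    · intro h q
      obtain ⟨t, rfl⟩ := gmk_surj G q
      rw [hs1]
      refine (ih _).2 ?_
      refine G.mono h fun v hv => ?_
      rw [← hs2]
      exact hv _

theorem los0 [Nonempty X] (G : Gen E F) {α : Type*} (φ : LSP.Formula α) (s : α → ℕ ⊕ X) :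
    Rz (gmem G) φ (fun a => gmk G (s a)) ↔ F (fun v => Rz E φ (fun a => Tv (s a) v)) := by
  have := los G φ s Fin.elim0
  refine Iff.trans ?_ (this.trans ?_)
  · apply iff_of_eq
    unfold Rz Formula.Realize
    congr 1
    exact Subsingleton.elim _ _
  · apply iff_of_eq
    congr 1
    funext v
    unfold Rz Formula.Realize
    congr 1
    exact Subsingleton.elim _ _

theorem gen_eee [Nonempty X] (G : Gen E F) :
    EEE ⟨X, E, fun _ => False⟩ ⟨GQ G, gmem G, fun _ => False⟩ := by
  refine ⟨fun x => gmk G (.inr x), ⟨fun n φ v => ?_, fun a q hq => ?_, fun hs => ?_⟩⟩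
  · refine (los0 G φ (fun i => .inr (v i))).trans ?_
    constructor
    · intro h
      exact (G.nofalse h).choose_spec
    · intro h
      exact G.mono G.true fun _ _ => h
  · obtain ⟨t, rfl⟩ := gmk_surj G q
    have hq' : F (fun v => E (Tv t v) a) := (gmem_iff G).1 hq
    rcases G.bdd t a with h | ⟨b, _, h⟩
    · obtain ⟨v, hv, hv'⟩ := G.nofalse (G.and hq' h)
      exact (hv' hv).elim
    · exact ⟨b, (gmk_eq G).2 (G.mono h fun v hv => hv.symm)⟩
  · obtain ⟨a, ha⟩ := hs (gmk G (.inl 0))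
    exact G.large a (G.mono ((gmk_eq G).1 ha) fun v hv => hv.symm)

end Generic

section Tree

variable {X : Type 1} {E : X → X → Prop}

/-- Conditions. -/
def Cnd (E : X → X → Prop) : Type 1 := {D : (ℕ → X) → Prop // Df E id D ∧ Big E D}

/-- Tasks. -/
abbrev Task (X : Type 1) : Type 1 := LSP.Formula (Option ℕ ⊕ X) ⊕ ((ℕ ⊕ X) × X)

/-- The task is met by a condition. -/
def Done (E : X → X → Prop) (D : (ℕ → X) → Prop) : Task X → Prop
  | .inl ψ => (∀ v, D v → ¬ ∃ x, Rz E ψ (Sum.elim (fun o : Option ℕ => o.elim x v) id)) ∨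
      ∃ k, ∀ v, D v → Rz E ψ (Sum.elim (fun o : Option ℕ => o.elim (v k) v) id)
  | .inr (t, a) => (∀ v, D v → ¬ E (Tv t v) a) ∨ ∃ b, E b a ∧ ∀ v, D v → Tv t v = b

theorem task_countable [Countable X] : Countable (Task X) := by
  have h0 : ∀ n, Countable (LSP.Functions n) := fun n => inferInstanceAs (Countable Empty)
  have h1 : ∀ n, Countable (LSP.Relations n) := fun n => by
    match n with
    | 0 => exact inferInstanceAs (Countable Empty)
    | 1 => exact inferInstanceAs (Countable Unit)
    | 2 => exact inferInstanceAs (Countable Unit)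
    | (k + 3) => exact inferInstanceAs (Countable Empty)
  have h2 : Countable LSP.Symbols :=
    inferInstanceAs (Countable ((Σ l, LSP.Functions l) ⊕ (Σ l, LSP.Relations l)))
  infer_instance


theorem task_step (H : SatZF ⟨X, E, fun _ => False⟩) [Nonempty X] (D : Cnd E) (τ : Task X) :
    ∃ D' : Cnd E, (∀ v, D'.1 v → D.1 v) ∧ Done E D'.1 τ := by
  rcases τ with ψ | ⟨t, a⟩
  · obtain ⟨D', h1, h2, h3, h4⟩ := step_henkin H D.2.1 D.2.2
      (Q := fun v x => Rz E ψ (Sum.elim (fun o : Option ℕ => o.elim x v) id)) ⟨ψ, fun v => by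
        apply iff_of_eq
        congr 2
        funext o
        rcases o with _ | i <;> rfl⟩
    exact ⟨⟨D', h1, h2⟩, h3, h4⟩
  · obtain ⟨D', h1, h2, h3, h4⟩ := step_bdd H D.2.1 D.2.2 t a
    exact ⟨⟨D', h1, h2⟩, h3, h4⟩

theorem full_step (H : SatZF ⟨X, E, fun _ => False⟩) [Nonempty X] (D : Cnd E) :
    ∃ A : X → Prop, Df E Empty.elim (fun v : Unit → X => A (v ())) ∧
      ∀ (τ : Task X) (b : Bool), ∃ D' : Cnd E, (∀ v, D'.1 v → D.1 v) ∧ Done E D'.1 τ ∧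
        ∀ v, D'.1 v → (A (v 0) ↔ b = true) := by
  obtain ⟨A, hA, hA'⟩ := step_split H D.2.1 D.2.2
  refine ⟨A, hA, fun τ b => ?_⟩
  have hd : Df E id (fun v : ℕ → X => (A (v 0) ↔ b = true)) := by
    have h1 : Df E (id : X → X) (fun v : ℕ → X => A (v 0)) :=
      hA.sub0 (fun _ v => v 0) (fun _ => tmv _)
    cases b
    · exact h1.not.congr fun v => by simp
    · exact h1.congr fun v => by simp
  obtain ⟨D', h1, h2⟩ := task_step H ⟨_, D.2.1.and hd, hA' b⟩ τ
  exact ⟨D', fun v hv => (h1 v hv).1, h2, fun v hv => (h1 v hv).2⟩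

theorem start (H : SatZF ⟨X, E, fun _ => False⟩) : ∃ D : Cnd E, True := by
  refine ⟨⟨fun _ => True, Df.fls.not.congr fun _ => by simp, ?_⟩, trivial⟩
  rintro ⟨b, hb⟩
  exact lev_big H ⟨b, fun x hx => hb x ⟨hx, fun _ => x, rfl, trivial⟩⟩

theorem tree (H : SatZF ⟨X, E, fun _ => False⟩) [Nonempty X] [Countable X] :
    ∃ F : (ℕ → Bool) → ((ℕ → X) → Prop) → Prop, (∀ g, Gen E (F g)) ∧
      ∀ g h, g ≠ h → ∃ A : X → Prop, Df E Empty.elim (fun v : Unit → X => A (v ())) ∧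
        ((F g (fun v => A (v 0)) ∧ F h (fun v => ¬ A (v 0))) ∨
          (F h (fun v => A (v 0)) ∧ F g (fun v => ¬ A (v 0)))) := by
  have := task_countable (X := X)
  have : Nonempty (Task X) := ⟨.inr (.inl 0, Classical.arbitrary X)⟩
  obtain ⟨τ, hτ⟩ := exists_surjective_nat (Task X)
  obtain ⟨D₀, _⟩ := start H
  choose A hA S hS1 hS2 hS3 using full_step H
  let Ds : (ℕ → Bool) → ℕ → Cnd E := fun g n => Nat.rec D₀ (fun n D => S D (τ n) (g n)) n
  have hmono1 : ∀ g n v, (Ds g (n + 1)).1 v → (Ds g n).1 v := fun g n v => hS1 _ _ _ v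
  have hmono : ∀ g n m, n ≤ m → ∀ v, (Ds g m).1 v → (Ds g n).1 v := by
    intro g n m hnm
    induction hnm with
    | refl => exact fun v h => h
    | step _ ih => exact fun v h => ih v (hmono1 g _ v h)
  have hne : ∀ D : Cnd E, ∃ v, D.1 v := by
    intro D
    by_contra hc
    push Not at hc
    exact D.2.2 ⟨Classical.arbitrary X, fun x hx => by
      obtain ⟨_, v, _, hv⟩ := hx
      exact (hc v hv).elim⟩
  refine ⟨fun g P => ∃ n, ∀ v, (Ds g n).1 v → P v, fun g => ?_, fun g h hgh => ?_⟩
  · refine ⟨?_, ?_, ?_, ?_, ?_, ?_⟩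
    · rintro P Q ⟨n, hn⟩ hPQ
      exact ⟨n, fun v hv => hPQ v (hn v hv)⟩
    · rintro P Q ⟨n, hn⟩ ⟨m, hm⟩
      exact ⟨max n m, fun v hv => ⟨hn v (hmono g _ _ (le_max_left _ _) v hv),
        hm v (hmono g _ _ (le_max_right _ _) v hv)⟩⟩
    · rintro P ⟨n, hn⟩
      obtain ⟨v, hv⟩ := hne (Ds g n)
      exact ⟨v, hn v hv⟩
    · rintro Q ⟨ψ, hψ⟩
      obtain ⟨n, hn⟩ := hτ (.inl ψ)
      have hd : Done E (Ds g (n + 1)).1 (.inl ψ) := hn ▸ hS2 _ _ _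
      have hψ' : ∀ x v, Rz E ψ (Sum.elim (fun o : Option ℕ => o.elim x v) id) ↔ Q v x :=
        fun x v => hψ (fun o : Option ℕ => o.elim x v)
      simp only [Done, hψ'] at hd
      rcases hd with h | ⟨k, h⟩
      · exact .inl ⟨n + 1, h⟩
      · exact .inr ⟨k, n + 1, h⟩
    · intro t a
      obtain ⟨n, hn⟩ := hτ (.inr (t, a))
      have hd : Done E (Ds g (n + 1)).1 (.inr (t, a)) := hn ▸ hS2 _ _ _
      rcases hd with h | ⟨b, hb, h⟩
      · exact .inl ⟨n + 1, h⟩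
      · exact .inr ⟨b, hb, n + 1, h⟩
    · rintro a ⟨n, hn⟩
      obtain ⟨p, hp⟩ := pairE H a a
      refine (Ds g n).2.2 ⟨p, fun x hx => ?_⟩
      obtain ⟨_, v, hv, hDv⟩ := hx
      exact (hp x).2 (.inl (hv.symm.trans (hn v hDv)))
  · have hex : ∃ n, g n ≠ h n := Function.ne_iff.1 hgh
    classical
    let n := Nat.find hex
    have hn : g n ≠ h n := Nat.find_spec hex
    have hlt : ∀ m, m < n → g m = h m := fun m hm => not_not.1 (Nat.find_min hex hm)
    have heq : ∀ m, m ≤ n → Ds g m = Ds h m := by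
      intro m
      induction m with
      | zero => intro _; rfl
      | succ m ih =>
        intro hm
        show S (Ds g m) (τ m) (g m) = S (Ds h m) (τ m) (h m)
        rw [ih (by omega), hlt m (by omega)]
    refine ⟨A (Ds g n), hA _, ?_⟩
    have h1 : ∀ v, (Ds g (n + 1)).1 v → (A (Ds g n) (v 0) ↔ g n = true) := fun v => hS3 _ _ _ v
    have h2 : ∀ v, (Ds h (n + 1)).1 v → (A (Ds h n) (v 0) ↔ h n = true) := fun v => hS3 _ _ _ v
    rw [← heq n le_rfl] at h2
    rcases hg : g n with _ | _ <;> rcases hh : h n with _ | _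
    · exact (hn (hg.trans hh.symm)).elim
    · right
      exact ⟨⟨n + 1, fun v hv => (h2 v hv).2 hh⟩, ⟨n + 1, fun v hv => by simpa [hg] using h1 v hv⟩⟩
    · left
      exact ⟨⟨n + 1, fun v hv => (h1 v hv).2 hg⟩, ⟨n + 1, fun v hv => by simpa [hh] using h2 v hv⟩⟩
    · exact (hn (hg.trans hh.symm)).elim

end Tree

section Counting

theorem iso_rz {X Y : Type 1} {E : X → X → Prop} {E' : Y → Y → Prop} (e : X ≃ Y)
    (he : ∀ x y, E x y ↔ E' (e x) (e y)) {α : Type*} (φ : LSP.Formula α) (v : α → X) :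
    Rz E' φ (e ∘ v) ↔ Rz E φ v := by
  let i1 := St E
  let i2 := St E'
  let eqv : X ≃[LSP] Y := ⟨e, fun f _ => Empty.elim f, fun {n} R x => by
    match n, R with
    | 0, R => exact R.elim
    | 1, R => exact Iff.rfl
    | 2, R => exact (he _ _).symm
    | (k + 3), R => exact R.elim⟩
  exact StrongHomClass.realize_formula eqv φ

/-- The relation of isomorphism as a setoid. -/
def isoSetoid {I : Type} (N : I → SetModel) : Setoid I where
  r i j := SMIso (N i) (N j)
  iseqv := by
    refine ⟨fun i => ⟨Equiv.refl _, fun _ _ => Iff.rfl, fun _ => Iff.rfl⟩, ?_, ?_⟩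
    · rintro i j ⟨e, h1, h2⟩
      exact ⟨e.symm, fun x y => by rw [h1]; simp, fun x => by rw [h2]; simp⟩
    · rintro i j k ⟨e, h1, h2⟩ ⟨e', h3, h4⟩
      exact ⟨e.trans e', fun x y => (h1 x y).trans (h3 _ _), fun x => (h2 x).trans (h4 _)⟩

theorem counting {I : Type} (hI : Cardinal.mk I = Cardinal.continuum) (r : Setoid I)
    (hr : ∀ i, {j | r i j}.Countable) : ∃ f : I → I, ∀ i j, i ≠ j → ¬ r (f i) (f j) := by
  have hle : Cardinal.mk I ≤ Cardinal.mk (Quotient r) := by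
    by_contra hc
    push Not at hc
    have h1 : Cardinal.mk I ≤ Cardinal.mk (Quotient r) * Cardinal.aleph0 := by
      choose c hc' using fun i => Set.countable_iff_exists_injOn.1 (hr i)
      have : Function.Injective (fun i : I => ((Quotient.mk r i : Quotient r),
          c (Quotient.mk r i).out i)) := by
        intro i j hij
        simp only [Prod.mk.injEq] at hij
        obtain ⟨h1, h2⟩ := hij
        rw [← h1] at h2
        refine hc' _ ?_ ?_ h2
        · exact Quotient.mk_out (s := r) i
        · rw [h1]
          exact Quotient.mk_out (s := r) j
      have := Cardinal.mk_le_of_injective this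
      simpa using this
    have h2 : Cardinal.mk (Quotient r) * Cardinal.aleph0 < Cardinal.mk I := by
      rw [hI] at hc ⊢
      exact Cardinal.mul_lt_of_lt Cardinal.aleph0_le_continuum hc Cardinal.aleph0_lt_continuum
    exact absurd h1 (not_le.2 h2)
  obtain ⟨q⟩ := hle
  refine ⟨fun i => (q i).out, fun i j hij h => hij (q.injective ?_)⟩
  rw [← Quotient.out_eq (q i), ← Quotient.out_eq (q j)]
  exact Quotient.sound h

theorem main (X : Type 1) (E : X → X → Prop) (hc : Countable X)
    (hZF : SatZF ⟨X, E, fun _ => False⟩) :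
    ∃ f : (ℕ → Bool) → SetModel,
      (∀ g, (∀ x, ¬(f g).pred x) ∧ EEE ⟨X, E, fun _ => False⟩ (f g)) ∧
      ∀ g h : ℕ → Bool, g ≠ h → ¬SMIso (f g) (f h) := by
  obtain ⟨x0, -⟩ := hZF.infinity
  have : Nonempty X := ⟨x0⟩
  obtain ⟨F, hG, hF⟩ := tree hZF
  let N : (ℕ → Bool) → SetModel := fun g => ⟨GQ (hG g), gmem (hG g), fun _ => False⟩
  have hI : Cardinal.mk (ℕ → Bool) = Cardinal.continuum := by simp
  obtain ⟨f, hf⟩ := counting hI (isoSetoid N) (fun g => by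
    let e : {h | (isoSetoid N) g h} → (GQ (hG g)) := fun h =>
      (Classical.choose (show SMIso (N g) (N h.1) from h.2)).symm (gmk (hG h.1) (.inl 0))
    have he : Function.Injective e := by
      rintro ⟨h, hh⟩ ⟨k, hk⟩ hhk
      by_contra hne
      have hne' : h ≠ k := fun h => hne (Subtype.ext h)
      obtain ⟨A, ⟨φ, hφ⟩, hA⟩ := hF h k hne'
      let ψ : LSP.Formula Unit := φ.relabel (Sum.elim id Empty.elim)
      have hψ : ∀ x : X, Rz E ψ (fun _ => x) ↔ A x := by
        intro x
        rw [Rz_relabel]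
        refine Iff.trans ?_ (hφ (fun _ => x))
        apply iff_of_eq
        congr 1
        funext i
        rcases i with i | i
        · rfl
        · exact i.elim
      have hl : ∀ h', Rz (gmem (hG h')) ψ (fun _ => gmk (hG h') (.inl 0)) ↔
          F h' (fun v => A (v 0)) := by
        intro h'
        rw [los0]
        simp only [hψ]
        rfl
      have hi : ∀ (h') (hh' : (isoSetoid N) g h'),
          Rz (gmem (hG g)) ψ (fun _ => e ⟨h', hh'⟩) ↔ F h' (fun v => A (v 0)) := by
        intro h' hh'
        rw [← hl]
        have hs := Classical.choose_spec (show SMIso (N g) (N h') from hh')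
        refine (iso_rz _ hs.1 ψ (fun _ => e ⟨h', hh'⟩)).symm.trans ?_
        apply iff_of_eq
        congr 1
        funext _
        exact Equiv.apply_symm_apply _ _
      have hiff : F h (fun v => A (v 0)) ↔ F k (fun v => A (v 0)) := by
        rw [← hi h hh, ← hi k hk, hhk]
      have hno : ∀ h', F h' (fun v => A (v 0)) → F h' (fun v => ¬ A (v 0)) → False := by
        intro h' h1 h2
        obtain ⟨v, hv, hv'⟩ := (hG h').nofalse ((hG h').and h1 h2)
        exact hv' hv
      rcases hA with ⟨h1, h2⟩ | ⟨h1, h2⟩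
      · exact hno k (hiff.1 h1) h2
      · exact hno h (hiff.2 h1) h2
    have : Countable (GQ (hG g)) := inferInstanceAs (Countable (Quotient (gset (hG g))))
    exact he.countable)
  exact ⟨fun g => N (f g), fun g => ⟨fun x h => h, gen_eee (hG (f g))⟩, hf⟩

end Counting

end KM

/-- Every countable model of ZF has `2^ℵ₀` pairwise
non-isomorphic end elementary extensions. -/
theorem countable_model_of_ZF_has_continuum_many_eee
    (X : Type 1) (E : X → X → Prop) (hc : Countable X)
    (hZF : SatZF ⟨X, E, fun _ => False⟩) :
    ∃ f : (ℕ → Bool) → SetModel,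
      (∀ g, (∀ x, ¬(f g).pred x) ∧ EEE ⟨X, E, fun _ => False⟩ (f g)) ∧
      ∀ g h : ℕ → Bool, g ≠ h → ¬SMIso (f g) (f h) := by
  exact KM.main X E hc hZF
end

section
/- Let M be a transitive model of ZFC with o(M) = κ, where κ is an unfoldable cardinal. Then for every S ⊆ M and every ordinal α, the structure (E_{(M,∈,S)}, ≺_e) contains a well-founded end elementary extension of (M,∈,S) of ordinal height ≥ α. -/
open FirstOrder Cardinal

/-- A property of tuples, uniform in all set models, given by a first-order formula. -/
def Dfn {n : ℕ} (P : (N : SetModel) → (Fin n → N.Carrier) → Prop) : Prop :=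
  ∃ φ : LSP.Formula (Fin n), ∀ N v, N.Realize φ v ↔ P N v

theorem Dfn.congr {n : ℕ} {P Q : (N : SetModel) → (Fin n → N.Carrier) → Prop}
    (h : Dfn P) (e : ∀ N v, P N v ↔ Q N v) : Dfn Q := by
  obtain ⟨φ, hφ⟩ := h
  exact ⟨φ, fun N v => (hφ N v).trans (e N v)⟩

theorem Dfn.fls {n : ℕ} : Dfn (n := n) (fun _ _ => False) :=
  ⟨Language.BoundedFormula.falsum, fun _ _ => Iff.rfl⟩

theorem Dfn.eq {n : ℕ} (i j : Fin n) : Dfn (fun _ v => v i = v j) :=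
  ⟨Language.BoundedFormula.equal (Language.Term.var (Sum.inl i)) (Language.Term.var (Sum.inl j)),
    fun _ _ => Iff.rfl⟩

theorem Dfn.mem {n : ℕ} (i j : Fin n) : Dfn (fun N v => N.mem (v i) (v j)) :=
  ⟨Language.BoundedFormula.rel (L := LSP) (l := 2) ()
    ![Language.Term.var (Sum.inl i), Language.Term.var (Sum.inl j)],
    fun _ _ => Iff.rfl⟩

theorem Dfn.pred {n : ℕ} (i : Fin n) : Dfn (fun N v => N.pred (v i)) :=
  ⟨Language.BoundedFormula.rel (L := LSP) (l := 1) () ![Language.Term.var (Sum.inl i)],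
    fun _ _ => Iff.rfl⟩

theorem Dfn.imp {n : ℕ} {P Q : (N : SetModel) → (Fin n → N.Carrier) → Prop}
    (hP : Dfn P) (hQ : Dfn Q) : Dfn (fun N v => P N v → Q N v) := by
  obtain ⟨φ, hφ⟩ := hP
  obtain ⟨ψ, hψ⟩ := hQ
  refine ⟨Language.BoundedFormula.imp φ ψ, fun N v => ?_⟩
  exact imp_congr (hφ N v) (hψ N v)

theorem Dfn.not {n : ℕ} {P : (N : SetModel) → (Fin n → N.Carrier) → Prop}
    (hP : Dfn P) : Dfn (fun N v => ¬ P N v) :=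
  hP.imp Dfn.fls

theorem Dfn.and {n : ℕ} {P Q : (N : SetModel) → (Fin n → N.Carrier) → Prop}
    (hP : Dfn P) (hQ : Dfn Q) : Dfn (fun N v => P N v ∧ Q N v) :=
  (hP.imp hQ.not).not.congr fun N v => by tauto

theorem Dfn.or {n : ℕ} {P Q : (N : SetModel) → (Fin n → N.Carrier) → Prop}
    (hP : Dfn P) (hQ : Dfn Q) : Dfn (fun N v => P N v ∨ Q N v) :=
  (hP.not.imp hQ).congr fun N v => by tauto

theorem Dfn.iff {n : ℕ} {P Q : (N : SetModel) → (Fin n → N.Carrier) → Prop}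
    (hP : Dfn P) (hQ : Dfn Q) : Dfn (fun N v => P N v ↔ Q N v) :=
  ((hP.imp hQ).and (hQ.imp hP)).congr fun N v => by tauto

theorem Dfn.all {n : ℕ} {Q : (N : SetModel) → (Fin n → N.Carrier) → N.Carrier → Prop}
    (h : Dfn (n := n + 1) (fun N w => Q N (fun i => w i.succ) (w 0))) :
    Dfn (fun N v => ∀ x, Q N v x) := by
  obtain ⟨φ, hφ⟩ := h
  refine ⟨Language.Formula.iAlls (Fin 1)
    (φ.relabel (Fin.cons (Sum.inr 0) (fun i => Sum.inl i) : Fin (n+1) → Fin n ⊕ Fin 1)),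
    fun N v => ?_⟩
  letI := N.str
  have key : ∀ x : N.Carrier, φ.Realize (Fin.cons x v : Fin (n+1) → N.Carrier) ↔ Q N v x := by
    intro x
    have := hφ N (Fin.cons x v)
    simpa [SetModel.Realize] using this
  unfold SetModel.Realize
  rw [Language.Formula.realize_iAlls]
  have e : ∀ i : Fin 1 → N.Carrier,
      (fun a => Sum.elim v i a) ∘ (Fin.cons (Sum.inr 0) (fun i => Sum.inl i) :
        Fin (n+1) → Fin n ⊕ Fin 1) = (Fin.cons (i 0) v : Fin (n+1) → N.Carrier) := by
    intro i
    funext j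
    refine Fin.cases ?_ (fun j => ?_) j <;> simp
  constructor
  · intro h x
    have := h (fun _ => x)
    rw [Language.Formula.realize_relabel, e] at this
    exact (key x).1 this
  · intro h i
    rw [Language.Formula.realize_relabel, e]
    exact (key _).2 (h _)

theorem Dfn.ex {n : ℕ} {Q : (N : SetModel) → (Fin n → N.Carrier) → N.Carrier → Prop}
    (h : Dfn (n := n + 1) (fun N w => Q N (fun i => w i.succ) (w 0))) :
    Dfn (fun N v => ∃ x, Q N v x) :=
  (Dfn.all (Q := fun N v x => ¬ Q N v x) h.not).not.congr fun N v => by simp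

theorem IsElem.dfn {M N : SetModel} {f : M.Carrier → N.Carrier} (h : IsElem M N f) {n : ℕ}
    {P : (N : SetModel) → (Fin n → N.Carrier) → Prop} (hP : Dfn P) (v : Fin n → M.Carrier) :
    P N (f ∘ v) ↔ P M v := by
  obtain ⟨φ, hφ⟩ := hP
  rw [← hφ, ← hφ]
  exact h n φ v

/-- `z` is the unordered pair of `a` and `b`, in the sense of `N`. -/
def IsUP (N : SetModel) (z a b : N.Carrier) : Prop := ∀ w, N.mem w z ↔ (w = a ∨ w = b)

/-- `p` is the ordered pair of `a` and `b`, in the sense of `N`. -/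
def IsOP (N : SetModel) (p a b : N.Carrier) : Prop :=
  ∀ z, N.mem z p ↔ (IsUP N z a a ∨ IsUP N z a b)

/-- The relation with tag `t` coded in the predicate of `N`. -/
def Code (N : SetModel) (t x y : N.Carrier) : Prop :=
  ∃ p q, N.pred p ∧ (IsOP N p t q ∧ IsOP N q x y)

theorem dfn_up {n : ℕ} (i j k : Fin n) : Dfn (fun N v => IsUP N (v i) (v j) (v k)) := by
  unfold IsUP
  exact Dfn.all ((Dfn.mem _ _).iff ((Dfn.eq _ _).or (Dfn.eq _ _)))

theorem dfn_op {n : ℕ} (i j k : Fin n) : Dfn (fun N v => IsOP N (v i) (v j) (v k)) := by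
  unfold IsOP
  exact Dfn.all ((Dfn.mem _ _).iff ((dfn_up _ _ _).or (dfn_up _ _ _)))

theorem dfn_code {n : ℕ} (i j k : Fin n) : Dfn (fun N v => Code N (v i) (v j) (v k)) := by
  unfold Code
  exact Dfn.ex (Dfn.ex ((Dfn.pred _).and ((dfn_op _ _ _).and (dfn_op _ _ _))))

/-- The variable that a term of the (relational) language consists of. -/
def tv {β : Type} : LSP.Term β → β
  | .var b => b
  | .func f _ => Empty.elim f

theorem realize_tv {β : Type} (N : SetModel) (t : LSP.Term β) (v : β → N.Carrier) :
    (letI := N.str; t.realize v) = v (tv t) := by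
  cases t with
  | var b => rfl
  | func f _ => exact Empty.elim f

/-- Satisfaction in the submodel with domain `A` and predicate `B`, as relativised satisfaction. -/
def RelSat (N : SetModel) (A B : N.Carrier → Prop) {n : ℕ} : {k : ℕ} →
    LSP.BoundedFormula (Fin n) k → (Fin n → N.Carrier) → (Fin k → N.Carrier) → Prop
  | _, .falsum, _, _ => False
  | _, .equal t₁ t₂, v, xs => Sum.elim v xs (tv t₁) = Sum.elim v xs (tv t₂)
  | _, .rel (l := 0) R _, _, _ => Empty.elim R
  | _, .rel (l := 1) _ ts, v, xs => B (Sum.elim v xs (tv (ts 0)))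
  | _, .rel (l := 2) _ ts, v, xs =>
      N.mem (Sum.elim v xs (tv (ts 0))) (Sum.elim v xs (tv (ts 1)))
  | _, .rel (l := _ + 3) R _, _, _ => Empty.elim R
  | _, .imp f g, v, xs => RelSat N A B f v xs → RelSat N A B g v xs
  | _, .all f, v, xs => ∀ x, A x → RelSat N A B f v (Fin.snoc xs x)

theorem dfn_relSat {n k : ℕ} (φ : LSP.BoundedFormula (Fin n) k) :
    ∀ {m : ℕ} (a b : Fin m) (σ : Fin n → Fin m) (τ : Fin k → Fin m),
      Dfn (fun N w => RelSat N (fun x => Code N (w a) x x) (fun x => Code N (w b) x x) φ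
        (fun i => w (σ i)) (fun j => w (τ j))) := by
  induction φ with
  | falsum => intros; exact Dfn.fls
  | equal t₁ t₂ =>
    intro m a b σ τ
    refine (Dfn.eq (Sum.elim σ τ (tv t₁)) (Sum.elim σ τ (tv t₂))).congr fun N v => ?_
    simp only [RelSat]
    rcases tv t₁ with _ | _ <;> rcases tv t₂ with _ | _ <;> rfl
  | @rel k l R ts =>
    intro m a b σ τ
    match l, R, ts with
    | 0, R, ts => exact Empty.elim R
    | 1, R, ts =>
      refine (dfn_code b (Sum.elim σ τ (tv (ts 0))) (Sum.elim σ τ (tv (ts 0)))).congr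
        fun N v => ?_
      simp only [RelSat]
      rcases tv (ts 0) with _ | _ <;> rfl
    | 2, R, ts =>
      refine (Dfn.mem (Sum.elim σ τ (tv (ts 0))) (Sum.elim σ τ (tv (ts 1)))).congr
        fun N v => ?_
      simp only [RelSat]
      rcases tv (ts 0) with _ | _ <;> rcases tv (ts 1) with _ | _ <;> rfl
    | l + 3, R, ts => exact Empty.elim R
  | imp f g hf hg =>
    intro m a b σ τ
    exact (hf a b σ τ).imp (hg a b σ τ)
  | all f hf =>
    intro m a b σ τ
    simp only [RelSat]
    refine Dfn.all ((dfn_code _ _ _).imp ?_)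
    refine (hf a.succ b.succ (fun i => (σ i).succ) (Fin.snoc (fun j => (τ j).succ) 0)).congr
      fun N w => ?_
    have e : (fun j => w ((Fin.snoc (fun j => (τ j).succ) 0 : Fin _ → Fin (m+1)) j)) =
        (Fin.snoc (fun j => w (τ j).succ) (w 0) : Fin _ → N.Carrier) := by
      funext j
      refine Fin.lastCases ?_ (fun j => ?_) j <;> simp
    rw [e]

theorem relSat_iff {K U X Y : Set ZFSet} (h : X ⊆ K) (A B : (ZModel K U).Carrier → Prop)
    (hA : ∀ x : K, A x ↔ (x : ZFSet) ∈ X) (hB : ∀ x : K, (x : ZFSet) ∈ X → (B x ↔ (x : ZFSet) ∈ Y))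
    {n k : ℕ} (φ : LSP.BoundedFormula (Fin n) k) :
    ∀ (v : Fin n → X) (xs : Fin k → X),
      (letI := (ZModel X Y).str; φ.Realize (M := (ZModel X Y).Carrier) v xs) ↔
        RelSat (ZModel K U) A B φ (Set.inclusion h ∘ v) (Set.inclusion h ∘ xs) := by
  have el : ∀ {k : ℕ} (v : Fin n → X) (xs : Fin k → X) (s : Fin n ⊕ Fin k),
      Sum.elim (Set.inclusion h ∘ v) (Set.inclusion h ∘ xs) s
        = Set.inclusion h (Sum.elim v xs s) := by
    intro k v xs s; cases s <;> rfl
  induction φ with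
  | falsum => intros; exact Iff.rfl
  | equal t₁ t₂ =>
    intro v xs
    simp only [RelSat]
    erw [el, el, (Set.inclusion_injective h).eq_iff]
    simp only [Language.BoundedFormula.Realize]
    erw [realize_tv (ZModel X Y), realize_tv (ZModel X Y)]
    rfl
  | @rel k l R ts =>
    intro v xs
    match l, R, ts with
    | 0, R, ts => exact Empty.elim R
    | 1, R, ts =>
      simp only [RelSat]
      erw [el, hB (Set.inclusion h (Sum.elim v xs (tv (ts 0)))) (Sum.elim v xs (tv (ts 0))).2]
      simp only [Language.BoundedFormula.Realize]
      have := realize_tv (ZModel X Y) (ts 0) (Sum.elim v xs)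
      exact Eq.to_iff (congrArg (fun z : (ZModel X Y).Carrier => (ZModel X Y).pred z) this)
    | 2, R, ts =>
      simp only [RelSat]
      erw [el, el]
      simp only [Language.BoundedFormula.Realize]
      have h0 := realize_tv (ZModel X Y) (ts 0) (Sum.elim v xs)
      have h1 := realize_tv (ZModel X Y) (ts 1) (Sum.elim v xs)
      exact Eq.to_iff (congrArg₂ (fun z z' : (ZModel X Y).Carrier => (ZModel X Y).mem z z') h0 h1)
    | l + 3, R, ts => exact Empty.elim R
  | imp f g hf hg =>
    intro v xs
    exact imp_congr (hf v xs) (hg v xs)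
  | @all k f hf =>
    intro v xs
    have e : ∀ x : X, (Set.inclusion h ∘ (Fin.snoc xs x : Fin (k+1) → X)) =
        (Fin.snoc (Set.inclusion h ∘ xs) (Set.inclusion h x) : Fin (k+1) → K) := by
      intro x
      funext j
      refine Fin.lastCases ?_ (fun j => ?_) j <;> simp
    constructor
    · intro H x hx
      have hx' := (hA x).1 hx
      have := (hf v (Fin.snoc xs ⟨x.1, hx'⟩)).1 (H ⟨x.1, hx'⟩)
      exact (congrArg (RelSat (ZModel K U) A B f (Set.inclusion h ∘ v)) (e ⟨x.1, hx'⟩)).mp this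
    · intro H x
      refine (hf v (Fin.snoc xs x)).2 ?_
      refine (congrArg (RelSat (ZModel K U) A B f (Set.inclusion h ∘ v)) (e x)).mpr ?_
      exact H (Set.inclusion h x) ((hA _).2 x.2)

theorem isUP_iff {K U : Set ZFSet} (hK : ∀ x y, x ∈ y → y ∈ K → x ∈ K) (z a b : K) :
    IsUP (ZModel K U) z a b ↔ (z : ZFSet) = {(a : ZFSet), (b : ZFSet)} := by
  constructor
  · intro h
    ext w
    rw [ZFSet.mem_pair]
    constructor
    · intro hw
      have := (h ⟨w, hK _ _ hw z.2⟩).1 hw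
      exact this.imp (congrArg Subtype.val) (congrArg Subtype.val)
    · rintro (rfl | rfl)
      · exact (h a).2 (Or.inl rfl)
      · exact (h b).2 (Or.inr rfl)
  · intro h w
    change w.1 ∈ (z : ZFSet) ↔ _
    rw [h, ZFSet.mem_pair]
    exact or_congr Subtype.ext_iff.symm Subtype.ext_iff.symm

theorem isOP_iff {K U : Set ZFSet} (hK : ∀ x y, x ∈ y → y ∈ K → x ∈ K)
    (hP : ∀ x y, x ∈ K → y ∈ K → ({x, y} : ZFSet) ∈ K) (p a b : K) :
    IsOP (ZModel K U) p a b ↔ (p : ZFSet) = ZFSet.pair a b := by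
  have hs : ∀ x : ZFSet, ({x, x} : ZFSet) = {x} := by
    intro x; ext; simp
  constructor
  · intro h
    ext w
    rw [ZFSet.pair, ZFSet.mem_pair, ← hs]
    constructor
    · intro hw
      have := (h ⟨w, hK _ _ hw p.2⟩).1 hw
      rwa [isUP_iff hK, isUP_iff hK] at this
    · rintro (rfl | rfl)
      · exact (h ⟨_, hP _ _ a.2 a.2⟩).2 (Or.inl ((isUP_iff hK _ _ _).2 rfl))
      · exact (h ⟨_, hP _ _ a.2 b.2⟩).2 (Or.inr ((isUP_iff hK _ _ _).2 rfl))
  · intro h w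
    refine Iff.trans ?_ (or_congr (isUP_iff hK w a a) (isUP_iff hK w a b)).symm
    change w.1 ∈ (p : ZFSet) ↔ _
    rw [h, ZFSet.pair, ZFSet.mem_pair, hs]

theorem code_iff {K : Set ZFSet} (Q : ZFSet → ZFSet → ZFSet → Prop)
    (hK : ∀ x y, x ∈ y → y ∈ K → x ∈ K)
    (hP : ∀ x y, x ∈ K → y ∈ K → ({x, y} : ZFSet) ∈ K) (t x y : K) :
    Code (ZModel K {p | p ∈ K ∧ ∃ t x y, p = ZFSet.pair t (ZFSet.pair x y) ∧ Q t x y}) t x y ↔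
      Q t x y := by
  have hs : ∀ x : ZFSet, ({x, x} : ZFSet) = {x} := by
    intro x; ext; simp
  have hPP : ∀ x y, x ∈ K → y ∈ K → ZFSet.pair x y ∈ K := by
    intro x y hx hy
    have := hP x x hx hx
    rw [hs] at this
    exact hP _ _ this (hP _ _ hx hy)
  constructor
  · rintro ⟨p, q, hp, h1, h2⟩
    replace h1 := (isOP_iff hK hP p t q).1 h1
    replace h2 := (isOP_iff hK hP q x y).1 h2
    obtain ⟨-, t', x', y', e, hQ⟩ := hp
    rw [h1, h2, ZFSet.pair_inj, ZFSet.pair_inj] at e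
    obtain ⟨rfl, rfl, rfl⟩ := e
    exact hQ
  · intro hQ
    have h1 := hPP _ _ x.2 y.2
    have h2 := hPP _ _ t.2 h1
    refine ⟨⟨_, h2⟩, ⟨_, h1⟩, ⟨h2, _, _, _, rfl, hQ⟩, ?_, ?_⟩
    · exact (isOP_iff hK hP _ _ _).2 rfl
    · exact (isOP_iff hK hP _ _ _).2 rfl

/-- If `M` is a transitive model of ZFC of ordinal height an
unfoldable cardinal `κ`, then for every `S ⊆ M` and every ordinal `α`, `(M,∈,S)`
has a well-founded (transitive) end elementary extension of height at least `α`. -/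
theorem transitive_model_of_unfoldable_height_unfolds
    (κ : Cardinal.{0}) (hκ : IsUnfoldable κ)
    (M : ZFSet) (hMtrans : M.IsTransitive) (hZFC : SatZFC (ZModel M.toSet ∅))
    (hheight : M.rank = κ.ord)
    (S : Set ZFSet) (hS : S ⊆ M.toSet) (α : Ordinal.{0}) :
    ∃ (N : ZFSet) (T : Set ZFSet),
      N.IsTransitive ∧ ZEEE M.toSet S N.toSet T ∧ α ≤ N.rank := by
  obtain ⟨hinacc, hunf⟩ := hκ
  have hlim : Order.IsSuccLimit κ.ord := isSuccLimit_ord hinacc.aleph0_lt.le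
  have hK : ∀ x y : ZFSet, x ∈ y → y ∈ Vrank κ.ord → x ∈ Vrank κ.ord :=
    fun x y hxy hy => (ZFSet.rank_lt_of_mem hxy).trans hy
  have hP : ∀ x y, x ∈ Vrank κ.ord → y ∈ Vrank κ.ord → ({x, y} : ZFSet) ∈ Vrank κ.ord := by
    intro x y hx hy
    change ZFSet.rank _ < _
    rw [ZFSet.rank_pair]
    exact max_lt (hlim.succ_lt hx) (hlim.succ_lt hy)
  have h0 : (∅ : ZFSet) ∈ Vrank κ.ord := by
    change ZFSet.rank _ < _
    rw [ZFSet.rank_empty]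
    exact hlim.bot_lt
  have h1 := hP _ _ h0 h0
  have h2 := hP _ _ h1 h1
  have n01 : ({∅, ∅} : ZFSet) ≠ ∅ := by
    intro h
    have : (∅ : ZFSet) ∈ ({∅, ∅} : ZFSet) := by simp
    rw [h] at this
    exact ZFSet.notMem_empty _ this
  have n02 : ({{∅, ∅}, {∅, ∅}} : ZFSet) ≠ ∅ := by
    intro h
    have : ({∅, ∅} : ZFSet) ∈ ({{∅, ∅}, {∅, ∅}} : ZFSet) := by simp
    rw [h] at this
    exact ZFSet.notMem_empty _ this
  have n12 : ({{∅, ∅}, {∅, ∅}} : ZFSet) ≠ {∅, ∅} := by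
    intro h
    have : (∅ : ZFSet) ∈ ({{∅, ∅}, {∅, ∅}} : ZFSet) := by rw [h]; simp
    rw [ZFSet.mem_pair, or_self] at this
    exact n01 this.symm
  obtain ⟨t0, ht0⟩ : ∃ t : (Vrank κ.ord), t.1 = ∅ := ⟨⟨_, h0⟩, rfl⟩
  obtain ⟨t1, ht1⟩ : ∃ t : (Vrank κ.ord), t.1 = {∅, ∅} := ⟨⟨_, h1⟩, rfl⟩
  obtain ⟨t2, ht2⟩ : ∃ t : (Vrank κ.ord), t.1 = {{∅, ∅}, {∅, ∅}} := ⟨⟨_, h2⟩, rfl⟩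
  let Q : ZFSet → ZFSet → ZFSet → Prop := fun t x y =>
    (t = ∅ ∧ x ∈ M) ∨ (t = {∅, ∅} ∧ x ∈ S) ∨ (t = {{∅, ∅}, {∅, ∅}} ∧ x.rank ≤ y.rank)
  obtain ⟨S', hS'⟩ : ∃ S' : Set ZFSet, S' = {p | p ∈ Vrank κ.ord ∧
    ∃ t x y, p = ZFSet.pair t (ZFSet.pair x y) ∧ Q t x y} := ⟨_, rfl⟩
  have hcode : ∀ t x y : Vrank κ.ord, Code (ZModel (Vrank κ.ord) S') t x y ↔ Q t x y := by
    intro t x y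
    rw [hS']
    exact code_iff Q hK hP t x y
  have cM : ∀ x y : Vrank κ.ord, Code (ZModel (Vrank κ.ord) S') t0 x y ↔ (x : ZFSet) ∈ M := by
    intro x y
    rw [hcode]
    simp only [Q, ht0, n01.symm, n02.symm, false_and, or_false, true_and]
  have cS : ∀ x y : Vrank κ.ord, Code (ZModel (Vrank κ.ord) S') t1 x y ↔ (x : ZFSet) ∈ S := by
    intro x y
    rw [hcode]
    have a := n12.symm
    simp only [Q, ht1]
    tauto
  have cR : ∀ x y : Vrank κ.ord, Code (ZModel (Vrank κ.ord) S') t2 x y ↔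
      (x : ZFSet).rank ≤ (y : ZFSet).rank := by
    intro x y
    rw [hcode]
    simp only [Q, ht2]
    tauto
  obtain ⟨N', T', hN't, ⟨hsub, hE⟩, hα⟩ :=
    hunf S' (by rw [hS']; exact fun p hp => hp.1) (max α (Order.succ κ.ord))
  have el := hE.elementary
  have MK : M.toSet ⊆ Vrank κ.ord := by
    intro x hx
    change ZFSet.rank _ < _
    rw [← hheight]
    exact ZFSet.rank_lt_of_mem hx
  -- transferred facts
  let V := ZModel (Vrank κ.ord) S'
  let W := ZModel N'.toSet T'
  let j : V.Carrier → W.Carrier := Set.inclusion hsub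
  have fT : ∀ x y : W.Carrier, Code W (j t0) x x → W.mem y x → Code W (j t0) y y := by
    have d : Dfn (n := 1) (fun N w => ∀ x y, Code N (w 0) x x → N.mem y x → Code N (w 0) y y) :=
      Dfn.all (Dfn.all ((dfn_code _ _ _).imp ((Dfn.mem _ _).imp (dfn_code _ _ _))))
    refine (el.dfn d ![t0]).2 ?_
    intro x y hx hy
    exact (cM y y).2 (hMtrans.mem_trans hy ((cM x x).1 hx))
  have fR : ∀ x y : W.Carrier, Code W (j t2) x y →
      ∀ x', W.mem x' x → ∃ y', W.mem y' y ∧ Code W (j t2) x' y' := by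
    have d : Dfn (n := 1) (fun N w => ∀ x y, Code N (w 0) x y →
        ∀ x', N.mem x' x → ∃ y', N.mem y' y ∧ Code N (w 0) x' y') :=
      Dfn.all (Dfn.all ((dfn_code _ _ _).imp (Dfn.all ((Dfn.mem _ _).imp
        (Dfn.ex ((Dfn.mem _ _).and (dfn_code _ _ _)))))))
    refine (el.dfn d ![t2]).2 ?_
    intro x y hxy x' hx'
    have hlt := (ZFSet.rank_lt_of_mem hx').trans_le ((cR x y).1 hxy)
    obtain ⟨y', hy', hle⟩ := ZFSet.lt_rank_iff.1 hlt
    exact ⟨⟨y', hK _ _ hy' y.2⟩, hy', (cR _ _).2 hle⟩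
  have fU : ∀ x : W.Carrier, ∃ y, Code W (j t0) y y ∧ Code W (j t2) x y := by
    have d : Dfn (n := 2) (fun N w => ∀ x, ∃ y, Code N (w 0) y y ∧ Code N (w 1) x y) :=
      Dfn.all (Dfn.ex ((dfn_code _ _ _).and (dfn_code _ _ _)))
    refine (el.dfn d ![t0, t2]).2 ?_
    intro x
    have hx : (x.1 : ZFSet).rank < M.rank := by rw [hheight]; exact x.2
    obtain ⟨y, hy, hle⟩ := ZFSet.lt_rank_iff.1 hx
    exact ⟨⟨y, MK hy⟩, (cM _ _).2 hy, (cR _ _).2 hle⟩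
  have fM : ∀ x : V.Carrier, Code W (j t0) (j x) (j x) ↔ Code V t0 x x := fun x =>
    el.dfn (dfn_code (n := 2) 0 1 1) ![t0, x]
  have fRank : ∀ x y : ZFSet, ∀ (hx : x ∈ N') (hy : y ∈ N'),
      Code W (j t2) ⟨x, hx⟩ ⟨y, hy⟩ → x.rank ≤ y.rank := by
    intro x
    induction x using ZFSet.inductionOn with
    | _ x ih =>
      intro y hx hy hc
      rw [ZFSet.rank_le_iff]
      intro x' hx'
      obtain ⟨y', hy', hc'⟩ := fR _ _ hc ⟨x', hN't.mem_trans hx' hx⟩ hx'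
      exact (ih x' hx' y'.1 _ y'.2 hc').trans_lt (ZFSet.rank_lt_of_mem hy')
  let N : ZFSet := ZFSet.sep (fun x => ∃ h : x ∈ N', Code W (j t0) ⟨x, h⟩ ⟨x, h⟩) N'
  let T : Set ZFSet := {x | ∃ h : x ∈ N', Code W (j t1) ⟨x, h⟩ ⟨x, h⟩}
  have mN : ∀ x : W.Carrier, Code W (j t0) x x ↔ (x.1 : ZFSet) ∈ N := by
    intro x
    rw [ZFSet.mem_sep]
    exact ⟨fun h => ⟨x.2, x.2, h⟩, fun h => h.2.2⟩
  have NN' : N.toSet ⊆ N'.toSet := fun x hx => (ZFSet.mem_sep.1 hx).1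
  have mT : ∀ x : W.Carrier, Code W (j t1) x x ↔ (x.1 : ZFSet) ∈ T :=
    fun x => ⟨fun h => ⟨x.2, h⟩, fun h => h.2⟩
  have hNt : N.IsTransitive := by
    rw [ZFSet.isTransitive_iff_mem_trans]
    intro y x hyx hx
    have hx' := NN' hx
    exact (mN ⟨y, hN't.mem_trans hyx hx'⟩).1 (fT ⟨x, hx'⟩ _ ((mN ⟨x, hx'⟩).2 hx) hyx)
  have hMN : M.toSet ⊆ N.toSet := by
    intro x hx
    have := (fM ⟨x, MK hx⟩).2 ((cM _ _).2 hx)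
    exact (mN _).1 this
  have hrank : N'.rank ≤ N.rank := by
    rw [ZFSet.rank_le_iff]
    intro x hx
    obtain ⟨y, hy, hxy⟩ := fU ⟨x, hx⟩
    exact (fRank x y.1 hx y.2 hxy).trans_lt (ZFSet.rank_lt_of_mem ((mN y).1 hy))
  have hrank' := hα.trans hrank
  refine ⟨N, T, hNt, ⟨hMN, ?_, ?_, ?_⟩, (le_max_left _ _).trans hrank'⟩
  · intro n φ v
    have e1 := relSat_iff (U := T') NN' (fun x => Code W (j t0) x x) (fun x => Code W (j t1) x x)
      mN (fun x _ => mT x) φ (Set.inclusion hMN ∘ v) default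
    have e2 := relSat_iff (U := S') (Y := S) MK (fun x => Code V t0 x x) (fun x => Code V t1 x x)
      (fun x => cM x x) (fun x _ => cS x x) φ v default
    have d := el.dfn (dfn_relSat φ (m := n + 2) 0 1 (fun i => i.succ.succ) default)
      (Fin.cons t0 (Fin.cons t1 (Set.inclusion MK ∘ v)) : Fin (n+2) → Vrank κ.ord)
    refine (Iff.trans ?_ (d.trans ?_))
    · refine e1.trans (Eq.to_iff ?_)
      congr 1
      exact Subsingleton.elim _ _
    · refine Iff.trans (Eq.to_iff ?_) e2.symm
      congr 1
      exact Subsingleton.elim _ _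
  · intro a b hb
    exact ⟨⟨b.1, hMtrans.mem_trans hb a.2⟩, rfl⟩
  · intro hsurj
    have hle : N.rank ≤ M.rank := by
      apply ZFSet.rank_mono
      intro x hx
      obtain ⟨y, hy⟩ := hsurj ⟨x, hx⟩
      have : y.1 = x := congrArg Subtype.val hy
      rw [← this]
      exact y.2
    rw [hheight] at hle
    exact absurd (Order.succ_le_iff.1 (((le_max_right _ _).trans hrank').trans hle)) (lt_irrefl _)
end

section
/- Let θ be a subtle cardinal. Then there exists κ < θ such that R(θ) ⊨ 'κ is unfoldable'; that is, there is an inaccessible κ < θ such that for every S ⊆ R(κ) and every γ < θ there is a well-founded model (M,∈,Ŝ) of rank < θ with (R(κ),∈,S) ≺_e (M,∈,Ŝ) and o(M) ≥ γ. -/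
open FirstOrder Cardinal

/-- `C` is club (closed and unbounded) in `θ`. -/
def IsClubIn (C : Set Ordinal.{0}) (θ : Ordinal.{0}) : Prop :=
  C ⊆ Set.Iio θ ∧ (∀ α < θ, ∃ β ∈ C, α ≤ β) ∧
    ∀ α, 0 < α → α < θ → (∀ β < α, ∃ γ ∈ C, β < γ ∧ γ < α) → α ∈ C

/-- `θ` is subtle: inaccessible, and for every sequence `(S_α)_{α<θ}` with
`S_α ⊆ α` and every club `C ⊆ θ` there are `β < γ` in `C` with `S_β = S_γ ∩ β`. -/
def IsSubtle (θ : Cardinal.{0}) : Prop :=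
  θ.IsInaccessible ∧
    ∀ S : Ordinal.{0} → Set Ordinal.{0}, (∀ α, S α ⊆ Set.Iio α) →
      ∀ C : Set Ordinal.{0}, IsClubIn C θ.ord →
        ∃ β ∈ C, ∃ γ ∈ C, β < γ ∧ S β = S γ ∩ Set.Iio β


/-- Codes: formulas with parameters, or triples of ordinals. -/
abbrev Codes : Type 1 :=
  (Σ n : ℕ, LSP.Formula (Fin n) × (Fin n → ZFSet.{0})) ⊕ (Ordinal.{0} × Ordinal.{0} × Ordinal.{0})

/-- Rank of a code. -/
noncomputable def codeRank : Codes → Ordinal.{0}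
  | Sum.inl ⟨_, _, v⟩ => Finset.univ.sup fun i => (v i).rank
  | Sum.inr (a, b, c) => max a (max b c)

lemma exists_bound (θ : Cardinal.{0}) (hθ : θ.IsRegular) {X : Type 1} (f : X → Ordinal.{0})
    (hX : #X < Cardinal.lift.{1} θ) (hf : ∀ x, f x < θ.ord) : ∃ b < θ.ord, ∀ x, f x < b := by
  refine ⟨⨆ i, f i + 1, Ordinal.lift_iSup_add_one_lt_of_lt_cof ?_ hf, fun x => ?_⟩
  · rw [← Ordinal.lift_cof, hθ.cof_ord]
    simpa using hX
  · have : Small.{0} X := by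
      rw [Cardinal.small_iff_lift_mk_lt_univ]
      simp only [Cardinal.lift_id]
      have := hX.trans (Cardinal.lift_lt_univ θ)
      simpa using this
    exact Ordinal.lt_iSup_add_one f x

lemma exists_coding (θ : Cardinal.{0}) (hθ : θ.IsRegular) {X : Type 1} (r : X → Ordinal.{0})
    (hX : ∀ β < θ.ord, #{x | r x ≤ β} < Cardinal.lift.{1} θ) :
    ∃ e : X → Ordinal.{0}, Set.InjOn e {x | r x < θ.ord} ∧
      ∀ β < θ.ord, ∃ b < θ.ord, ∀ x, r x ≤ β → e x < b := by
  have h1 : #{x | r x < θ.ord} ≤ #(Set.Iio θ.ord) := by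
    have : {x | r x < θ.ord} = ⋃ β : Set.Iio θ.ord, {x | r x ≤ β} := by
      ext x
      simp only [Set.mem_ofPred_eq, Set.mem_iUnion]
      exact ⟨fun h => ⟨⟨r x, h⟩, le_rfl⟩, fun ⟨b, hb⟩ => hb.trans_lt b.2⟩
    rw [this]
    refine (Cardinal.mk_iUnion_le _).trans ?_
    have h0 : #(Set.Iio θ.ord) = Cardinal.lift.{1} θ := by
      rw [Cardinal.mk_Iio_ordinal, Cardinal.card_ord]
    rw [h0]
    have hinf : ℵ₀ ≤ Cardinal.lift.{1} θ := by simpa using hθ.aleph0_le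
    refine (mul_le_mul_right (ciSup_le' (a := Cardinal.lift.{1} θ) ?_) _).trans
      (Cardinal.mul_eq_self hinf).le
    exact fun i => (hX i i.2).le
  obtain ⟨g⟩ := h1
  classical
  let e : X → Ordinal.{0} := fun x => if h : r x < θ.ord then (g ⟨x, h⟩).1 else 0
  refine ⟨e, ?_, ?_⟩
  · intro x hx y hy hxy
    simp only [Set.mem_ofPred_eq] at hx hy
    simp only [e, hx, hy, dif_pos] at hxy
    have := g.injective (Subtype.ext hxy)
    simpa using this
  · intro β hβ
    obtain ⟨b, hb, h⟩ := exists_bound θ hθ (fun x : {x | r x ≤ β} => e x) (hX β hβ) (by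
      rintro ⟨x, hx⟩
      have hx' : r x < θ.ord := lt_of_le_of_lt hx hβ
      simp only [e, hx', dif_pos]
      exact (g ⟨x, hx'⟩).2)
    exact ⟨b, hb, fun x hx => h ⟨x, hx⟩⟩

lemma isClub_closure (θ : Cardinal.{0}) (hθ : θ.IsInaccessible) (g : Ordinal.{0} → Ordinal.{0})
    (hg : ∀ β < θ.ord, g β < θ.ord) :
    IsClubIn {α | 0 < α ∧ α < θ.ord ∧ ∀ β < α, g β < α} θ.ord := by
  have hreg := hθ.isRegular
  have hlim : Order.IsSuccLimit θ.ord := Cardinal.isSuccLimit_ord hreg.aleph0_le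
  refine ⟨fun α h => h.2.1, ?_, ?_⟩
  · intro α hα
    have : ∀ a < θ.ord, ∃ b < θ.ord, ∀ x ≤ a, g x < b := by
      intro a ha
      obtain ⟨b, hb, h⟩ := exists_bound θ hreg (fun x : Set.Iio (a + 1) => g x)
        (by
          rw [Cardinal.mk_Iio_ordinal, Cardinal.lift_lt, ← Cardinal.lt_ord]
          exact hlim.add_one_lt ha)
        (fun x => hg _ (lt_of_lt_of_le x.2 (Order.add_one_le_of_lt ha)))
      exact ⟨b, hb, fun x hx => h ⟨x, Order.lt_add_one_iff.2 hx⟩⟩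
    choose! b hb hgb using this
    let f : Ordinal.{0} → Ordinal.{0} := fun a => max (a + 1) (b a)
    have hf : ∀ a < θ.ord, f a < θ.ord := fun a ha => max_lt (hlim.add_one_lt ha) (hb a ha)
    have hcof : ℵ₀ < θ.ord.cof := by rw [hreg.cof_ord]; exact hθ.1
    have hN : Ordinal.nfp f α < θ.ord := Ordinal.nfp_lt_ord hcof hf hα
    have hit : ∀ n, f^[n] α < θ.ord := fun n => (Ordinal.iterate_le_nfp f α n).trans_lt hN
    have hlt : ∀ n, f^[n] α < f^[n+1] α := fun n => by
      rw [Function.iterate_succ_apply']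
      exact (Order.lt_add_one_iff.2 le_rfl).trans_le (le_max_left _ _)
    refine ⟨Ordinal.nfp f α, ⟨?_, hN, ?_⟩, Ordinal.le_nfp f α⟩
    · exact (zero_le.trans_lt (hlt 0)).trans_le (Ordinal.iterate_le_nfp f α 1)
    · intro β hβ
      obtain ⟨n, hn⟩ := Ordinal.lt_nfp_iff.1 hβ
      have := hgb _ (hit n) β hn.le
      refine (this.trans_le (le_max_right (f^[n] α + 1) _)).trans_le ?_
      have h2 := Ordinal.iterate_le_nfp f α (n+1)
      rwa [Function.iterate_succ_apply'] at h2
  · intro α h0 hα h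
    refine ⟨h0, hα, fun β hβ => ?_⟩
    obtain ⟨c, hc, h1, h2⟩ := h β hβ
    exact (hc.2.2 β h1).trans h2

instance : Countable (Σ l, LSP.Relations l) := by
  have : ∀ l, Countable (LSP.Relations l) := fun l => by
    match l with
    | 0 => exact inferInstanceAs (Countable Empty)
    | 1 => exact inferInstanceAs (Countable Unit)
    | 2 => exact inferInstanceAs (Countable Unit)
    | (_ + 3) => exact inferInstanceAs (Countable Empty)
  infer_instance

instance : Countable (Σ l, LSP.Functions l) := by
  have : ∀ l, Countable (LSP.Functions l) := fun l => inferInstanceAs (Countable Empty)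
  infer_instance

lemma formula_card (n : ℕ) : #(LSP.Formula (Fin n)) ≤ ℵ₀ := by
  have h1 : #(LSP.Formula (Fin n)) ≤ #(Σ k, LSP.BoundedFormula (Fin n) k) :=
    Cardinal.mk_le_of_injective (f := fun φ => ⟨0, φ⟩) (fun a b h => by simpa using h)
  refine h1.trans (FirstOrder.Language.BoundedFormula.card_le.trans (max_le le_rfl ?_))
  rw [FirstOrder.Language.card]
  simp only [Cardinal.lift_id]
  refine Cardinal.add_le_aleph0.2 ⟨by simp, ?_⟩
  have : Countable LSP.Symbols := inferInstanceAs (Countable (_ ⊕ _))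
  exact Cardinal.mk_le_aleph0

lemma codes_card (θ : Cardinal.{0}) (hθ : θ.IsInaccessible) (β : Ordinal.{0}) (hβ : β < θ.ord) :
    #{x | codeRank x ≤ β} < Cardinal.lift.{1} θ := by
  have hinf : ℵ₀ < Cardinal.lift.{1} θ := by simpa using hθ.1
  have hlim : Order.IsSuccLimit θ.ord := Cardinal.isSuccLimit_ord hθ.isRegular.aleph0_le
  have hβ1 := hlim.add_one_lt hβ
  let A : Set ZFSet.{0} := {x | x.rank ≤ β}
  let B : Set Ordinal.{0} := Set.Iio (β + 1)
  have hA : #A < Cardinal.lift.{1} θ := by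
    have h1 : A = {x | x ∈ ZFSet.vonNeumann (β+1)} := by
      ext x
      change x.rank ≤ β ↔ x ∈ ZFSet.vonNeumann (β+1)
      rw [ZFSet.mem_vonNeumann, Order.lt_add_one_iff]
    have h2 := ZFSet.cardinalMk_coe_sort (x := ZFSet.vonNeumann (β+1))
    have h3 : #A = Cardinal.lift.{1} (ZFSet.card (ZFSet.vonNeumann (β+1))) := by
      rw [h1]; exact h2
    rw [h3, Cardinal.lift_lt, ZFSet.card_vonNeumann, ← hθ.preBeth_ord]
    exact Cardinal.preBeth_lt_preBeth.2 hβ1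
  have hB : #B < Cardinal.lift.{1} θ := by
    rw [Cardinal.mk_Iio_ordinal, Cardinal.lift_lt, ← Cardinal.lt_ord]
    exact hβ1
  let Y := (Σ n : ℕ, LSP.Formula (Fin n) × (Fin n → A)) ⊕ (B × B × B)
  have hY : #Y < Cardinal.lift.{1} θ := by
    simp only [Y, Cardinal.mk_sum, Cardinal.lift_id, Cardinal.mk_prod, Cardinal.mk_sigma]
    refine Cardinal.add_lt_of_lt hinf.le ?_ ?_
    · refine Cardinal.sum_lt_lift_of_isRegular hθ.isRegular.lift (by simpa using hθ.1) ?_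
      intro n
      refine Cardinal.mul_lt_of_lt hinf.le ?_ ?_
      · refine lt_of_le_of_lt ?_ hinf
        simp [formula_card n]
      · have : #(Fin n → A) = #A ^ n := by simp
        rw [this, Cardinal.lift_uzero]
        exact Cardinal.power_nat_le_max.trans_lt (max_lt hA hinf)
    · exact Cardinal.mul_lt_of_lt hinf.le hB (Cardinal.mul_lt_of_lt hinf.le hB hB)
  refine lt_of_le_of_lt (Cardinal.mk_le_of_surjective (α := {y : Y // True})
    (f := fun y => ⟨Sum.map (fun z => ⟨z.1, z.2.1, fun i => (z.2.2 i).1⟩)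
      (fun z => (z.1.1, z.2.1.1, z.2.2.1)) y.1, ?_⟩) ?_) (lt_of_eq_of_lt ?_ hY)
  · rcases y with ⟨⟨n, φ, v⟩ | ⟨a, b, c⟩, -⟩
    · simp only [codeRank, Sum.map_inl, Set.mem_ofPred_eq, Finset.sup_le_iff]
      exact fun i _ => (v i).2
    · simp only [codeRank, Sum.map_inr, Set.mem_ofPred_eq]
      exact max_le (Order.lt_add_one_iff.1 a.2)
        (max_le (Order.lt_add_one_iff.1 b.2) (Order.lt_add_one_iff.1 c.2))
  · rintro ⟨⟨n, φ, v⟩ | ⟨a, b, c⟩, hx⟩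
    · simp only [codeRank, Set.mem_ofPred_eq, Finset.sup_le_iff] at hx
      exact ⟨⟨Sum.inl ⟨n, φ, fun i => ⟨v i, hx i (Finset.mem_univ i)⟩⟩, trivial⟩, rfl⟩
    · simp only [codeRank, Set.mem_ofPred_eq, max_le_iff] at hx
      exact ⟨⟨Sum.inr (⟨a, Order.lt_add_one_iff.2 hx.1⟩, ⟨b, Order.lt_add_one_iff.2 hx.2.1⟩,
        ⟨c, Order.lt_add_one_iff.2 hx.2.2⟩), trivial⟩, rfl⟩
  · exact Cardinal.mk_congr (Equiv.subtypeUnivEquiv (fun _ => trivial))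

/-- The elementary diagram of `(V_α, ∈, S)`. -/
def diag (α : Ordinal.{0}) (S : Set ZFSet.{0}) : Set Codes :=
  {x | ∃ (n : ℕ) (φ : LSP.Formula (Fin n)) (v : Fin n → (ZModel (Vrank α) S).Carrier),
    (ZModel (Vrank α) S).Realize φ v ∧ x = Sum.inl ⟨n, φ, fun i => (v i).1⟩}

lemma mem_diag (α : Ordinal.{0}) (S : Set ZFSet.{0}) (n : ℕ) (φ : LSP.Formula (Fin n))
    (v : Fin n → (ZModel (Vrank α) S).Carrier) :
    (Sum.inl ⟨n, φ, fun i => (v i).1⟩ : Codes) ∈ diag α S ↔ (ZModel (Vrank α) S).Realize φ v := by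
  constructor
  · rintro ⟨m, ψ, w, h, he⟩
    have he := Sum.inl.inj he
    obtain ⟨rfl, he⟩ := Sigma.mk.inj_iff.1 he
    have he := eq_of_heq he
    obtain ⟨rfl, he2⟩ := Prod.mk_inj.1 he
    have : v = w := by
      funext i
      have h3 := congrFun he2 i
      exact Subtype.ext h3
    rwa [this]
  · intro h
    exact ⟨n, φ, v, h, rfl⟩

lemma zeee_of_diag {β γ : Ordinal.{0}} (hβγ : β < γ) (S T : Set ZFSet.{0})
    (h : ∀ x, codeRank x < β → (x ∈ diag β S ↔ x ∈ diag γ T)) (hβ : 0 < β) :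
    ZEEE (Vrank β) S (Vrank γ) T := by
  have hsub : Vrank β ⊆ Vrank γ := fun x hx => lt_trans hx hβγ
  refine ⟨hsub, ?_, ?_, ?_⟩
  · intro n φ v
    rw [← mem_diag, ← mem_diag]
    refine (h _ ?_).symm
    simp only [codeRank]
    exact (Finset.sup_lt_iff hβ).2 fun i _ => (v i).2
  · rintro a b hab
    exact ⟨⟨b.1, lt_trans (ZFSet.rank_lt_of_mem hab) a.2⟩, rfl⟩
  · intro hs
    obtain ⟨y, hy⟩ := hs ⟨ZFSet.vonNeumann β, by
      change (ZFSet.vonNeumann β).rank < γ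
      rwa [ZFSet.rank_vonNeumann]⟩
    have h1 : y.1 = ZFSet.vonNeumann β := congrArg Subtype.val hy
    have h2 : y.1.rank < β := y.2
    rw [h1, ZFSet.rank_vonNeumann] at h2
    exact h2.false

theorem subtle_implies_unfoldable_in_Rtheta
    (θ : Cardinal.{0}) (hθ : IsSubtle θ) :
    ∃ κ : Cardinal.{0}, κ < θ ∧ κ.IsInaccessible ∧
      ∀ S : Set ZFSet, S ⊆ Vrank κ.ord → ∀ γ : Ordinal.{0}, γ < θ.ord →
        ∃ (N : ZFSet) (T : Set ZFSet), N.IsTransitive ∧ N.rank < θ.ord ∧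
          ZEEE (Vrank κ.ord) S N.toSet T ∧ γ ≤ N.rank := by
  classical
  by_contra hcon
  obtain ⟨hin, hsub⟩ := hθ
  have hreg := hin.isRegular
  have hlim : Order.IsSuccLimit θ.ord := Cardinal.isSuccLimit_ord hreg.aleph0_le
  have hpos : 0 < θ.ord := hreg.ord_pos
  -- choose counterexamples
  have H : ∀ κ : Cardinal.{0}, ∃ (S : Set ZFSet) (γ : Ordinal.{0}), γ < θ.ord ∧
      (κ < θ → κ.IsInaccessible → ¬ ∃ (N : ZFSet) (T : Set ZFSet), N.IsTransitive ∧
        N.rank < θ.ord ∧ ZEEE (Vrank κ.ord) S N.toSet T ∧ γ ≤ N.rank) := by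
    intro κ
    by_cases hκ : κ < θ ∧ κ.IsInaccessible
    · by_contra hno
      refine hcon ⟨κ, hκ.1, hκ.2, fun S _ γ hγ => ?_⟩
      by_contra hn
      refine hno ?_
      exact ⟨S, γ, hγ, fun _ _ => hn⟩
    · exact ⟨∅, 0, hpos, fun h1 h2 => absurd ⟨h1, h2⟩ hκ⟩
  choose S Γ hΓ hbad using H
  obtain ⟨e, he, hb⟩ := exists_coding θ hreg codeRank (codes_card θ hin)
  choose! b hb hbe using hb
  have hF := fun α : Ordinal.{0} => Ordinal.exists_isFundamentalSeq (o := α) rfl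
  choose F hF using hF
  let A : Ordinal.{0} → Set Codes := fun α =>
    if α.cof.ord < α then
      {x | ∃ i : Set.Iio α.cof.ord, x = Sum.inr (i.1, (F α i).1, α.cof.ord)}
    else diag α (S α.cof)
  let g : Ordinal.{0} → Ordinal.{0} := fun β =>
    max (b β) (max ((2 ^ β.card : Cardinal.{0}).ord) (max (Γ β.card) Ordinal.omega0))
  have hg : ∀ β < θ.ord, g β < θ.ord := by
    intro β hβ
    refine max_lt (hb β hβ) (max_lt ?_ (max_lt (hΓ _) ?_))
    · exact Cardinal.ord_lt_ord.2 (hin.isStrongPrelimit (Cardinal.lt_ord.1 hβ))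
    · rw [← Cardinal.ord_aleph0]
      exact Cardinal.ord_lt_ord.2 hin.1
  let C : Set Ordinal.{0} := {α | 0 < α ∧ α < θ.ord ∧ ∀ β < α, g β < α}
  have hC : IsClubIn C θ.ord := isClub_closure θ hin g hg
  -- ranks of the coded sets
  have hAr : ∀ α ∈ C, ∀ x ∈ A α, codeRank x < α := by
    intro α hα x hx
    by_cases hs : α.cof.ord < α
    · simp only [A, if_pos hs] at hx
      obtain ⟨i, rfl⟩ := hx
      exact max_lt (lt_trans i.2 hs) (max_lt (F α i).2 hs)
    · simp only [A, if_neg hs] at hx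
      obtain ⟨n, φ, v, -, rfl⟩ := hx
      simp only [codeRank]
      exact (Finset.sup_lt_iff hα.1).2 fun i _ => (v i).2
  have heC : ∀ α ∈ C, ∀ x, codeRank x < α → e x < α := by
    intro α hα x hx
    have h1 := hα.2.2 _ hx
    exact (hbe _ (hx.trans hα.2.1) x le_rfl).trans ((le_max_left _ _).trans_lt h1)
  obtain ⟨β, hβ, γ, hγ, hlt, hS⟩ := hsub (fun α => e '' A α ∩ Set.Iio α)
    (fun α => Set.inter_subset_right) C hC
  have hA : ∀ x, codeRank x < β → (x ∈ A β ↔ x ∈ A γ) := by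
    intro x hx
    have hxβ := heC β hβ x hx
    have key : ∀ α ∈ C, β ≤ α → (x ∈ A α ↔ e x ∈ e '' A α ∩ Set.Iio α) := by
      intro α hα hle
      constructor
      · exact fun h => ⟨⟨x, h, rfl⟩, lt_of_lt_of_le hxβ hle⟩
      · rintro ⟨⟨y, hy, hyx⟩, -⟩
        have := he ((hAr α hα y hy).trans hα.2.1) (hx.trans hβ.2.1) hyx
        rwa [← this]
    have hS' := Set.ext_iff.1 hS (e x)
    rw [key β hβ le_rfl, key γ hγ hlt.le, hS']
    exact ⟨fun h => h.1, fun h => ⟨h, hxβ⟩⟩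
  have hone : ∀ α ∈ C, (1 : Ordinal.{0}) < α := fun α hα => by
    have h1 := hα.2.2 0 hα.1
    refine lt_trans Ordinal.one_lt_omega0 (lt_of_le_of_lt ?_ h1)
    exact (le_max_right _ _).trans ((le_max_right _ _).trans (le_max_right _ _))
  by_cases hs : β.cof.ord < β
  · -- singular case
    have hmem : ∀ i : Set.Iio β.cof.ord, (Sum.inr (i.1, (F β i).1, β.cof.ord) : Codes) ∈ A γ := by
      intro i
      have h0 : (Sum.inr (i.1, (F β i).1, β.cof.ord) : Codes) ∈ A β := by
        simp only [A, if_pos hs]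
        exact ⟨i, rfl⟩
      exact (hA _ (hAr β hβ _ h0)).1 h0
    by_cases hs' : γ.cof.ord < γ
    · simp only [A, if_pos hs'] at hmem
      obtain ⟨_, ⟨j, rfl⟩, hj⟩ := (hF γ).isCofinal_range ⟨β, hlt⟩
      have hcofeq : β.cof.ord = γ.cof.ord := by
        have hne : 0 < β.cof.ord := by
          obtain ⟨_, ⟨j, rfl⟩, hj⟩ := (hF β).isCofinal_range ⟨0, hβ.1⟩
          exact lt_of_le_of_lt zero_le j.2
        obtain ⟨i, hi⟩ := hmem ⟨0, hne⟩
        have hi := Sum.inr.inj hi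
        simp only [Prod.mk.injEq] at hi
        exact hi.2.2
      have hjβ : j.1 < β.cof.ord := lt_of_lt_of_eq j.2 hcofeq.symm
      obtain ⟨i, hi⟩ := hmem ⟨j.1, hjβ⟩
      have hi := Sum.inr.inj hi
      simp only [Prod.mk.injEq] at hi
      have hij : i = j := Subtype.ext hi.1.symm
      rw [hij] at hi
      have h1 : β ≤ (F γ j).1 := hj
      rw [← hi.2.1] at h1
      exact absurd (F β ⟨j.1, hjβ⟩).2 (not_lt.2 h1)
    · have hne : 0 < β.cof.ord := by
        obtain ⟨_, ⟨j, rfl⟩, hj⟩ := (hF β).isCofinal_range ⟨0, hβ.1⟩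
        exact lt_of_le_of_lt zero_le j.2
      have := hmem ⟨0, hne⟩
      simp only [A, if_neg hs'] at this
      obtain ⟨_, _, _, _, h⟩ := this
      cases h
  · have htop : (Sum.inl ⟨0, ⊤, Fin.elim0⟩ : Codes) ∈ A β := by
      simp only [A, if_neg hs]
      refine ⟨0, ⊤, Fin.elim0, ?_, ?_⟩
      · simp [SetModel.Realize]
      · congr
        funext i
        exact i.elim0
    have htop' := (hA _ (hAr β hβ _ htop)).1 htop
    by_cases hs' : γ.cof.ord < γ
    · simp only [A, if_pos hs'] at htop'
      obtain ⟨_, h⟩ := htop'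
      cases h
    simp only [A, if_neg hs, if_neg hs'] at hA
    have hord : β.cof.ord = β := le_antisymm (Ordinal.ord_cof_le β) (not_lt.1 hs)
    set κ := β.cof with hκ
    have hcard : β.card = κ := by rw [← hord, Cardinal.card_ord]
    have hκθ : κ < θ := by rw [← hcard]; exact Cardinal.lt_ord.1 hβ.2.1
    have hinκ : κ.IsInaccessible := by
      refine ⟨?_, ?_, ?_⟩
      · rw [← Cardinal.ord_lt_ord, hord, Cardinal.ord_aleph0]
        refine lt_of_le_of_lt ?_ (hβ.2.2 0 hβ.1)
        exact (le_max_right _ _).trans ((le_max_right _ _).trans (le_max_right _ _))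
      · rw [hord]
      · intro c hc
        rw [← Cardinal.ord_lt_ord, hord]
        have h1 : c.ord < β := by rwa [← hord, Cardinal.ord_lt_ord]
        refine lt_of_le_of_lt ?_ (hβ.2.2 _ h1)
        have : ((2 ^ c : Cardinal.{0})).ord = ((2 ^ c.ord.card : Cardinal.{0})).ord := by
          rw [Cardinal.card_ord]
        rw [this]
        exact (le_max_left _ _).trans (le_max_right _ _)
    apply hbad κ hκθ hinκ
    refine ⟨ZFSet.vonNeumann γ, S γ.cof, ZFSet.isTransitive_vonNeumann γ, ?_, ?_, ?_⟩
    · rw [ZFSet.rank_vonNeumann]; exact hγ.2.1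
    · have hV : (ZFSet.vonNeumann γ).toSet = Vrank γ := by
        ext x
        exact ZFSet.mem_vonNeumann
      rw [hV, hord]
      exact zeee_of_diag hlt _ _ hA hβ.1
    · rw [ZFSet.rank_vonNeumann]
      have := hγ.2.2 β hlt
      refine (lt_of_le_of_lt ?_ this).le
      rw [← hcard]
      exact (le_max_left _ _).trans ((le_max_right _ _).trans (le_max_right _ _))
end
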